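/- arXiv:1902.03805 — 6 statements merged into one kernel-verified Lean document; each statement's English description precedes it below -/
import Mathlib

section
/- Let K be a compact metric space and k ≥ 1. Let μ_n and μ be centered Gaussian Borel probability measures on C(K,ℝ^k). If μ_n converges narrowly to μ, then the covariance functions K_{μ_n} converge to K_μ uniformly on K × K. -/
open MeasureTheory ProbabilityTheory Filter Topology

/-- A law `ν` on a finite-dimensional space `ι → ℝ` is a centered Gaussian measure if every
linear functional pushes it forward to a centered one-dimensional Gaussian distribution. -/
def IsCenteredGaussianLaw {ι : Type} [Fintype ι] (ν : Measure (ι → ℝ)) : Prop :=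
  ∀ c : ι → ℝ, ∃ v : NNReal, ν.map (fun x => ∑ i, c i * x i) = gaussianReal 0 v

/-- A Borel probability measure `μ` on `C(K, ℝ^k)` is a centered Gaussian measure if for all
finitely many points of `K` the pushforward of `μ` under the evaluation map is a centered
Gaussian measure on `ℝ^{jk}`. -/
def IsCenteredGaussianMeasure {K : Type} [MetricSpace K] [CompactSpace K] {k : ℕ}
    [MeasurableSpace C(K, Fin k → ℝ)] (μ : Measure C(K, Fin k → ℝ)) : Prop :=
  ∀ (j : ℕ) (p : Fin j → K),
    IsCenteredGaussianLaw (μ.map (fun f => fun q : Fin j × Fin k => f (p q.1) q.2))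

/-- Narrow convergence implies continuous convergence of integrals of a bounded,
equi-Lipschitz family depending continuously on a parameter. -/
lemma tendsto_integral_family {E X : Type} [PseudoMetricSpace E] [MeasurableSpace E]
    [BorelSpace E] [PseudoMetricSpace X]
    (μ : ℕ → Measure E) (ν : Measure E)
    (hμP : ∀ n, IsProbabilityMeasure (μ n)) (hνP : IsProbabilityMeasure ν)
    (hnarrow : ∀ φ : BoundedContinuousFunction E ℝ,
      Tendsto (fun n => ∫ f, φ f ∂(μ n)) atTop (𝓝 (∫ f, φ f ∂ν)))
    (h : X → E → ℝ) (hb : ∀ y f, |h y f| ≤ 1)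
    (hL : ∀ y f g, |h y f - h y g| ≤ 2 * dist f g)
    (hc : ∀ f, Continuous (fun y => h y f)) (x : X) :
    Tendsto (fun z : ℕ × X => ∫ f, h z.2 f ∂(μ z.1)) (atTop ×ˢ 𝓝 x)
      (𝓝 (∫ f, h x f ∂ν)) := by
  have hcont : ∀ y, Continuous (h y) := fun y =>
    (LipschitzWith.of_dist_le_mul (K := 2) (fun f g => by
      rw [Real.dist_eq]; exact hL y f g)).continuous
  have hint : ∀ (ρ : Measure E) [IsProbabilityMeasure ρ] (y : X), Integrable (h y) ρ := by
    intro ρ _ y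
    exact Integrable.of_bound (hcont y).measurable.aestronglyMeasurable 1
      (Eventually.of_forall (fun f => hb y f))
  let G : ℕ → E → ℝ := fun m f =>
    ⨆ y : Metric.ball x (1 / ((m : ℝ) + 1)), |h y f - h x f|
  have hpos : ∀ m : ℕ, (0 : ℝ) < 1 / ((m : ℝ) + 1) := fun m => by positivity
  have hne : ∀ m : ℕ, Nonempty (Metric.ball x (1 / ((m : ℝ) + 1))) := fun m =>
    ⟨⟨x, Metric.mem_ball_self (hpos m)⟩⟩
  have hd2 : ∀ y f, |h y f - h x f| ≤ 2 := fun y f => by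
    have h1 := abs_le.1 (hb y f)
    have h2 := abs_le.1 (hb x f)
    exact abs_le.2 ⟨by linarith, by linarith⟩
  have hbdd : ∀ (m : ℕ) f, BddAbove (Set.range
      (fun y : Metric.ball x (1 / ((m : ℝ) + 1)) => |h y f - h x f|)) := by
    intro m f
    refine ⟨2, ?_⟩
    rintro _ ⟨y, rfl⟩
    exact hd2 y f
  have hGle : ∀ (m : ℕ) (y : X) f, y ∈ Metric.ball x (1 / ((m : ℝ) + 1)) →
      |h y f - h x f| ≤ G m f := fun m y f hy => le_ciSup (hbdd m f) ⟨y, hy⟩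
  have hG0 : ∀ m f, 0 ≤ G m f := fun m f => Real.iSup_nonneg (fun _ => abs_nonneg _)
  have hG2 : ∀ m f, G m f ≤ 2 := fun m f => by
    have := hne m
    exact ciSup_le (fun y => hd2 y f)
  have hGl : ∀ m f g, G m f ≤ G m g + 4 * dist f g := by
    intro m f g
    have := hne m
    refine ciSup_le (fun y => ?_)
    have h1 := hGle m y g y.2
    have h2 := hL y f g
    have h3 := hL x f g
    have : |h y f - h x f| ≤ |h y g - h x g| + |h y f - h y g| + |h x f - h x g| := by
      have e : h y f - h x f = (h y g - h x g) + (h y f - h y g) + -(h x f - h x g) := by ring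
      rw [e]
      refine (abs_add_le _ _).trans ?_
      rw [abs_neg]
      gcongr
      exact abs_add_le _ _
    linarith
  have hGcont : ∀ m, Continuous (G m) := fun m =>
    (LipschitzWith.of_le_add_mul (K := 4) (by
      intro f g
      exact hGl m f g)).continuous
  have hGabs : ∀ m f, ‖G m f‖ ≤ 2 := fun m f => by
    rw [Real.norm_eq_abs, abs_of_nonneg (hG0 m f)]; exact hG2 m f
  have hGint : ∀ (ρ : Measure E) [IsProbabilityMeasure ρ] (m : ℕ), Integrable (G m) ρ := by
    intro ρ _ m
    exact Integrable.of_bound (hGcont m).measurable.aestronglyMeasurable 2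
      (Eventually.of_forall (fun f => hGabs m f))
  have hGlim : ∀ f, Tendsto (fun m => G m f) atTop (𝓝 0) := by
    intro f
    rw [Metric.tendsto_atTop]
    intro ε hε
    obtain ⟨δ, hδ, hδ'⟩ := Metric.continuousAt_iff.1 ((hc f).continuousAt (x := x)) (ε / 2)
      (by positivity)
    obtain ⟨N, hN⟩ := exists_nat_one_div_lt hδ
    refine ⟨N, fun m hm => ?_⟩
    rw [Real.dist_eq, sub_zero, abs_of_nonneg (hG0 m f)]
    have := hne m
    have : G m f ≤ ε / 2 := by
      refine ciSup_le (fun y => ?_)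
      have hy : dist (y : X) x < 1 / ((m : ℝ) + 1) := y.2
      have hmN : 1 / ((m : ℝ) + 1) ≤ 1 / ((N : ℝ) + 1) := by
        gcongr
      exact (hδ' (hy.trans (hmN.trans_lt hN))).le
    linarith
  have hGI : Tendsto (fun m => ∫ f, G m f ∂ν) atTop (𝓝 0) := by
    have := tendsto_integral_of_dominated_convergence (μ := ν) (F := G) (f := fun _ => 0)
      (fun _ => 2) (fun m => (hGcont m).measurable.aestronglyMeasurable)
      (integrable_const _) (fun m => Eventually.of_forall (hGabs m))
      (Eventually.of_forall hGlim)
    simpa using this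
  rw [Metric.tendsto_nhds]
  intro ε hε
  obtain ⟨m, hm⟩ := ((hGI.eventually (gt_mem_nhds (half_pos hε)))).exists
  have e1 : ∀ᶠ n in atTop, ∫ f, G m f ∂(μ n) < ε / 2 :=
    (hnarrow (BoundedContinuousFunction.ofNormedAddCommGroup (G m) (hGcont m) 2 (hGabs m))).eventually
      (gt_mem_nhds hm)
  have e2 : ∀ᶠ n in atTop, dist (∫ f, h x f ∂(μ n)) (∫ f, h x f ∂ν) < ε / 2 :=
    (hnarrow (BoundedContinuousFunction.ofNormedAddCommGroup (h x) (hcont x) 1 (hb x))).eventually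
      (Metric.ball_mem_nhds _ (half_pos hε))
  filter_upwards [(e1.and e2).prod_mk (Metric.ball_mem_nhds x (hpos m))]
  rintro ⟨n, y⟩ ⟨⟨h1, h2⟩, hy⟩
  have h3 : dist (∫ f, h y f ∂(μ n)) (∫ f, h x f ∂(μ n)) ≤ ∫ f, G m f ∂(μ n) := by
    have := hμP n
    rw [Real.dist_eq, ← integral_sub (hint _ _) (hint _ _)]
    refine (abs_integral_le_integral_abs).trans ?_
    exact integral_mono ((hint _ _).sub (hint _ _)).abs (hGint _ _)
      (fun f => hGle m y f hy)
  refine (dist_triangle _ (∫ f, h x f ∂(μ n)) _).trans_lt ?_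
  dsimp only at *
  linarith

/-- The functional `f ↦ f p i + s * f q j`. -/
def lincomb {K : Type} [MetricSpace K] [CompactSpace K] {k : ℕ} (i j : Fin k) (s : ℝ)
    (pq : K × K) (f : C(K, Fin k → ℝ)) : ℝ := f pq.1 i + s * f pq.2 j

lemma continuous_lincomb {K : Type} [MetricSpace K] [CompactSpace K] {k : ℕ} (i j : Fin k)
    (s : ℝ) (pq : K × K) : Continuous (lincomb i j s pq) := by
  unfold lincomb
  have h : ∀ (p : K) (i : Fin k), Continuous (fun f : C(K, Fin k → ℝ) => f p i) := fun p i =>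
    (continuous_apply i).comp (continuous_eval_const p)
  exact (h _ _).add (continuous_const.mul (h _ _))

lemma map_lincomb {K : Type} [MetricSpace K] [CompactSpace K] {k : ℕ}
    [MeasurableSpace C(K, Fin k → ℝ)] [BorelSpace C(K, Fin k → ℝ)]
    (μ : Measure C(K, Fin k → ℝ)) (hG : IsCenteredGaussianMeasure μ)
    (i j : Fin k) (s : ℝ) (pq : K × K) :
    ∃ v : NNReal, μ.map (lincomb i j s pq) = gaussianReal 0 v := by
  obtain ⟨v, hv⟩ := hG 2 ![pq.1, pq.2]
    (fun r => (if r = (0, i) then 1 else 0) + s * (if r = (1, j) then 1 else 0))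
  refine ⟨v, ?_⟩
  rw [← hv, Measure.map_map]
  · congr 1
    ext f
    simp [lincomb, add_mul, Finset.sum_add_distrib]
  · fun_prop
  · refine measurable_pi_iff.2 (fun r => Continuous.measurable ?_)
    exact (continuous_apply r.2).comp (continuous_eval_const _)

lemma lincomb_facts {K : Type} [MetricSpace K] [CompactSpace K] {k : ℕ}
    [MeasurableSpace C(K, Fin k → ℝ)] [BorelSpace C(K, Fin k → ℝ)]
    (μ : Measure C(K, Fin k → ℝ)) (hG : IsCenteredGaussianMeasure μ)
    (i j : Fin k) (s : ℝ) (pq : K × K) :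
    Integrable (fun f => lincomb i j s pq f ^ 2) μ ∧
    0 < ∫ f, Real.cos (lincomb i j s pq f) ∂μ ∧
    ∫ f, lincomb i j s pq f ^ 2 ∂μ =
      -2 * Real.log (∫ f, Real.cos (lincomb i j s pq f) ∂μ) := by
  obtain ⟨v, hv⟩ := map_lincomb μ hG i j s pq
  have hm : Measurable (lincomb (K := K) i j s pq) := (continuous_lincomb i j s pq).measurable
  have hmem : MemLp (fun x : ℝ => x) 2 (gaussianReal 0 v) := memLp_id_gaussianReal 2
  have h1 : Integrable (fun x : ℝ => x ^ 2) (gaussianReal 0 v) := hmem.integrable_sq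
  have h2 : ∫ x, x ^ 2 ∂(gaussianReal 0 v) = v := by
    have := variance_fun_id_gaussianReal (μ := 0) (v := v)
    rw [variance_of_integral_eq_zero (by fun_prop) (by simp)] at this
    simpa using this
  have h3 : ∫ x, Real.cos x ∂(gaussianReal 0 v) = Real.exp (-v / 2) := by
    have := charFun_gaussianReal (μ := 0) (v := v) 1
    rw [charFun_apply_real] at this
    have hre := congrArg Complex.re this
    have hi : Integrable (fun x : ℝ => Complex.exp (((1 : ℝ) : ℂ) * x * Complex.I))
        (gaussianReal 0 v) := by
      refine Integrable.of_bound (by fun_prop) 1 (Eventually.of_forall fun x => ?_)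
      simp
    have e := integral_re (𝕜 := ℂ) hi
    simp only [RCLike.re_to_complex] at e
    rw [← e] at hre
    have e2 : Complex.exp (((1 : ℝ) : ℂ) * ((0 : ℝ) : ℂ) * Complex.I - (v : ℂ) * ((1 : ℝ) : ℂ) ^ 2 / 2)
        = ((Real.exp (-v / 2) : ℝ) : ℂ) := by
      push_cast
      congr 1
      ring
    rw [e2, Complex.ofReal_re] at hre
    rw [← hre]
    refine integral_congr_ae (Eventually.of_forall fun x => ?_)
    simp [Complex.exp_ofReal_mul_I_re]
  have h3' : ∫ f, Real.cos (lincomb i j s pq f) ∂μ = Real.exp (-v / 2) := by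
    rw [← h3, ← hv, integral_map hm.aemeasurable (by fun_prop)]
  have h2' : ∫ f, lincomb i j s pq f ^ 2 ∂μ = v := by
    rw [← h2, ← hv, integral_map hm.aemeasurable (by fun_prop)]
  refine ⟨?_, ?_, ?_⟩
  · rw [← hv] at h1
    exact h1.comp_measurable hm
  · rw [h3']; exact Real.exp_pos _
  · rw [h3', h2', Real.log_exp]; ring

lemma cov_eq {K : Type} [MetricSpace K] [CompactSpace K] {k : ℕ}
    [MeasurableSpace C(K, Fin k → ℝ)] [BorelSpace C(K, Fin k → ℝ)]
    (μ : Measure C(K, Fin k → ℝ)) (hG : IsCenteredGaussianMeasure μ)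
    (i j : Fin k) (pq : K × K) :
    ∫ f, f pq.1 i * f pq.2 j ∂μ =
      (-2 * Real.log (∫ f, Real.cos (lincomb i j 1 pq f) ∂μ)
        - -2 * Real.log (∫ f, Real.cos (lincomb i j (-1) pq f) ∂μ)) / 4 := by
  obtain ⟨a1, -, a3⟩ := lincomb_facts μ hG i j 1 pq
  obtain ⟨b1, -, b3⟩ := lincomb_facts μ hG i j (-1) pq
  rw [← a3, ← b3, ← integral_sub a1 b1, ← integral_div]
  refine integral_congr_ae (Eventually.of_forall fun f => ?_)
  simp only [lincomb]
  ring

lemma tendsto_cos {K : Type} [MetricSpace K] [CompactSpace K] {k : ℕ}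
    [MeasurableSpace C(K, Fin k → ℝ)] [BorelSpace C(K, Fin k → ℝ)]
    (μ : ℕ → Measure C(K, Fin k → ℝ)) (ν : Measure C(K, Fin k → ℝ))
    (hμP : ∀ n, IsProbabilityMeasure (μ n)) (hνP : IsProbabilityMeasure ν)
    (hnarrow : ∀ φ : BoundedContinuousFunction C(K, Fin k → ℝ) ℝ,
      Tendsto (fun n => ∫ f, φ f ∂(μ n)) atTop (𝓝 (∫ f, φ f ∂ν)))
    (i j : Fin k) (s : ℝ) (hs : |s| = 1) (x : K × K) :
    Tendsto (fun z : ℕ × (K × K) => ∫ f, Real.cos (lincomb i j s z.2 f) ∂(μ z.1))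
      (atTop ×ˢ 𝓝 x) (𝓝 (∫ f, Real.cos (lincomb i j s x f) ∂ν)) := by
  refine tendsto_integral_family μ ν hμP hνP hnarrow
    (fun y f => Real.cos (lincomb i j s y f)) (fun y f => Real.abs_cos_le_one _) ?_ ?_ x
  · intro y f g
    have hcos : |Real.cos (lincomb i j s y f) - Real.cos (lincomb i j s y g)|
        ≤ |lincomb i j s y f - lincomb i j s y g| := by
      have := Real.lipschitzWith_cos.dist_le_mul (lincomb i j s y f) (lincomb i j s y g)
      simpa [Real.dist_eq] using this
    refine hcos.trans ?_
    have hd : ∀ (p : K) (i : Fin k), |f p i - g p i| ≤ dist f g := fun p i => by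
      rw [← Real.dist_eq]
      exact (dist_le_pi_dist (f p) (g p) i).trans (ContinuousMap.dist_apply_le_dist p)
    have e : lincomb i j s y f - lincomb i j s y g
        = (f y.1 i - g y.1 i) + s * (f y.2 j - g y.2 j) := by
      simp only [lincomb]; ring
    rw [e]
    refine (abs_add_le _ _).trans ?_
    rw [abs_mul, hs, one_mul]
    linarith [hd y.1 i, hd y.2 j]
  · intro f
    unfold lincomb
    fun_prop

lemma tendsto_cov {K : Type} [MetricSpace K] [CompactSpace K] {k : ℕ}
    [MeasurableSpace C(K, Fin k → ℝ)] [BorelSpace C(K, Fin k → ℝ)]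
    (μ : ℕ → Measure C(K, Fin k → ℝ)) (ν : Measure C(K, Fin k → ℝ))
    (hμP : ∀ n, IsProbabilityMeasure (μ n)) (hνP : IsProbabilityMeasure ν)
    (hμG : ∀ n, IsCenteredGaussianMeasure (μ n)) (hνG : IsCenteredGaussianMeasure ν)
    (hnarrow : ∀ φ : BoundedContinuousFunction C(K, Fin k → ℝ) ℝ,
      Tendsto (fun n => ∫ f, φ f ∂(μ n)) atTop (𝓝 (∫ f, φ f ∂ν)))
    (i j : Fin k) (x : K × K) :
    Tendsto (fun z : ℕ × (K × K) => ∫ f, f z.2.1 i * f z.2.2 j ∂(μ z.1))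
      (atTop ×ˢ 𝓝 x) (𝓝 (∫ f, f x.1 i * f x.2 j ∂ν)) := by
  rw [cov_eq ν hνG i j x]
  simp_rw [fun z : ℕ × (K × K) => cov_eq (μ z.1) (hμG z.1) i j z.2]
  have h1 := (tendsto_cos μ ν hμP hνP hnarrow i j 1 (by simp) x).log
    (lincomb_facts ν hνG i j 1 x).2.1.ne'
  have h2 := (tendsto_cos μ ν hμP hνP hnarrow i j (-1) (by simp) x).log
    (lincomb_facts ν hνG i j (-1) x).2.1.ne'
  exact ((h1.const_mul (-2)).sub (h2.const_mul (-2))).div_const 4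

/-- If a sequence of centered Gaussian Borel probability measures on `C(K, ℝ^k)` (`K` a compact
metric space, `k ≥ 1`) converges narrowly to a centered Gaussian measure `ν`, then the
covariance functions converge (entrywise) uniformly on `K × K` to that of `ν`. -/
theorem covariance_tendstoUniformly_of_narrow_tendsto
    {K : Type} [MetricSpace K] [CompactSpace K] {k : ℕ} (hk : 1 ≤ k)
    [MeasurableSpace C(K, Fin k → ℝ)] [BorelSpace C(K, Fin k → ℝ)]
    (μ : ℕ → Measure C(K, Fin k → ℝ)) (ν : Measure C(K, Fin k → ℝ))
    (hμP : ∀ n, IsProbabilityMeasure (μ n)) (hνP : IsProbabilityMeasure ν)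
    (hμG : ∀ n, IsCenteredGaussianMeasure (μ n)) (hνG : IsCenteredGaussianMeasure ν)
    (hnarrow : ∀ φ : BoundedContinuousFunction C(K, Fin k → ℝ) ℝ,
      Tendsto (fun n => ∫ f, φ f ∂(μ n)) atTop (𝓝 (∫ f, φ f ∂ν))) :
    ∀ i j : Fin k,
      TendstoUniformly (fun n (pq : K × K) => ∫ f, f pq.1 i * f pq.2 j ∂(μ n))
        (fun pq : K × K => ∫ f, f pq.1 i * f pq.2 j ∂ν) atTop := by
  intro i j
  rw [← tendstoLocallyUniformly_iff_tendstoUniformly_of_compactSpace,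
    tendstoLocallyUniformly_iff_forall_tendsto]
  intro x
  have h1 := tendsto_cov μ ν hμP hνP hμG hνG hnarrow i j x
  have h2 := tendsto_cov (fun _ => ν) ν (fun _ => hνP) hνP (fun _ => hνG) hνG
    (fun φ => tendsto_const_nhds) i j x
  exact (h2.prodMk_nhds h1).mono_right (nhds_le_uniformity _)
end

section
/- Let K be a compact metric space and let X be a centered Gaussian process on K with values in ℝ^k, defined on a probability space (Ω,P), with almost surely continuous sample paths, so that X defines a random element of C(K,ℝ^k). Let K_X(p,q) = E[X(p)X(q)^T] be its covariance function, and for p ∈ K and j ∈ {1,…,k} define h_p^j ∈ C(K,ℝ^k) by h_p^j(q) = (K_X(q,p)^{1j},…,K_X(q,p)^{kj}). Then the support of the law of X in C(K,ℝ^k) equals the closure in C(K,ℝ^k) of the linear span of {h_p^j : p ∈ K, j = 1,…,k}. -/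
open MeasureTheory ProbabilityTheory Filter Topology

/-- The (topological) support of a Borel measure: the set of points all of whose open
neighborhoods have positive measure. -/
def measureSupport {E : Type} [TopologicalSpace E] [MeasurableSpace E] (μ : Measure E) :
    Set E :=
  {x | ∀ U : Set E, IsOpen U → x ∈ U → 0 < μ U}

lemma gaussian_shift_ac {E : Type*} [NormedAddCommGroup E] [NormedSpace ℝ E] [CompleteSpace E]
    [SecondCountableTopology E] [MeasurableSpace E] [BorelSpace E] (μ : Measure E) [IsGaussian μ]
    (hc : ∀ L : StrongDual ℝ E, ∫ x, L x ∂μ = 0) (l : StrongDual ℝ E) (h : E)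
    (hh : ∀ L : StrongDual ℝ E, L h = ∫ x, L x * l x ∂μ) (c : ℝ) :
    μ.map (fun x => x + c • h) ≪ μ := by
  have hint : ∀ L M : StrongDual ℝ E, Integrable (fun x => L x * M x) μ := fun L M =>
    (IsGaussian.memLp_dual μ L 2 (by simp)).integrable_mul (IsGaussian.memLp_dual μ M 2 (by simp))
  by_cases hv : l h = 0
  · have h0 : h = 0 := by
      have h1 : (fun x => l x * l x) =ᵐ[μ] 0 := by
        rw [← integral_eq_zero_iff_of_nonneg (fun x => mul_self_nonneg _) (hint l l), ← hh, hv]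
      apply SeparatingDual.eq_zero_of_forall_dual_eq_zero (R := ℝ)
      intro L
      rw [hh]
      apply integral_eq_zero_of_ae
      filter_upwards [h1] with x hx
      have : l x = 0 := by simpa using hx
      simp [this]
    subst h0
    simp
    exact Measure.AbsolutelyContinuous.rfl
  · set v := l h with hvdef
    let R : E →L[ℝ] E := ContinuousLinearMap.id ℝ E - v⁻¹ • l.smulRight h
    have hR : ∀ x, R x = x - (v⁻¹ * l x) • h := fun x => by simp [R, smul_smul]
    have hG : HasGaussianLaw (fun x => (l x, R x)) μ := ⟨isGaussian_map (μ := μ) (l.prod R)⟩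
    have hind : IndepFun (fun x => l x) (fun x => R x) μ := by
      apply hG.indepFun_of_covariance_strongDual
      intro L₁ L₂
      have e1 : (L₁ ∘ fun x => l x) = fun x => (L₁.comp l) x := rfl
      have e2 : (L₂ ∘ fun x => R x) = fun x => (L₂.comp R) x := rfl
      rw [e1, e2, covariance_eq_sub (IsGaussian.memLp_dual μ _ 2 (by simp))
        (IsGaussian.memLp_dual μ _ 2 (by simp)), hc, hc]
      have e3 : ∀ x, (L₁.comp l) x * (L₂.comp R) x
          = L₁ 1 * (L₂ x * l x) - L₁ 1 * v⁻¹ * L₂ h * (l x * l x) := by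
        intro x
        have : L₁ (l x) = l x * L₁ 1 := by
          rw [← smul_eq_mul, ← map_smul]; simp
        simp [hR, this]; ring
      simp only [Pi.mul_apply, e3]
      rw [integral_sub ((hint _ _).const_mul _) ((hint _ _).const_mul _), integral_const_mul,
        integral_const_mul, ← hh, ← hh, ← hvdef]
      field_simp
      simp
    rw [indepFun_iff_map_prod_eq_prod_map_map (by fun_prop) (by fun_prop)] at hind
    have hl : μ.map (fun x => l x) = gaussianReal 0 (Var[l; μ]).toNNReal := by
      have := IsGaussian.map_eq_gaussianReal (μ := μ) l
      rwa [hc] at this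
    have hVar : Var[l; μ] = v := by
      rw [variance_of_integral_eq_zero (by fun_prop) (hc l), hvdef, hh]
      simp [pow_two]
    have hvpos : 0 ≤ v := hVar ▸ variance_nonneg _ _
    have hv0 : v.toNNReal ≠ 0 := by
      simp only [ne_eq, Real.toNNReal_eq_zero, not_le]; exact lt_of_le_of_ne hvpos (Ne.symm hv)
    rw [hVar] at hl
    rw [hl] at hind
    set γ := gaussianReal 0 v.toNNReal
    set ν := μ.map (fun x => R x)
    have : IsProbabilityMeasure ν := Measure.isProbabilityMeasure_map (by fun_prop)
    let g : ℝ × E → E := fun p => (v⁻¹ * p.1) • h + p.2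
    have hg : Measurable g := by fun_prop
    have hμ : μ = (γ.prod ν).map g := by
      rw [← hind, Measure.map_map hg (by fun_prop)]
      conv_lhs => rw [← Measure.map_id (μ := μ)]
      congr 1
      ext x
      simp [g, hR]
    have hγ : γ.map (fun t => t + c * v) ≪ γ := by
      simp only [γ]
      rw [gaussianReal_map_add_const]
      exact (gaussianReal_absolutelyContinuous _ hv0).trans (gaussianReal_absolutelyContinuous' _ hv0)
    have key : μ.map (fun x => x + c • h) = ((γ.map (fun t => t + c * v)).prod ν).map g := by
      have : (γ.map (fun t => t + c * v)).prod ν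
          = (γ.prod ν).map (Prod.map (fun t => t + c * v) id) := by
        rw [← Measure.map_prod_map _ _ (by fun_prop) measurable_id, Measure.map_id]
      rw [this, Measure.map_map hg (by fun_prop)]
      conv_lhs => rw [hμ]
      rw [Measure.map_map (by fun_prop) hg]
      congr 1
      ext p
      simp [g, mul_add, add_smul]
      have : v⁻¹ * (c * v) = c := by field_simp
      rw [this]; abel
    rw [key]
    conv_rhs => rw [hμ]
    exact (hγ.prod Measure.AbsolutelyContinuous.rfl).map hg

lemma gaussian_limit {Ω : Type*} [MeasurableSpace Ω] (P : Measure Ω) [IsProbabilityMeasure P]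
    (Y : ℕ → Ω → ℝ) (Z : Ω → ℝ) (hY : ∀ n, Measurable (Y n)) (hZ : Measurable Z)
    (hlim : ∀ ω, Tendsto (fun n => Y n ω) atTop (𝓝 (Z ω)))
    (hg : ∀ n, ∃ v : NNReal, P.map (Y n) = gaussianReal 0 v) :
    ∃ v : NNReal, P.map Z = gaussianReal 0 v := by
  choose v hv using hg
  have : IsProbabilityMeasure (P.map Z) := Measure.isProbabilityMeasure_map (by fun_prop)
  have hcf : ∀ t : ℝ, Tendsto (fun n => charFun (P.map (Y n)) t) atTop (𝓝 (charFun (P.map Z) t)) := by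
    intro t
    simp only [charFun_apply_real]
    rw [integral_map hZ.aemeasurable (by fun_prop)]
    have : ∀ n, ∫ x, Complex.exp (t * x * Complex.I) ∂(P.map (Y n))
        = ∫ ω, Complex.exp (t * (Y n ω) * Complex.I) ∂P := fun n => by
      rw [integral_map (hY n).aemeasurable (by fun_prop)]
    simp only [this]
    apply tendsto_integral_of_dominated_convergence (fun _ => 1)
    · intro n; have := hY n; fun_prop
    · simp
    · intro n
      refine Eventually.of_forall fun ω => ?_
      have := Complex.norm_exp_ofReal_mul_I (t * Y n ω)
      push_cast at this
      exact this.le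
    · refine Eventually.of_forall fun ω => ?_
      have hcont : Continuous fun x : ℝ => Complex.exp (t * x * Complex.I) := by fun_prop
      exact (hcont.tendsto _).comp (hlim ω)
  have hcf' : ∀ t : ℝ, Tendsto (fun n => Real.exp (- (v n * t ^ 2 / 2))) atTop
      (𝓝 (charFun (P.map Z) t).re) := by
    intro t
    have h1 := (Complex.continuous_re.tendsto _).comp (hcf t)
    refine h1.congr fun n => ?_
    simp only [Function.comp, hv, charFun_gaussianReal]
    rw [← Complex.exp_ofReal_re]; congr 2; push_cast; ring
  -- nonvanishing at some t
  obtain ⟨t, ht0, htpos⟩ : ∃ t : ℝ, t ≠ 0 ∧ 0 < (charFun (P.map Z) t).re := by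
    have hcont : Continuous fun t : ℝ => (charFun (P.map Z) t).re :=
      Complex.continuous_re.comp (continuous_charFun)
    have h0 : ∀ᶠ t in 𝓝 (0:ℝ), 0 < (charFun (P.map Z) t).re := by
      apply hcont.continuousAt.eventually (lt_mem_nhds _)
      simp
    have h1 : ∀ᶠ t in 𝓝[≠] (0:ℝ), 0 < (charFun (P.map Z) t).re := h0.filter_mono nhdsWithin_le_nhds
    obtain ⟨t, h2, h3⟩ := (h1.and self_mem_nhdsWithin).exists
    exact ⟨t, h3, h2⟩
  have hlog := ((Real.continuousAt_log htpos.ne').tendsto.comp (hcf' t))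
  simp only [Function.comp_def, Real.log_exp] at hlog
  set w := Real.log (charFun (P.map Z) t).re
  have hvlim : Tendsto (fun n => (v n : ℝ)) atTop (𝓝 (- 2 / t ^ 2 * w)) := by
    refine (hlog.const_mul (-2 / t^2)).congr fun n => ?_
    field_simp
  have hpos : 0 ≤ - 2 / t ^ 2 * w := ge_of_tendsto' hvlim fun n => (v n).2
  obtain ⟨u, hu⟩ : ∃ u : NNReal, (u : ℝ) = - 2 / t ^ 2 * w := ⟨⟨_, hpos⟩, rfl⟩
  rw [← hu] at hvlim
  refine ⟨u, ?_⟩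
  apply Measure.ext_of_charFun
  ext s
  refine tendsto_nhds_unique (hcf s) ?_
  simp only [hv, charFun_gaussianReal]
  have hcont : Continuous fun x : ℝ => Complex.exp (s * (0:ℝ) * Complex.I - x * s ^ 2 / 2) := by
    fun_prop
  exact (hcont.tendsto _).comp hvlim

lemma exists_approx {K : Type} [MetricSpace K] [CompactSpace K] (ε : ℝ) (hε : 0 < ε) :
    ∃ (m : ℕ) (p : Fin m → K) (ρ : Fin m → C(K, ℝ)),
      (∀ i x, 0 ≤ ρ i x) ∧ (∀ x, ∑ i, ρ i x = 1) ∧ (∀ i x, ρ i x ≠ 0 → dist x (p i) < ε) := by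
  obtain ⟨t, -, htf, ht⟩ := (isCompact_univ (X := K)).finite_cover_balls hε
  obtain ⟨m, p, hp⟩ : ∃ (m : ℕ) (p : Fin m → K), Set.range p = t := by
    have := htf.fin_param
    obtain ⟨m, p, -, hp⟩ := this
    exact ⟨m, p, hp⟩
  let g : Fin m → K → ℝ := fun i x => max 0 (ε - dist x (p i))
  have hg : ∀ i, Continuous (g i) := fun i => by fun_prop
  have hg0 : ∀ i x, 0 ≤ g i x := fun i x => le_max_left _ _
  have hS : ∀ x, 0 < ∑ i, g i x := by
    intro x
    have hx := ht (Set.mem_univ x)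
    simp only [Set.mem_iUnion, Metric.mem_ball, exists_prop] at hx
    obtain ⟨y, hy, hxy⟩ := hx
    rw [← hp] at hy
    obtain ⟨i, rfl⟩ := hy
    refine Finset.sum_pos' (fun i _ => hg0 i x) ⟨i, Finset.mem_univ _, ?_⟩
    exact lt_max_of_lt_right (sub_pos.2 hxy)
  refine ⟨m, p, fun i => ⟨fun x => g i x / ∑ j, g j x, ?_⟩, ?_, ?_, ?_⟩
  · exact (hg i).div (continuous_finsetSum _ fun j _ => hg j) fun x => (hS x).ne'
  · intro i x
    exact div_nonneg (hg0 i x) (hS x).le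
  · intro x
    simp only [ContinuousMap.coe_mk]
    rw [← Finset.sum_div, div_self (hS x).ne']
  · intro i x hx
    by_contra hd
    apply hx
    have : g i x = 0 := max_eq_left (by linarith)
    simp [this]

lemma exists_approx_seq {K : Type} [MetricSpace K] [CompactSpace K] {k : ℕ}
    (φ : StrongDual ℝ C(K, Fin k → ℝ)) :
    ∃ (m : ℕ → ℕ) (p : ∀ n, Fin (m n) → K) (c : ∀ n, Fin (m n) × Fin k → ℝ),
      (∀ f : C(K, Fin k → ℝ), Tendsto (fun n => ∑ q, c n q * f (p n q.1) q.2) atTop (𝓝 (φ f))) ∧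
      (∀ n (f : C(K, Fin k → ℝ)), |∑ q, c n q * f (p n q.1) q.2| ≤ ‖φ‖ * ‖f‖) := by
  choose m p ρ h0 h1 h2 using fun n : ℕ => exists_approx (K := K) (1 / ((n:ℝ) + 1)) (by positivity)
  let e : ∀ n, Fin (m n) × Fin k → C(K, Fin k → ℝ) := fun n q =>
    ⟨fun x => ρ n q.1 x • Pi.single q.2 (1:ℝ), by fun_prop⟩
  let T : ∀ n, C(K, Fin k → ℝ) → C(K, Fin k → ℝ) := fun n f => ∑ q, f (p n q.1) q.2 • e n q
  have hT : ∀ n f x j, T n f x j = ∑ i, ρ n i x * f (p n i) j := by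
    intro n f x j
    simp only [T, e, ContinuousMap.coe_sum, Finset.sum_apply, ContinuousMap.coe_smul,
      ContinuousMap.coe_mk, Pi.smul_apply, smul_eq_mul, Fintype.sum_prod_type]
    refine Finset.sum_congr rfl fun i _ => ?_
    rw [Finset.sum_eq_single j]
    · simp [mul_comm]
    · intro b _ hb; simp [Pi.single_apply, hb.symm]
    · simp
  have hφ : ∀ n f, ∑ q, φ (e n q) * f (p n q.1) q.2 = φ (T n f) := by
    intro n f
    simp only [T, map_sum, map_smul, smul_eq_mul, mul_comm]
  refine ⟨m, p, fun n q => φ (e n q), ?_, ?_⟩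
  · intro f
    simp only [hφ]
    refine (φ.continuous.tendsto f).comp ?_
    rw [Metric.tendsto_atTop]
    intro ε hε
    obtain ⟨δ, hδ, hf⟩ := Metric.uniformContinuous_iff.1
      (CompactSpace.uniformContinuous_of_continuous f.continuous) (ε/2) (half_pos hε)
    obtain ⟨N, hN⟩ := exists_nat_one_div_lt hδ
    refine ⟨N, fun n hn => ?_⟩
    have hnd : 1 / ((n:ℝ) + 1) < δ := (one_div_le_one_div_of_le (by positivity)
      (by gcongr)).trans_lt hN
    refine lt_of_le_of_lt ?_ (half_lt_self hε)
    rw [ContinuousMap.dist_le (by positivity)]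
    intro x
    rw [dist_pi_le_iff (by positivity)]
    intro j
    have : T n f x j - f x j = ∑ i, ρ n i x * (f (p n i) j - f x j) := by
      simp only [mul_sub, Finset.sum_sub_distrib, ← Finset.sum_mul, h1, hT, one_mul]
    rw [Real.dist_eq, this]
    calc |∑ i, ρ n i x * (f (p n i) j - f x j)| 
        ≤ ∑ i, |ρ n i x * (f (p n i) j - f x j)| := Finset.abs_sum_le_sum_abs _ _
      _ ≤ ∑ i, ρ n i x * (ε/2) := by
          refine Finset.sum_le_sum fun i _ => ?_
          rw [abs_mul, abs_of_nonneg (h0 n i x)]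
          by_cases hz : ρ n i x = 0
          · simp [hz]
          · refine mul_le_mul_of_nonneg_left ?_ (h0 n i x)
            rw [← Real.dist_eq]
            refine (dist_le_pi_dist _ _ j).trans (hf ?_).le
            rw [dist_comm]
            exact (h2 n i x hz).trans hnd
      _ = ε / 2 := by rw [← Finset.sum_mul, h1, one_mul]
  · intro n f
    rw [hφ, ← Real.norm_eq_abs]
    refine (φ.le_opNorm _).trans (mul_le_mul_of_nonneg_left ?_ (norm_nonneg _))
    rw [ContinuousMap.norm_le _ (norm_nonneg _)]
    intro x
    rw [pi_norm_le_iff_of_nonneg (norm_nonneg _)]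
    intro j
    rw [hT, Real.norm_eq_abs]
    calc |∑ i, ρ n i x * f (p n i) j| 
        ≤ ∑ i, |ρ n i x * f (p n i) j| := Finset.abs_sum_le_sum_abs _ _
      _ ≤ ∑ i, ρ n i x * ‖f‖ := by
          refine Finset.sum_le_sum fun i _ => ?_
          rw [abs_mul, abs_of_nonneg (h0 n i x)]
          refine mul_le_mul_of_nonneg_left ?_ (h0 n i x)
          rw [← Real.norm_eq_abs]
          exact (norm_le_pi_norm _ j).trans (f.norm_coe_le_norm _)
      _ = ‖f‖ := by rw [← Finset.sum_mul, h1, one_mul]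

lemma measureSupport_eq {E : Type} [TopologicalSpace E] [MeasurableSpace E] (μ : Measure E) :
    measureSupport μ = μ.support := by
  ext x
  rw [Measure.mem_support_iff_forall]
  constructor
  · intro hx U hU
    obtain ⟨V, hVU, hV, hxV⟩ := mem_nhds_iff.1 hU
    exact (hx V hV hxV).trans_le (measure_mono hVU)
  · intro hx U hU hxU
    exact hx U (hU.mem_nhds hxU)

/-- Let `X` be a centered Gaussian process on a compact metric space `K` with values in `ℝ^k`,
with continuous sample paths, viewed as a random element of `C(K, ℝ^k)`, and let
`K_X(p,q) = E[X(p)X(q)ᵀ]` be its covariance function.  If `h p j ∈ C(K, ℝ^k)` denote the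
functions `h p j (q) i = K_X(q,p)^{i j}`, then the support of the law of `X` is the closure in
`C(K, ℝ^k)` of the linear span of the functions `h p j`, `p ∈ K`, `j = 1, …, k`. -/
theorem support_gaussian_eq_closure_span_covariance
    {K : Type} [MetricSpace K] [CompactSpace K] {k : ℕ}
    [MeasurableSpace C(K, Fin k → ℝ)] [BorelSpace C(K, Fin k → ℝ)]
    {Ω : Type} [MeasurableSpace Ω] (P : Measure Ω) [IsProbabilityMeasure P]
    (X : Ω → C(K, Fin k → ℝ)) (hX : Measurable X)
    (hgauss : ∀ (j : ℕ) (p : Fin j → K),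
      IsCenteredGaussianLaw (P.map (fun ω => fun q : Fin j × Fin k => X ω (p q.1) q.2)))
    (h : K → Fin k → C(K, Fin k → ℝ))
    (hh : ∀ (p : K) (j : Fin k) (q : K) (i : Fin k),
      h p j q i = ∫ ω, X ω q i * X ω p j ∂P) :
    measureSupport (P.map X) =
      closure (↑(Submodule.span ℝ
        (Set.range (fun pj : K × Fin k => h pj.1 pj.2))) : Set C(K, Fin k → ℝ)) := by
  -- evaluation functionals
  let ev : K → Fin k → StrongDual ℝ C(K, Fin k → ℝ) := fun p j =>
    (ContinuousLinearMap.proj j).comp (ContinuousMap.evalCLM ℝ p)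
  have hev : ∀ p j f, ev p j f = f p j := fun p j f => rfl
  set μ := P.map X with hμdef
  have hμP : IsProbabilityMeasure μ := Measure.isProbabilityMeasure_map hX.aemeasurable
  -- every functional is centered Gaussian
  have hdual : ∀ φ : StrongDual ℝ C(K, Fin k → ℝ), ∃ v : NNReal, μ.map φ = gaussianReal 0 v := by
    intro φ
    obtain ⟨m, p, c, hlim, -⟩ := exists_approx_seq φ
    rw [hμdef, Measure.map_map (by fun_prop) hX]
    have hm : ∀ x j, Measurable fun ω => X ω x j := fun x j =>
      (ev x j).continuous.measurable.comp hX
    refine gaussian_limit P (fun n ω => ∑ q, c n q * X ω (p n q.1) q.2) _ ?_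
      (φ.continuous.measurable.comp hX) (fun ω => hlim (X ω)) ?_
    · intro n
      exact Finset.measurable_fun_sum _ fun q _ => (hm _ _).const_mul _
    · intro n
      obtain ⟨v, hv⟩ := hgauss (m n) (p n) (c n)
      refine ⟨v, ?_⟩
      rw [← hv, Measure.map_map (by fun_prop) (measurable_pi_lambda _ fun q => hm _ _)]
      rfl
  have hG : IsGaussian μ := isGaussian_of_map_eq_gaussianReal fun L => ⟨0, hdual L⟩
  have hc : ∀ L : StrongDual ℝ C(K, Fin k → ℝ), ∫ x, L x ∂μ = 0 := by
    intro L
    obtain ⟨v, hv⟩ := hdual L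
    have : ∫ y, y ∂(μ.map L) = ∫ x, L x ∂μ := integral_map (by fun_prop) (by fun_prop)
    rw [← this, hv, integral_id_gaussianReal]
  have hnorm2 : Integrable (fun x : C(K, Fin k → ℝ) => ‖x‖ ^ 2) μ := by
    have := (IsGaussian.memLp_two_id (μ := μ)).integrable_norm_pow (by norm_num)
    simpa using this
  have hL2 : ∀ (L : StrongDual ℝ C(K, Fin k → ℝ)) (p : K) (j : Fin k),
      L (h p j) = ∫ x, L x * ev p j x ∂μ := by
    intro L p j
    have hint : Integrable (fun x : C(K, Fin k → ℝ) => ev p j x • x) μ := by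
      refine (hnorm2.const_mul ‖ev p j‖).mono' (by fun_prop) (Eventually.of_forall fun x => ?_)
      rw [norm_smul, pow_two, ← mul_assoc]
      gcongr
      exact (ev p j).le_opNorm x
    have hb : h p j = ∫ x, ev p j x • x ∂μ := by
      ext q i
      rw [← hev q i, ← hev q i, ← ContinuousLinearMap.integral_comp_comm _ hint, hev, hh, hμdef,
        integral_map hX.aemeasurable (by fun_prop)]
      refine integral_congr_ae (Eventually.of_forall fun ω => ?_)
      simp [hev, mul_comm]
    rw [hb, ← ContinuousLinearMap.integral_comp_comm _ hint]
    simp [mul_comm]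
  rw [measureSupport_eq]
  set S := Submodule.span ℝ (Set.range (fun pj : K × Fin k => h pj.1 pj.2)) with hS
  have hsub : μ.support ⊆ closure (S : Set C(K, Fin k → ℝ)) := by
    intro f hf
    by_contra hfS
    rw [← Submodule.topologicalClosure_coe] at hfS
    obtain ⟨φ, hφf, hφS⟩ : ∃ φ : StrongDual ℝ C(K, Fin k → ℝ), φ f ≠ 0 ∧ ∀ g ∈ S, φ g = 0 := by
      obtain ⟨φ, u, h1, h2⟩ := geometric_hahn_banach_closed_point
        S.topologicalClosure.convex S.isClosed_topologicalClosure hfS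
      have h0 : 0 < u := by simpa using h1 0 (zero_mem _)
      refine ⟨φ, (h0.trans h2).ne', fun g hg => ?_⟩
      by_contra hne
      have h3 := h1 ((u / φ g) • g)
        (Submodule.smul_mem _ _ (S.le_topologicalClosure hg))
      rw [map_smul, smul_eq_mul, div_mul_cancel₀ _ hne] at h3
      exact lt_irrefl _ h3
    have hz : ∀ p j, ∫ x, φ x * ev p j x ∂μ = 0 := fun p j => by
      rw [← hL2]
      exact hφS _ (Submodule.subset_span ⟨(p, j), rfl⟩)
    obtain ⟨m, p, c, hlim, hbd⟩ := exists_approx_seq φ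
    have hφ2 : ∫ x, φ x * φ x ∂μ = 0 := by
      have ht : Tendsto (fun n => ∫ x, φ x * (∑ q, c n q * x (p n q.1) q.2) ∂μ) atTop
          (𝓝 (∫ x, φ x * φ x ∂μ)) := by
        refine tendsto_integral_of_dominated_convergence (fun x => ‖φ‖ * ‖φ‖ * ‖x‖ ^ 2) ?_ 
          (hnorm2.const_mul _) ?_ ?_
        · intro n
          simp only [← hev]
          fun_prop
        · intro n
          refine Eventually.of_forall fun x => ?_
          rw [norm_mul, show ‖φ‖ * ‖φ‖ * ‖x‖ ^ 2 = (‖φ‖ * ‖x‖) * (‖φ‖ * ‖x‖) by ring]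
          exact mul_le_mul (φ.le_opNorm x) (hbd n x) (norm_nonneg _) (by positivity)
        · exact Eventually.of_forall fun x => (hlim x).const_mul _
      refine tendsto_nhds_unique ht ?_
      have : ∀ n, ∫ x, φ x * (∑ q, c n q * x (p n q.1) q.2) ∂μ = 0 := by
        intro n
        simp only [← hev, Finset.mul_sum]
        rw [integral_finset_sum]
        · refine Finset.sum_eq_zero fun q _ => ?_
          simp only [mul_left_comm (φ _)]
          rw [integral_const_mul, hz, mul_zero]
        · intro q _
          simp only [mul_left_comm (φ _)]
          exact ((IsGaussian.memLp_dual μ φ 2 (by simp)).integrable_mul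
            (IsGaussian.memLp_dual μ (ev _ _) 2 (by simp))).const_mul _
      simp [this]
    rw [integral_eq_zero_iff_of_nonneg (fun x => mul_self_nonneg _)
      ((IsGaussian.memLp_dual μ φ 2 (by simp)).integrable_mul
            (IsGaussian.memLp_dual μ φ 2 (by simp)))] at hφ2
    have hcl : IsClosed {x | φ x = 0} := isClosed_eq φ.continuous continuous_const
    refine hφf (Measure.support_subset_of_isClosed hcl ?_ hf)
    filter_upwards [hφ2] with x hx
    simpa using hx
  refine hsub.antisymm ?_
  have hshift' : ∀ g ∈ S, ∀ c : ℝ, ∀ f ∈ μ.support, f + c • g ∈ μ.support := by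
    intro g hg
    refine Submodule.span_induction (p := fun g _ => ∀ c : ℝ, ∀ f ∈ μ.support,
      f + c • g ∈ μ.support) ?_ ?_ ?_ ?_ hg
    · rintro _ ⟨⟨p, j⟩, rfl⟩ c f hf
      have hac := gaussian_shift_ac μ hc (ev p j) (h p j) (fun L => hL2 L p j) c
      rw [← measureSupport_eq] at hf ⊢
      intro U hU hfU
      by_contra h0
      have hU0 : μ U = 0 := by simpa using h0
      have h1 := hac hU0
      rw [Measure.map_apply (by fun_prop) hU.measurableSet] at h1
      have h2 := hf _ (hU.preimage (f := fun x => x + c • h p j) (by fun_prop)) hfU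
      exact h2.ne' h1
    · intro c f hf
      simpa using hf
    · intro x y _ _ hx hy c f hf
      rw [smul_add, ← add_assoc]
      exact hy c _ (hx c f hf)
    · intro a x _ hx c f hf
      rw [smul_smul]
      exact hx _ f hf
  have hshift : ∀ g ∈ S, ∀ f ∈ μ.support, f + g ∈ μ.support := by
    intro g hg f hf
    simpa using hshift' g hg 1 f hf
  obtain ⟨f0, hf0⟩ := Measure.nonempty_support (μ := μ) (IsProbabilityMeasure.ne_zero μ)
  have hcl : ∀ g ∈ closure (S : Set C(K, Fin k → ℝ)), f0 + g ∈ μ.support := by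
    intro g hg
    have hcl : IsClosed {g | f0 + g ∈ μ.support} :=
      Measure.isClosed_support.preimage (continuous_const.add continuous_id)
    exact closure_minimal (fun g hg => hshift g hg f0 hf0) hcl hg
  intro g hg
  have : g - f0 ∈ closure (S : Set C(K, Fin k → ℝ)) := by
    rw [← Submodule.topologicalClosure_coe] at hg hsub ⊢
    exact sub_mem hg (hsub hf0)
  simpa using hcl _ this
end

section
/- Let D ⊂ ℝ^m be a closed Euclidean ball. There exists a constant C_D > 0 such that for every centered Gaussian process X with values in ℝ, defined on an open neighborhood of D, with almost surely continuously differentiable sample paths and whose covariance function K_X(x,y) = E[X(x)X(y)] has continuous partial derivatives of order ≤ 1 in each of the two variables, one has E[sup_{x∈D} |X(x)|] ≤ C_D · sqrt(N₁(K_X)), where N₁(K_X) = max over multi-indices |α| ≤ 1, |β| ≤ 1 of sup_{x,y∈D} |∂_x^α ∂_y^β K_X(x,y)|. -/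
open MeasureTheory ProbabilityTheory Filter Topology

/-- Iterated directional (line) derivative of a function along a list of directions. -/
noncomputable def iterLineDeriv {E : Type} [NormedAddCommGroup E] [NormedSpace ℝ E] :
    List E → (E → ℝ) → (E → ℝ)
  | [], f => f
  | v :: vs, f => iterLineDeriv vs (fun x => lineDeriv ℝ f x v)

/-- The list of coordinate directions encoding the multi-index `α`: the `i`-th basis vector of
`ℝ^m` repeated `α i` times; `iterLineDeriv (multiIndexList α) f = ∂^α f`. -/
noncomputable def multiIndexList {m : ℕ} (α : Fin m → ℕ) :
    List (EuclideanSpace ℝ (Fin m)) :=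
  (List.finRange m).flatMap fun i => List.replicate (α i) (EuclideanSpace.single i (1 : ℝ))

/-- `f` has, at every point of `U`, all the successive partial derivatives along the given list
of directions. -/
def HasLinePartialsOn {E : Type} [NormedAddCommGroup E] [NormedSpace ℝ E] (U : Set E) :
    List E → (E → ℝ) → Prop
  | [], _ => True
  | v :: vs, f => (∀ x ∈ U, LineDifferentiableAt ℝ f x v) ∧
      HasLinePartialsOn U vs (fun x => lineDeriv ℝ f x v)

/-- The mixed partial derivative `∂_x^α ∂_y^β K(x,y)` of a kernel `K : ℝ^m × ℝ^m → ℝ`. -/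
noncomputable def mixedLineDeriv {m : ℕ} (α β : Fin m → ℕ)
    (Kf : EuclideanSpace ℝ (Fin m) → EuclideanSpace ℝ (Fin m) → ℝ)
    (x y : EuclideanSpace ℝ (Fin m)) : ℝ :=
  iterLineDeriv (multiIndexList α)
    (fun x' => iterLineDeriv (multiIndexList β) (Kf x') y) x



lemma gauss_eLpNorm_le {Ω : Type} [MeasurableSpace Ω] (P : Measure Ω) [IsProbabilityMeasure P]
    (Y : Ω → ℝ) (v : NNReal) (h : P.map Y = gaussianReal 0 v) (p : ENNReal) (s : ℝ) (hs : 0 ≤ s)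
    (hY : ∫ ω, Y ω ^ 2 ∂P ≤ s ^ 2) :
    eLpNorm Y p P ≤ ENNReal.ofReal s * eLpNorm id p (gaussianReal 0 1) := by
  have hm : AEMeasurable Y P := by
    by_contra hc
    rw [Measure.map_of_not_aemeasurable hc] at h
    exact (IsProbabilityMeasure.ne_zero (gaussianReal 0 v)) h.symm
  have h2 : ∫ ω, Y ω ^ 2 ∂P = v := by
    have h3 := integral_map (μ := P) (φ := Y) hm (f := fun x : ℝ => x ^ 2) (by fun_prop)
    rw [← h3, h, ← variance_fun_id_gaussianReal (μ := 0) (v := v), variance_of_integral_eq_zero]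
    · fun_prop
    · exact integral_id_gaussianReal
  have h4 : gaussianReal 0 v = (gaussianReal 0 1).map (fun x => Real.sqrt v * x) := by
    rw [gaussianReal_map_const_mul]
    congr 1
    · simp
    · ext; simp
  have h5 : eLpNorm Y p P = ENNReal.ofReal (Real.sqrt v) * eLpNorm id p (gaussianReal 0 1) := by
    have := eLpNorm_map_measure (p := p) (μ := P) (f := Y) (g := (id : ℝ → ℝ)) (by fun_prop) hm
    rw [Function.id_comp] at this
    rw [← this, h, h4, eLpNorm_map_measure (by fun_prop) (by fun_prop)]
    have h6 : (id ∘ fun x : ℝ => Real.sqrt v * x) = Real.sqrt v • (id : ℝ → ℝ) := by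
      ext; simp
    rw [h6, eLpNorm_const_smul, Real.enorm_of_nonneg (Real.sqrt_nonneg _)]
  rw [h5]
  gcongr
  rw [h2] at hY
  exact Real.sqrt_le_iff.2 ⟨hs, hY⟩

lemma exists_nets {m : ℕ} (x₀ : EuclideanSpace ℝ (Fin m)) (R : ℝ) (hR : 0 ≤ R) :
    ∃ (B : ℕ) (F : ℕ → Finset (EuclideanSpace ℝ (Fin m))), 1 ≤ B ∧
      ∀ n, (∀ a ∈ F n, a ∈ Metric.closedBall x₀ R) ∧ (F n).card ≤ B ^ (n + 1) ∧
        ∀ x ∈ Metric.closedBall x₀ R, ∃ a ∈ F n, dist x a ≤ m * (1/2 : ℝ) ^ n := by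
  classical
  obtain ⟨r, hr⟩ := exists_nat_ge (R + 1)
  have hr1 : 1 ≤ r := by
    have : (1:ℝ) ≤ r := by linarith
    exact_mod_cast this
  let code : ℕ → EuclideanSpace ℝ (Fin m) → Fin m → ℤ := fun n x i => ⌊2 ^ n * (x i - x₀ i)⌋
  let I : ℕ → Finset (Fin m → ℤ) := fun n =>
    Fintype.piFinset (fun _ => Finset.Icc (-(r * 2 ^ n : ℤ)) (r * 2 ^ n))
  let g : ℕ → (Fin m → ℤ) → EuclideanSpace ℝ (Fin m) := fun n k =>
    if h : ∃ x ∈ Metric.closedBall x₀ R, code n x = k then h.choose else x₀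
  refine ⟨(6 * r) ^ m, fun n => (I n).image (g n), Nat.one_le_pow _ _ (by omega), fun n => ⟨?_, ?_, ?_⟩⟩
  · intro a ha
    obtain ⟨k, -, rfl⟩ := Finset.mem_image.1 ha
    by_cases h : ∃ x ∈ Metric.closedBall x₀ R, code n x = k
    · simp only [g, dif_pos h]
      exact h.choose_spec.1
    · simp only [g, dif_neg h]
      exact Metric.mem_closedBall_self hR
  · refine Finset.card_image_le.trans ?_
    simp only [I, Fintype.card_piFinset, Finset.prod_const, Finset.card_univ, Fintype.card_fin,
      Int.card_Icc]
    rw [← pow_mul, mul_comm m, pow_mul]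
    apply Nat.pow_le_pow_left
    have : (r * 2 ^ n + 1 - -(r * 2 ^ n : ℤ)).toNat = 2 * (r * 2 ^ n) + 1 := by
      zify
      have h0 : (0:ℤ) ≤ r * 2 ^ n := by positivity
      rw [Int.toNat_of_nonneg (by omega)]
      push_cast; ring
    rw [this]
    have h2 : 1 ≤ r * 2 ^ n := Nat.one_le_iff_ne_zero.2 (by positivity)
    have h3 : 2 ^ n ≤ (6 * r) ^ n := Nat.pow_le_pow_left (by omega) n
    calc 2 * (r * 2 ^ n) + 1 ≤ 3 * (r * 2 ^ n) := by omega
      _ ≤ (6 * r) * (6 * r) ^ n := by nlinarith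
      _ = _ := by ring
  · intro x hx
    have hex : ∃ y ∈ Metric.closedBall x₀ R, code n y = code n x := ⟨x, hx, rfl⟩
    refine ⟨g n (code n x), Finset.mem_image_of_mem _ ?_, ?_⟩
    · simp only [I, Fintype.mem_piFinset, Finset.mem_Icc]
      intro i
      have h1 : |x i - x₀ i| ≤ R := by
        have := PiLp.norm_apply_le (x - x₀) i
        rw [Metric.mem_closedBall, dist_eq_norm] at hx
        simpa using this.trans hx
      have h2 := abs_le.1 h1
      have hp : (0:ℝ) < 2 ^ n := by positivity
      constructor
      · apply Int.le_floor.2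
        push_cast
        nlinarith
      · have : (code n x i : ℝ) ≤ 2 ^ n * (x i - x₀ i) := Int.floor_le _
        have h3 : (code n x i : ℝ) ≤ r * 2 ^ n := by nlinarith
        exact_mod_cast h3
    · simp only [g, dif_pos hex]
      have hc := hex.choose_spec.2
      set y := hex.choose
      have hi : ∀ i, dist (x i) (y i) ≤ (1/2 : ℝ) ^ n := by
        intro i
        have := Int.abs_sub_lt_one_of_floor_eq_floor (congrFun hc i)
        have e : 2 ^ n * (y i - x₀ i) - 2 ^ n * (x i - x₀ i) = 2 ^ n * (y i - x i) := by ring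
        rw [e, abs_mul, abs_of_pos (by positivity : (0:ℝ) < 2 ^ n), abs_sub_comm] at this
        rw [Real.dist_eq, one_div, inv_pow, ← one_div, le_div_iff₀ (by positivity)]
        linarith
      rw [EuclideanSpace.dist_eq]
      apply Real.sqrt_le_iff.2 ⟨by positivity, ?_⟩
      calc ∑ i, dist (x i) (y i) ^ 2 ≤ (∑ i, dist (x i) (y i)) ^ 2 :=
            Finset.sum_sq_le_sq_sum_of_nonneg (fun i _ => dist_nonneg)
        _ ≤ (∑ i : Fin m, (1/2 : ℝ) ^ n) ^ 2 := by
            gcongr with i; exact hi i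
        _ = _ := by simp

lemma chain_pointwise {E : Type} [PseudoMetricSpace E] (D : Set E) (f : E → ℝ)
    (hf : ContinuousOn f D) (F : ℕ → Finset E) (L : ℝ) (hL : 0 ≤ L)
    (hF : ∀ n, ∀ a ∈ F n, a ∈ D)
    (hnet : ∀ n, ∀ x ∈ D, ∃ a ∈ F n, dist x a ≤ L * (1/2 : ℝ) ^ n)
    (p : ℝ) (hp : 0 < p) (x : E) (hx : x ∈ D) :
    ENNReal.ofReal |f x| ≤ ∑ a ∈ F 0, ‖f a‖ₑ + ∑' n, (∑ q ∈ (F n ×ˢ F (n+1)) with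
      dist q.1 q.2 ≤ 2 * L * (1/2 : ℝ) ^ n, ‖f q.1 - f q.2‖ₑ ^ p) ^ (1 / p) := by
  choose π hπ hd using fun n => hnet n x hx
  have hlim : Tendsto π atTop (𝓝 x) := by
    rw [tendsto_iff_dist_tendsto_zero]
    have h0 : Tendsto (fun n : ℕ => L * (1/2 : ℝ) ^ n) atTop (𝓝 0) := by
      simpa using (tendsto_pow_atTop_nhds_zero_of_lt_one (by norm_num : (0:ℝ) ≤ 1/2)
        (by norm_num)).const_mul L
    exact squeeze_zero (fun _ => dist_nonneg) (fun n => by rw [dist_comm]; exact hd n) h0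
  have hlim2 : Tendsto (fun n => f (π n)) atTop (𝓝 (f x)) :=
    (hf x hx).tendsto.comp (tendsto_nhdsWithin_iff.2 ⟨hlim, .of_forall fun n => hF n _ (hπ n)⟩)
  rw [← Real.enorm_eq_ofReal_abs]
  refine le_of_tendsto hlim2.enorm (.of_forall fun n => ?_)
  have h1 : ‖f (π n)‖ₑ ≤ ‖f (π 0)‖ₑ + ∑ k ∈ Finset.range n, ‖f (π k) - f (π (k+1))‖ₑ := by
    induction n with
    | zero => simp
    | succ n ih =>
      rw [Finset.sum_range_succ, ← add_assoc]
      calc ‖f (π (n+1))‖ₑ = ‖f (π n) - (f (π n) - f (π (n+1)))‖ₑ := by congr 1; ring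
        _ ≤ ‖f (π n)‖ₑ + ‖f (π n) - f (π (n+1))‖ₑ := enorm_sub_le
        _ ≤ _ := by gcongr
  refine h1.trans (add_le_add ?_ ?_)
  · exact Finset.single_le_sum (f := fun a => ‖f a‖ₑ) (fun _ _ => zero_le) (hπ 0)
  · refine le_trans (Finset.sum_le_sum fun k _ => ?_) (ENNReal.sum_le_tsum _)
    rw [one_div p, ENNReal.le_rpow_inv_iff hp]
    refine Finset.single_le_sum (f := fun q : E × E => ‖f q.1 - f q.2‖ₑ ^ p)
      (fun _ _ => zero_le) (a := (π k, π (k+1))) ?_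
    simp only [Finset.mem_filter, Finset.mem_product, hπ, true_and]
    have h2 := dist_triangle_left (π k) (π (k+1)) x
    have h3 := hd k
    have h4 := hd (k+1)
    have : L * (1/2 : ℝ) ^ (k+1) ≤ L * (1/2 : ℝ) ^ k := by
      gcongr L * ?_
      exact pow_le_pow_of_le_one (by norm_num) (by norm_num) (by omega)
    linarith

lemma lintegral_rpow_inv_le {Ω : Type} [MeasurableSpace Ω] (P : Measure Ω) [IsProbabilityMeasure P]
    (g : Ω → ENNReal) (hg : AEMeasurable g P) (p : ℕ) (hp : 1 ≤ p) :
    ∫⁻ ω, g ω ^ (1 / (p:ℝ)) ∂P ≤ (∫⁻ ω, g ω ∂P) ^ (1 / (p:ℝ)) := by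
  have hp0 : (p:ℝ) ≠ 0 := by positivity
  have h := eLpNorm_le_eLpNorm_of_exponent_le (μ := P) (p := 1) (q := (p : ENNReal))
    (f := fun ω => g ω ^ (1 / (p:ℝ))) (by exact_mod_cast hp)
    (by exact (hg.pow_const _).aestronglyMeasurable)
  rw [eLpNorm_one_eq_lintegral_enorm,
    eLpNorm_eq_lintegral_rpow_enorm_toReal (by positivity) (by simp)] at h
  have e : ∀ x : ENNReal, (x ^ (p:ℝ)⁻¹) ^ p = x := by
    intro x
    rw [← ENNReal.rpow_natCast, ← ENNReal.rpow_mul, inv_mul_cancel₀ hp0, ENNReal.rpow_one]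
  simpa [e] using h

lemma chain_expect {Ω : Type} [MeasurableSpace Ω] (P : Measure Ω) [IsProbabilityMeasure P]
    {E : Type} [PseudoMetricSpace E] (D : Set E) (X : Ω → E → ℝ)
    (hX : ∀ᵐ ω ∂P, ContinuousOn (X ω) D) (hm : ∀ a ∈ D, AEMeasurable (fun ω => X ω a) P)
    (F : ℕ → Finset E) (L : ℝ) (hL : 0 ≤ L) (B : ℕ) (hB : 1 ≤ B)
    (hF : ∀ n, ∀ a ∈ F n, a ∈ D) (hcard : ∀ n, (F n).card ≤ B ^ (n + 1))
    (hnet : ∀ n, ∀ x ∈ D, ∃ a ∈ F n, dist x a ≤ L * (1/2 : ℝ) ^ n)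
    (p : ℕ) (hp : 1 ≤ p) (hpB : (B:ℝ) ^ 4 ≤ (3/2 : ℝ) ^ p) (κ₀ κ : ENNReal)
    (h0 : ∀ a ∈ D, ∫⁻ ω, ‖X ω a‖ₑ ∂P ≤ κ₀)
    (h1 : ∀ a ∈ D, ∀ b ∈ D, eLpNorm (fun ω => X ω a - X ω b) p P ≤ κ * ENNReal.ofReal (dist a b)) :
    ∫⁻ ω, ⨆ x ∈ D, ENNReal.ofReal |X ω x| ∂P ≤ B * κ₀ + κ * ENNReal.ofReal (12 * L) := by
  have hp0 : (0:ℝ) < p := by positivity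
  let S : ℕ → Finset (E × E) := fun n =>
    {q ∈ F n ×ˢ F (n+1) | dist q.1 q.2 ≤ 2 * L * (1/2 : ℝ) ^ n}
  have hS : ∀ n, ∀ q ∈ S n, q.1 ∈ D ∧ q.2 ∈ D ∧ dist q.1 q.2 ≤ 2 * L * (1/2 : ℝ) ^ n := by
    intro n q hq
    simp only [S, Finset.mem_filter, Finset.mem_product] at hq
    exact ⟨hF _ _ hq.1.1, hF _ _ hq.1.2, hq.2⟩
  have hSc : ∀ n, (S n).card ≤ (B ^ 4) ^ (n + 1) := by
    intro n
    refine (Finset.card_filter_le _ _).trans ?_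
    rw [Finset.card_product]
    calc _ ≤ B ^ (n+1) * B ^ (n+1+1) := Nat.mul_le_mul (hcard _) (hcard _)
      _ = B ^ (2 * n + 3) := by ring
      _ ≤ B ^ (4 * (n + 1)) := Nat.pow_le_pow_right hB (by omega)
      _ = _ := by rw [pow_mul]
  have hdiff : ∀ n, ∀ q ∈ S n, AEMeasurable (fun ω => ‖X ω q.1 - X ω q.2‖ₑ ^ (p:ℝ)) P := by
    intro n q hq
    obtain ⟨ha, hb, -⟩ := hS n q hq
    exact (((hm _ ha).sub (hm _ hb)).enorm).pow_const _
  have hsum : ∀ n, AEMeasurable (fun ω => ∑ q ∈ S n, ‖X ω q.1 - X ω q.2‖ₑ ^ (p:ℝ)) P := by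
    intro n
    exact Finset.aemeasurable_fun_sum _ (hdiff n)
  have hle : (fun ω => ⨆ x ∈ D, ENNReal.ofReal |X ω x|) ≤ᵐ[P] fun ω =>
      ∑ a ∈ F 0, ‖X ω a‖ₑ + ∑' n, (∑ q ∈ S n, ‖X ω q.1 - X ω q.2‖ₑ ^ (p:ℝ)) ^ (1 / (p:ℝ)) := by
    filter_upwards [hX] with ω hω
    exact iSup₂_le fun x hx => chain_pointwise D (X ω) hω F L hL hF hnet p hp0 x hx
  have hterm : ∀ n, ∫⁻ ω, (∑ q ∈ S n, ‖X ω q.1 - X ω q.2‖ₑ ^ (p:ℝ)) ^ (1 / (p:ℝ)) ∂P ≤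
      κ * ENNReal.ofReal (3 * L * (3/4 : ℝ) ^ n) := by
    intro n
    refine (lintegral_rpow_inv_le P _ (hsum n) p hp).trans ?_
    rw [lintegral_finsetSum' _ (hdiff n)]
    have hq : ∀ q ∈ S n, ∫⁻ ω, ‖X ω q.1 - X ω q.2‖ₑ ^ (p:ℝ) ∂P ≤
        (κ * ENNReal.ofReal (2 * L * (1/2 : ℝ) ^ n)) ^ (p:ℝ) := by
      intro q hq
      obtain ⟨ha, hb, hd⟩ := hS n q hq
      have h2 := h1 _ ha _ hb
      rw [eLpNorm_eq_lintegral_rpow_enorm_toReal (by positivity) (by simp)] at h2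
      simp only [ENNReal.toReal_natCast, one_div] at h2
      rw [ENNReal.rpow_inv_le_iff hp0] at h2
      refine h2.trans ?_
      gcongr
    have hc : ((S n).card : ENNReal) ≤ ENNReal.ofReal ((3/2 : ℝ) ^ (n+1)) ^ (p:ℝ) := by
      rw [ENNReal.rpow_natCast, ← ENNReal.ofReal_pow (by positivity), ← ENNReal.ofReal_natCast]
      apply ENNReal.ofReal_le_ofReal
      have : ((S n).card : ℝ) ≤ (B ^ 4) ^ (n + 1) := by exact_mod_cast hSc n
      calc _ ≤ ((B:ℝ) ^ 4) ^ (n + 1) := this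
        _ ≤ ((3/2 : ℝ) ^ p) ^ (n + 1) := by gcongr
        _ = _ := by rw [← pow_mul, ← pow_mul, mul_comm]
    rw [one_div, ENNReal.rpow_inv_le_iff hp0]
    calc _ ≤ ∑ q ∈ S n, (κ * ENNReal.ofReal (2 * L * (1/2 : ℝ) ^ n)) ^ (p:ℝ) :=
          Finset.sum_le_sum hq
      _ = (S n).card * (κ * ENNReal.ofReal (2 * L * (1/2 : ℝ) ^ n)) ^ (p:ℝ) := by simp
      _ ≤ ENNReal.ofReal ((3/2 : ℝ) ^ (n+1)) ^ (p:ℝ) *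
          (κ * ENNReal.ofReal (2 * L * (1/2 : ℝ) ^ n)) ^ (p:ℝ) := by gcongr
      _ = (κ * ENNReal.ofReal (3 * L * (3/4 : ℝ) ^ n)) ^ (p:ℝ) := by
          rw [← ENNReal.mul_rpow_of_nonneg _ _ hp0.le, mul_left_comm,
            ← ENNReal.ofReal_mul (by positivity)]
          congr 3
          have : (3/4 : ℝ) ^ n = (3/2) ^ n * (1/2) ^ n := by rw [← mul_pow]; norm_num
          rw [this]; ring
  refine (lintegral_mono_ae hle).trans ?_
  have hm0 : ∀ a ∈ F 0, AEMeasurable (fun ω => ‖X ω a‖ₑ) P := fun a ha => (hm a (hF 0 a ha)).enorm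
  rw [lintegral_add_left' (Finset.aemeasurable_fun_sum _ hm0), lintegral_finsetSum' _ hm0,
    lintegral_tsum fun n => (hsum n).pow_const _]
  gcongr ?_ + ?_
  · calc _ ≤ ∑ a ∈ F 0, κ₀ := Finset.sum_le_sum fun a ha => h0 a (hF 0 a ha)
      _ = (F 0).card * κ₀ := by simp
      _ ≤ _ := by
        gcongr
        simpa using hcard 0
  · calc _ ≤ ∑' n, κ * ENNReal.ofReal (3 * L * (3/4 : ℝ) ^ n) := ENNReal.tsum_le_tsum hterm
      _ = κ * ENNReal.ofReal (12 * L) := by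
        rw [ENNReal.tsum_mul_left, ← ENNReal.ofReal_tsum_of_nonneg (fun n => by positivity)]
        · rw [tsum_mul_left, tsum_geometric_of_lt_one (by norm_num) (by norm_num)]
          congr 2; ring
        · exact (summable_geometric_of_lt_one (by norm_num) (by norm_num)).mul_left _

lemma line_mvt {E : Type} [NormedAddCommGroup E] [NormedSpace ℝ E] (D : Set E) (hD : Convex ℝ D)
    (f : E → ℝ) (e a : E) (t M : ℝ) (ha : a ∈ D) (hb : a + t • e ∈ D)
    (hf : ∀ x ∈ D, LineDifferentiableAt ℝ f x e) (hM : ∀ x ∈ D, |lineDeriv ℝ f x e| ≤ M) :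
    |f (a + t • e) - f a| ≤ M * |t| := by
  let S : Set ℝ := {s | a + s • e ∈ D}
  have hS : Convex ℝ S := by
    intro s hs r hr u v hu hv huv
    have := hD hs hr hu hv huv
    have e1 : u • (a + s • e) + v • (a + r • e) = a + (u • s + v • r) • e := by
      have : a = (u + v) • a := by rw [huv, one_smul]
      conv_rhs => rw [this]
      simp only [smul_eq_mul]
      module
    rw [e1] at this
    exact this
  have hder : ∀ s ∈ S, HasDerivWithinAt (fun s => f (a + s • e))
      (lineDeriv ℝ f (a + s • e) e) S s := by
    intro s hs
    apply HasDerivAt.hasDerivWithinAt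
    have h := (hf _ hs).hasLineDerivAt
    unfold HasLineDerivAt at h
    have h2 : HasDerivAt (fun u : ℝ => f (a + s • e + u • e)) (lineDeriv ℝ f (a + s • e) e)
      (s - s) := by simpa using h
    have h3 := h2.comp_sub_const s s
    convert h3 using 2
    rw [sub_smul]; congr 1; abel
  have := hS.norm_image_sub_le_of_norm_hasDerivWithin_le (C := M) hder
    (fun s hs => hM _ hs) (x := 0) (y := t) (by simpa [S] using ha) hb
  simpa using this

lemma axis_bound {E : Type} [NormedAddCommGroup E] [NormedSpace ℝ E] (D : Set E) (hD : Convex ℝ D)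
    (K : E → E → ℝ) (e a : E) (t N : ℝ) (ha : a ∈ D) (hb : a + t • e ∈ D)
    (h1 : ∀ x ∈ D, ∀ y ∈ D, LineDifferentiableAt ℝ (K x) y e)
    (h2 : ∀ y ∈ D, ∀ x ∈ D, LineDifferentiableAt ℝ (fun x' => lineDeriv ℝ (K x') y e) x e)
    (h3 : ∀ x ∈ D, ∀ y ∈ D, |lineDeriv ℝ (fun x' => lineDeriv ℝ (K x') y e) x e| ≤ N) :
    (K (a + t • e) (a + t • e) - K a (a + t • e)) - (K (a + t • e) a - K a a) ≤ N * t ^ 2 := by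
  have hd : ∀ y ∈ D, HasLineDerivAt ℝ (fun y => K (a + t • e) y - K a y)
      (lineDeriv ℝ (K (a + t • e)) y e - lineDeriv ℝ (K a) y e) y e := by
    intro y hy
    exact (h1 _ hb y hy).hasLineDerivAt.sub (h1 _ ha y hy).hasLineDerivAt
  have := line_mvt D hD (fun y => K (a + t • e) y - K a y) e a t (N * |t|) ha hb
    (fun y hy => (hd y hy).lineDifferentiableAt) (fun y hy => by
      rw [(hd y hy).lineDeriv]
      exact line_mvt D hD (fun x' => lineDeriv ℝ (K x') y e) e a t N ha hb (h2 y hy)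
        (fun x hx => h3 x hx y hy))
  have h4 := (le_abs_self _).trans this
  rw [mul_assoc, ← abs_mul, ← pow_two, abs_of_nonneg (sq_nonneg t)] at h4
  exact h4

lemma flatMap_eq_of_nodup {α β : Type} (l : List α) (hl : l.Nodup) (i : α) (hi : i ∈ l)
    (f : α → List β) (hf : ∀ j, j ≠ i → f j = []) : l.flatMap f = f i := by
  induction l with
  | nil => simp at hi
  | cons a l ih =>
    rw [List.flatMap_cons]
    rw [List.nodup_cons] at hl
    by_cases h : a = i
    · subst h
      have : l.flatMap f = [] := by
        rw [List.flatMap_eq_nil_iff]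
        intro x hx
        exact hf x (fun h => hl.1 (h ▸ hx))
      simp [this]
    · rw [hf a h, List.nil_append]
      exact ih hl.2 (by simpa [Ne.symm h] using hi)

lemma coord_path {m : ℕ} (x₀ : EuclideanSpace ℝ (Fin m)) (R : ℝ)
    (ρ : EuclideanSpace ℝ (Fin m) → EuclideanSpace ℝ (Fin m) → ENNReal) (κ : ENNReal)
    (hself : ∀ x, ρ x x = 0) (hsymm : ∀ x y, ρ x y = ρ y x)
    (htri : ∀ x ∈ Metric.closedBall x₀ R, ∀ y ∈ Metric.closedBall x₀ R,
      ∀ z ∈ Metric.closedBall x₀ R, ρ x z ≤ ρ x y + ρ y z)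
    (hax : ∀ (i : Fin m) (a : EuclideanSpace ℝ (Fin m)) (t : ℝ), a ∈ Metric.closedBall x₀ R →
      a + t • EuclideanSpace.single i (1:ℝ) ∈ Metric.closedBall x₀ R →
      ρ a (a + t • EuclideanSpace.single i (1:ℝ)) ≤ κ * ENNReal.ofReal |t|)
    (x y : EuclideanSpace ℝ (Fin m)) (hx : x ∈ Metric.closedBall x₀ R)
    (hy : y ∈ Metric.closedBall x₀ R) :
    ρ x y ≤ (κ * ENNReal.ofReal (2 * m)) * ENNReal.ofReal (dist x y) := by
  classical
  have hball : ∀ u w : EuclideanSpace ℝ (Fin m), u ∈ Metric.closedBall x₀ R →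
      (∀ i, |w i - x₀ i| ≤ |u i - x₀ i|) → w ∈ Metric.closedBall x₀ R := by
    intro u w hu h
    rw [Metric.mem_closedBall] at hu ⊢
    refine le_trans ?_ hu
    rw [EuclideanSpace.dist_eq, EuclideanSpace.dist_eq]
    apply Real.sqrt_le_sqrt
    refine Finset.sum_le_sum fun i _ => ?_
    rw [Real.dist_eq, Real.dist_eq]
    exact pow_le_pow_left₀ (abs_nonneg _) (h i) 2
  -- one-sided move
  have key : ∀ u z : EuclideanSpace ℝ (Fin m), u ∈ Metric.closedBall x₀ R →
      (∀ i, |z i - x₀ i| ≤ |u i - x₀ i|) → ρ u z ≤ κ * ENNReal.ofReal (∑ i, |z i - u i|) := by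
    intro u z hu hz
    let w : Finset (Fin m) → EuclideanSpace ℝ (Fin m) :=
      fun s => WithLp.toLp 2 (fun i => if i ∈ s then z i else u i)
    have hw : ∀ s, w s ∈ Metric.closedBall x₀ R := by
      intro s
      refine hball u _ hu fun i => ?_
      by_cases h : i ∈ s
      · simpa [w, h] using hz i
      · simp [w, h]
    have hind : ∀ s : Finset (Fin m), ρ u (w s) ≤ κ * ENNReal.ofReal (∑ i ∈ s, |z i - u i|) := by
      intro s
      induction s using Finset.induction_on with
      | empty =>
        have : w ∅ = u := by ext i; simp [w]
        simp [this, hself]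
      | insert i s hi ih =>
        have hstep : w (insert i s) = w s + (z i - u i) • EuclideanSpace.single i (1:ℝ) := by
          ext j
          by_cases h : j = i
          · subst h; simp [w, hi]
          · simp [w, h]
        refine (htri u hu (w s) (hw s) _ (hw _)).trans ?_
        rw [Finset.sum_insert hi, add_comm |z i - u i|, ENNReal.ofReal_add
          (Finset.sum_nonneg fun _ _ => abs_nonneg _) (abs_nonneg _), mul_add]
        refine add_le_add ih ?_
        have := hw (insert i s)
        rw [hstep] at this ⊢
        exact hax i _ _ (hw s) this
    have h := hind Finset.univ
    have e : w Finset.univ = z := by ext i; simp [w]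
    rwa [e] at h
  let z : EuclideanSpace ℝ (Fin m) :=
    WithLp.toLp 2 (fun i => if |x i - x₀ i| ≤ |y i - x₀ i| then x i else y i)
  have hzx : ∀ i, |z i - x₀ i| ≤ |x i - x₀ i| := by
    intro i; simp only [z]; split_ifs with h
    · exact le_rfl
    · exact (not_le.1 h).le
  have hzy : ∀ i, |z i - x₀ i| ≤ |y i - x₀ i| := by
    intro i; simp only [z]; split_ifs with h
    · exact h
    · exact le_rfl
  have hc : ∀ i, |x i - y i| ≤ dist x y := by
    intro i
    have := PiLp.norm_apply_le (x - y) i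
    rw [dist_eq_norm]
    simpa using this
  have h1 : ∑ i, |z i - x i| ≤ m * dist x y := by
    calc _ ≤ ∑ i : Fin m, dist x y := by
          refine Finset.sum_le_sum fun i _ => ?_
          simp only [z]; split_ifs with h
          · simp
          · rw [abs_sub_comm]; exact hc i
      _ = _ := by simp
  have h2 : ∑ i, |z i - y i| ≤ m * dist x y := by
    calc _ ≤ ∑ i : Fin m, dist x y := by
          refine Finset.sum_le_sum fun i _ => ?_
          simp only [z]; split_ifs with h
          · exact hc i
          · simp
      _ = _ := by simp
  calc ρ x y ≤ ρ x z + ρ z y := htri x hx z (hball x z hx hzx) y hy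
    _ ≤ κ * ENNReal.ofReal (m * dist x y) + κ * ENNReal.ofReal (m * dist x y) := by
        rw [hsymm z y]
        gcongr
        · exact (key x z hx hzx).trans (by gcongr)
        · exact (key y z hy hzy).trans (by gcongr)
    _ = _ := by
        rw [← mul_add, ← ENNReal.ofReal_add (by positivity) (by positivity), mul_assoc,
          ← ENNReal.ofReal_mul (by positivity)]
        congr 2; ring

lemma multiIndexList_single {m : ℕ} (i : Fin m) :
    multiIndexList (Pi.single i 1) = [EuclideanSpace.single i (1:ℝ)] := by
  unfold multiIndexList
  rw [flatMap_eq_of_nodup _ (List.nodup_finRange m) i (List.mem_finRange i)]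
  · simp
  · intro j hj
    simp [hj]

lemma multiIndexList_zero {m : ℕ} :
    multiIndexList (0 : Fin m → ℕ) = [] := by
  simp [multiIndexList]

/-- Let `D ⊆ ℝ^m` be a closed Euclidean ball.  There is a constant `C_D > 0` such that for
every real-valued centered Gaussian process `X` defined on an open neighborhood `U` of `D`
with almost surely `C¹` sample paths, whose covariance `K_X(x,y) = E[X(x)X(y)]` has (continuous)
partial derivatives of order `≤ 1` in each variable, and every bound `N` on all those mixed
partial derivatives on `D × D`, one has `E[sup_{x ∈ D} |X(x)|] ≤ C_D · √N`. -/
theorem exists_const_expectation_sup_le_sqrt_covariance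
    {m : ℕ} (x₀ : EuclideanSpace ℝ (Fin m)) (R : ℝ) (hR : 0 ≤ R) :
    ∃ C : ℝ, 0 < C ∧
      ∀ (Ω : Type) (_ : MeasurableSpace Ω) (P : Measure Ω) (_ : IsProbabilityMeasure P)
        (U : Set (EuclideanSpace ℝ (Fin m))) (_ : IsOpen U)
        (_ : Metric.closedBall x₀ R ⊆ U)
        (X : Ω → EuclideanSpace ℝ (Fin m) → ℝ),
        -- almost surely continuously differentiable sample paths on `U`
        (∀ᵐ ω ∂P, ContDiffOn ℝ 1 (X ω) U) →
        -- `X` is a centered Gaussian process on `U`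
        (∀ (j : ℕ) (p : Fin j → EuclideanSpace ℝ (Fin m)), (∀ i, p i ∈ U) →
          ∀ c : Fin j → ℝ, ∃ v : NNReal,
            P.map (fun ω => ∑ i, c i * X ω (p i)) = gaussianReal 0 v) →
        -- the covariance function has continuous partial derivatives of order `≤ 1`
        -- in each of the two variables, on `U`
        (∀ α β : Fin m → ℕ, (∑ i, α i) ≤ 1 → (∑ i, β i) ≤ 1 →
          (∀ x' ∈ U, HasLinePartialsOn U (multiIndexList β)
              (fun y' => ∫ ω, X ω x' * X ω y' ∂P)) ∧
          (∀ y ∈ U, HasLinePartialsOn U (multiIndexList α)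
              (fun x' => iterLineDeriv (multiIndexList β)
                (fun y' => ∫ ω, X ω x' * X ω y' ∂P) y)) ∧
          ContinuousOn (fun q : EuclideanSpace ℝ (Fin m) × EuclideanSpace ℝ (Fin m) =>
              mixedLineDeriv α β (fun a b => ∫ ω, X ω a * X ω b ∂P) q.1 q.2)
            (U ×ˢ U)) →
        -- conclusion: for any `N` bounding the mixed derivatives of orders `≤ 1` on `D × D`,
        -- `E[sup_D |X|] ≤ C √N`
        ∀ N : ℝ,
          (∀ α β : Fin m → ℕ, (∑ i, α i) ≤ 1 → (∑ i, β i) ≤ 1 →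
            ∀ x ∈ Metric.closedBall x₀ R, ∀ y ∈ Metric.closedBall x₀ R,
              |mixedLineDeriv α β (fun a b => ∫ ω, X ω a * X ω b ∂P) x y| ≤ N) →
          ∫⁻ ω, ⨆ x ∈ Metric.closedBall x₀ R, ENNReal.ofReal |X ω x| ∂P
            ≤ ENNReal.ofReal (C * Real.sqrt N) := by
  classical
  obtain ⟨B, F, hB, hF⟩ := exists_nets x₀ R hR
  obtain ⟨p, hpB⟩ : ∃ p : ℕ, 1 ≤ p ∧ (B:ℝ) ^ 4 ≤ (3/2 : ℝ) ^ p := by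
    obtain ⟨n, hn⟩ := pow_unbounded_of_one_lt ((B:ℝ) ^ 4) (by norm_num : (1:ℝ) < 3/2)
    refine ⟨n + 1, by omega, hn.le.trans ?_⟩
    exact pow_le_pow_right₀ (by norm_num) (by omega)
  obtain ⟨hp, hpB⟩ := hpB
  set M : ENNReal := eLpNorm id (p : ENNReal) (gaussianReal 0 1) with hMdef
  set M1 : ENNReal := eLpNorm id 1 (gaussianReal 0 1) with hM1def
  have hM : M ≠ ⊤ := (memLp_id_gaussianReal' (p : ENNReal) (by simp)).eLpNorm_ne_top
  have hM1 : M1 ≠ ⊤ := (memLp_id_gaussianReal' 1 (by simp)).eLpNorm_ne_top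
  refine ⟨B * M1.toReal + M.toReal * (2 * m) * (12 * m) + 1, by positivity, ?_⟩
  intro Ω _ P _ U hU hDU X hC1 hG hK N hN
  set D := Metric.closedBall x₀ R with hD
  have hDc : Convex ℝ D := convex_closedBall x₀ R
  have hx₀ : x₀ ∈ D := Metric.mem_closedBall_self hR
  set K : EuclideanSpace ℝ (Fin m) → EuclideanSpace ℝ (Fin m) → ℝ :=
    fun a b => ∫ ω, X ω a * X ω b ∂P with hKdef
  have hKN : ∀ x ∈ D, K x x ≤ N := by
    intro x hx
    have := hN 0 0 (by simp) (by simp) x hx x hx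
    simp only [mixedLineDeriv, multiIndexList_zero, iterLineDeriv] at this
    exact (le_abs_self _).trans this
  have hN0 : 0 ≤ N := (abs_nonneg _).trans (hN 0 0 (by simp) (by simp) x₀ hx₀ x₀ hx₀)
  have hg1 : ∀ a ∈ D, ∃ v : NNReal, P.map (fun ω => X ω a) = gaussianReal 0 v := by
    intro a ha
    simpa using hG 1 (fun _ => a) (fun _ => hDU ha) (fun _ => 1)
  have hg2 : ∀ a ∈ D, ∀ b ∈ D, ∃ v : NNReal,
      P.map (fun ω => X ω a - X ω b) = gaussianReal 0 v := by
    intro a ha b hb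
    have := hG 2 ![a, b] (by intro i; fin_cases i; exacts [hDU ha, hDU hb]) ![1, -1]
    simpa [Fin.sum_univ_two, ← sub_eq_add_neg] using this
  have hm : ∀ a ∈ D, AEMeasurable (fun ω => X ω a) P := by
    intro a ha
    obtain ⟨v, hv⟩ := hg1 a ha
    by_contra hc
    rw [Measure.map_of_not_aemeasurable hc] at hv
    exact (IsProbabilityMeasure.ne_zero (gaussianReal 0 v)) hv.symm
  have hL2 : ∀ a ∈ D, MemLp (fun ω => X ω a) 2 P := by
    intro a ha
    obtain ⟨v, hv⟩ := hg1 a ha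
    have h := memLp_id_gaussianReal' (μ := 0) (v := v) 2 (by simp)
    rw [← hv] at h
    exact (memLp_map_measure_iff (by fun_prop) (hm a ha)).1 h
  have hint : ∀ a ∈ D, ∀ b ∈ D, Integrable (fun ω => X ω a * X ω b) P := fun a ha b hb =>
    (hL2 a ha).integrable_mul (hL2 b hb)
  have hvar : ∀ a ∈ D, ∀ b ∈ D, ∫ ω, (X ω b - X ω a) ^ 2 ∂P =
      (K b b - K a b) - (K b a - K a a) := by
    intro a ha b hb
    simp only [hKdef]
    rw [← integral_sub (hint b hb b hb) (hint a ha b hb),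
      ← integral_sub (hint b hb a ha) (hint a ha a ha),
      ← integral_sub (by exact (hint b hb b hb).sub (hint a ha b hb))
        (by exact (hint b hb a ha).sub (hint a ha a ha))]
    congr 1; ext ω; ring
  have hinc : ∀ a ∈ D, ∀ b ∈ D, eLpNorm (fun ω => X ω a - X ω b) p P ≤
      ((ENNReal.ofReal (Real.sqrt N) * M) * ENNReal.ofReal (2 * m)) *
        ENNReal.ofReal (dist a b) := by
    intro a ha b hb
    refine coord_path x₀ R (fun a b => eLpNorm (fun ω => X ω a - X ω b) p P)
      (ENNReal.ofReal (Real.sqrt N) * M) ?_ ?_ ?_ ?_ a b ha hb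
    · intro x
      simp
    · intro x y
      exact eLpNorm_sub_comm (fun ω => X ω x) (fun ω => X ω y) p P
    · intro x hx y hy z hz
      have := eLpNorm_add_le (μ := P) (p := (p : ENNReal))
        ((hm x hx).sub (hm y hy)).aestronglyMeasurable
        ((hm y hy).sub (hm z hz)).aestronglyMeasurable (by exact_mod_cast hp)
      refine le_trans (le_of_eq ?_) this
      congr 1; ext ω; simp
    · intro i a t ha hb
      obtain ⟨v, hv⟩ := hg2 a ha _ hb
      have h3 := gauss_eLpNorm_le P _ v hv p (Real.sqrt N * |t|) (by positivity) ?_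
      · rw [ENNReal.ofReal_mul (Real.sqrt_nonneg N)] at h3
        rw [mul_right_comm]
        exact h3
      · rw [hvar _ hb _ ha, mul_pow, Real.sq_sqrt hN0, sq_abs]
        have hs : ∑ j, (Pi.single i 1 : Fin m → ℕ) j ≤ 1 := by simp
        obtain ⟨k1, k2, -⟩ := hK (Pi.single i 1) (Pi.single i 1) hs hs
        have k3 := hN (Pi.single i 1) (Pi.single i 1) hs hs
        simp only [mixedLineDeriv, multiIndexList_single, iterLineDeriv, HasLinePartialsOn,
          and_true] at k1 k2 k3
        have := axis_bound D hDc K (EuclideanSpace.single i (1:ℝ)) a t N ha hb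
          (fun x hx y hy => k1 x (hDU hx) y (hDU hy))
          (fun y hy x hx => k2 y (hDU hy) x (hDU hx))
          (fun x hx y hy => k3 x hx y hy)
        linarith
  have h0 : ∀ a ∈ D, ∫⁻ ω, ‖X ω a‖ₑ ∂P ≤ ENNReal.ofReal (Real.sqrt N) * M1 := by
    intro a ha
    obtain ⟨v, hv⟩ := hg1 a ha
    rw [← eLpNorm_one_eq_lintegral_enorm]
    refine gauss_eLpNorm_le P _ v hv 1 _ (Real.sqrt_nonneg N) ?_
    rw [Real.sq_sqrt hN0]
    refine le_trans (le_of_eq ?_) (hKN a ha)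
    simp only [hKdef, pow_two]
  have hfin := chain_expect P D X
    (hC1.mono fun ω h => h.continuousOn.mono hDU) hm F m (by positivity) B hB
    (fun n => (hF n).1) (fun n => (hF n).2.1) (fun n => (hF n).2.2) p hp hpB _ _ h0 hinc
  refine hfin.trans ?_
  rw [← ENNReal.ofReal_toReal hM, ← ENNReal.ofReal_toReal hM1, ← ENNReal.ofReal_natCast B]
  rw [← ENNReal.ofReal_mul (by positivity), ← ENNReal.ofReal_mul (by positivity),
    ← ENNReal.ofReal_mul (by positivity), ← ENNReal.ofReal_mul (by positivity),
    ← ENNReal.ofReal_mul (by positivity), ← ENNReal.ofReal_add (by positivity) (by positivity)]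
  apply ENNReal.ofReal_le_ofReal
  rw [ENNReal.toReal_ofReal ENNReal.toReal_nonneg, ENNReal.toReal_ofReal ENNReal.toReal_nonneg]
  nlinarith [Real.sqrt_nonneg N]
end

section
/- Let D ⊂ ℝ^m be a closed Euclidean ball, r ≥ 1 and k ≥ 1. There exists a constant C = C(D,r,k) > 0 such that for every centered Gaussian process X with values in ℝ^k, defined on an open neighborhood of D, with almost surely C^r sample paths and whose covariance function K_X has continuous partial derivatives of order ≤ r in each of the two variables, one has E[ max_{|α| ≤ r−1, 1 ≤ i ≤ k} sup_{x∈D} |∂^α X^i(x)| ] ≤ C · sqrt( max_{|α| ≤ r, |β| ≤ r} sup_{x,y∈D} |∂_x^α ∂_y^β K_X(x,y)| ) (the maximum on the right also running over the k×k entries of K_X). -/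
open MeasureTheory ProbabilityTheory Filter Topology

set_option linter.unusedSectionVars false

section GaussHilbert
variable {Ω : Type} [MeasurableSpace Ω] {P : Measure Ω} [IsProbabilityMeasure P]

/-- centered Gaussian element of L² -/
def GaussQ (P : Measure Ω) [IsProbabilityMeasure P] (F : Lp ℝ 2 P) : Prop :=
  P.map F = gaussianReal 0 (‖F‖₊ ^ 2)

lemma charFun_map_eq {f : Ω → ℝ} (hf : AEMeasurable f P) (t : ℝ) :
    charFun (P.map f) t = ∫ ω, Complex.exp (t * f ω * Complex.I) ∂P := by
  rw [charFun_apply_real, integral_map hf]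
  exact (by fun_prop : Measurable fun x : ℝ => Complex.exp (t * x * Complex.I)).aestronglyMeasurable

lemma tendsto_charFun_ae {ι : Type} {l : Filter ι} [l.IsCountablyGenerated]
    {F : ι → Ω → ℝ} {f : Ω → ℝ}
    (hF : ∀ n, AEMeasurable (F n) P) (hf : AEMeasurable f P)
    (h : ∀ᵐ ω ∂P, Tendsto (fun n => F n ω) l (𝓝 (f ω))) (t : ℝ) :
    Tendsto (fun n => charFun (P.map (F n)) t) l (𝓝 (charFun (P.map f) t)) := by
  simp_rw [charFun_map_eq (hF _), charFun_map_eq hf]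
  apply tendsto_integral_filter_of_dominated_convergence (fun _ => (1:ℝ))
  · refine Eventually.of_forall fun n => ?_
    have : Measurable fun x : ℝ => Complex.exp (t * x * Complex.I) := by fun_prop
    exact (this.comp_aemeasurable (hF n)).aestronglyMeasurable
  · refine Eventually.of_forall fun n => Eventually.of_forall fun ω => ?_
    have : (t * F n ω * Complex.I : ℂ) = ((t * F n ω : ℝ) : ℂ) * Complex.I := by push_cast; ring
    rw [this, Complex.norm_exp_ofReal_mul_I]
  · exact integrable_const _
  · filter_upwards [h] with ω hω
    have hc : Continuous fun x : ℝ => Complex.exp (t * x * Complex.I) := by fun_prop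
    exact (hc.tendsto _).comp hω

lemma GaussQ_closed : IsClosed {F : Lp ℝ 2 P | GaussQ P F} := by
  apply IsSeqClosed.isClosed
  intro F f hF hlim
  obtain ⟨φ, hφ, hae⟩ := (tendstoInMeasure_of_tendsto_Lp hlim).exists_seq_tendsto_ae
  have hm : ∀ F : Lp ℝ 2 P, AEMeasurable F P := fun F => (Lp.aestronglyMeasurable F).aemeasurable
  have : IsProbabilityMeasure (P.map f) := Measure.isProbabilityMeasure_map (hm f)
  show P.map f = _
  apply Measure.ext_of_charFun
  ext t
  have h1 := tendsto_charFun_ae (fun n => hm (F (φ n))) (hm f) hae t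
  have h2 : ∀ n, charFun (P.map (F (φ n))) t = charFun (gaussianReal 0 (‖F (φ n)‖₊ ^ 2)) t := by
    intro n
    have : P.map (F (φ n)) = _ := hF (φ n)
    rw [this]
  simp_rw [h2, charFun_gaussianReal] at h1
  rw [charFun_gaussianReal]
  refine tendsto_nhds_unique h1 ?_
  have h3 : Tendsto (fun n => ‖F (φ n)‖) atTop (𝓝 ‖f‖) :=
    (hlim.comp hφ.tendsto_atTop).norm
  have hc : Continuous fun x : ℝ => Complex.exp (t * (0:ℝ) * Complex.I - (x:ℂ)^2 * t ^ 2 / 2) := by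
    fun_prop
  simpa [Function.comp_def] using (hc.tendsto _).comp h3

lemma gauss_sub_limit (V : Submodule ℝ (Lp ℝ 2 P)) (hV : IsClosed (V : Set (Lp ℝ 2 P)))
    (hQ : ∀ F ∈ V, GaussQ P F) (F : ℕ → Lp ℝ 2 P) (hF : ∀ n, F n ∈ V) (g : Ω → ℝ)
    (h : ∀ᵐ ω ∂P, Tendsto (fun n => F n ω) atTop (𝓝 (g ω))) :
    ∃ G ∈ V, G =ᵐ[P] g ∧ Tendsto F atTop (𝓝 G) := by
  have hm : ∀ F : Lp ℝ 2 P, AEMeasurable F P := fun F => (Lp.aestronglyMeasurable F).aemeasurable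
  have hcau : CauchySeq F := by
    rw [cauchySeq_iff_tendsto, uniformity_eq_comap_nhds_zero, tendsto_comap_iff]
    rw [tendsto_zero_iff_norm_tendsto_zero]
    have hq : ∀ q : ℕ × ℕ, P.map (fun ω => F q.2 ω - F q.1 ω)
        = gaussianReal 0 (‖F q.2 - F q.1‖₊ ^ 2) := by
      intro q
      have h1 := hQ _ (V.sub_mem (hF q.2) (hF q.1))
      have : P.map (F q.2 - F q.1 : Lp ℝ 2 P) = _ := h1
      rw [← this]
      exact Measure.map_congr (Lp.coeFn_sub _ _).symm
    have h1 : ∀ᵐ ω ∂P, Tendsto (fun q : ℕ × ℕ => F q.2 ω - F q.1 ω) atTop (𝓝 0) := by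
      filter_upwards [h] with ω hω
      have a : Tendsto (fun q : ℕ × ℕ => F q.2 ω) atTop (𝓝 (g ω)) := by
        rw [← prod_atTop_atTop_eq]; exact hω.comp tendsto_snd
      have b : Tendsto (fun q : ℕ × ℕ => F q.1 ω) atTop (𝓝 (g ω)) := by
        rw [← prod_atTop_atTop_eq]; exact hω.comp tendsto_fst
      simpa using a.sub b
    have h2 := tendsto_charFun_ae (fun q : ℕ × ℕ => (hm (F q.2)).sub (hm (F q.1)))
      (f := fun _ => 0) (by fun_prop) h1 1
    have h2' : Tendsto (fun q : ℕ × ℕ => Real.exp (-(‖F q.2 - F q.1‖ ^ 2 / 2))) atTop (𝓝 1) := by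
      have h3 : ∀ q : ℕ × ℕ, charFun (P.map (F q.2 - F q.1 : Ω → ℝ)) 1 =
          ((Real.exp (-(‖F q.2 - F q.1‖ ^ 2 / 2)) : ℝ) : ℂ) := by
        intro q
        have := hq q
        change P.map (F q.2 - F q.1 : Ω → ℝ) = _ at this
        rw [this, charFun_gaussianReal]
        simp
      simp_rw [h3] at h2
      have := (Complex.continuous_re.tendsto _).comp h2
      simp only [Function.comp_def, Complex.ofReal_re] at this
      simpa [charFun_apply_real] using this
    have h4 := (Real.continuousAt_log (one_ne_zero)).tendsto.comp h2'
    simp only [Function.comp_def, Real.log_exp, Real.log_one] at h4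
    have h5 := (Real.continuous_sqrt.tendsto _).comp (h4.const_mul (-2))
    simp only [mul_zero, Real.sqrt_zero] at h5
    refine h5.congr fun q => ?_
    simp only [Function.comp]
    rw [show -2 * -(‖F q.2 - F q.1‖ ^ 2 / 2) = ‖F q.2 - F q.1‖ ^ 2 by ring, Real.sqrt_sq (norm_nonneg _)]
    rfl
  obtain ⟨G, hG⟩ := cauchySeq_tendsto_of_complete hcau
  refine ⟨G, hV.mem_of_tendsto hG (Eventually.of_forall hF), ?_, hG⟩
  obtain ⟨φ, hφ, hae⟩ := (tendstoInMeasure_of_tendsto_Lp hG).exists_seq_tendsto_ae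
  filter_upwards [h, hae] with ω h1 h2
  exact tendsto_nhds_unique h2 (h1.comp hφ.tendsto_atTop)

lemma gaussQ_moment (p : ℕ) : ∃ M : ℝ, 0 ≤ M ∧ ∀ (Ω : Type) (_ : MeasurableSpace Ω)
    (P : Measure Ω) (_ : IsProbabilityMeasure P) (F : Lp ℝ 2 P), GaussQ P F →
    ∫⁻ ω, ENNReal.ofReal (|F ω| ^ p) ∂P = ENNReal.ofReal (M * ‖F‖ ^ p) := by
  refine ⟨∫ x, |x| ^ p ∂(gaussianReal 0 1), integral_nonneg fun x => by positivity, ?_⟩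
  intro Ω _ P _ F hF
  have hIntg : Integrable (fun x : ℝ => |x| ^ p) (gaussianReal 0 1) := by
    have := (memLp_id_gaussianReal (μ := 0) (v := 1) p).integrable_norm_pow'
    simpa using this
  have hg : gaussianReal 0 (‖F‖₊ ^ 2) = (gaussianReal 0 1).map (fun x => ‖F‖ * x) := by
    rw [gaussianReal_map_const_mul]
    congr 1
    · simp
    · ext; simp
  have hmeas : Measurable fun x : ℝ => ENNReal.ofReal (|x| ^ p) := by fun_prop
  rw [← lintegral_map' (f := fun x : ℝ => ENNReal.ofReal (|x| ^ p)) hmeas.aemeasurable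
    (Lp.aestronglyMeasurable F).aemeasurable]
  have : P.map F = _ := hF
  rw [this, hg, lintegral_map hmeas (by fun_prop)]
  simp_rw [abs_mul, mul_pow, abs_norm]
  rw [← ofReal_integral_eq_lintegral_ofReal (hIntg.const_mul _)
    (Eventually.of_forall fun x => by positivity), integral_const_mul, mul_comm]

end GaussHilbert

section Iter
variable {E : Type} [NormedAddCommGroup E] [NormedSpace ℝ E]

lemma iter_congr {U : Set E} (hU : IsOpen U) (L : List E) {f g : E → ℝ} (h : Set.EqOn f g U) :
    Set.EqOn (iterLineDeriv L f) (iterLineDeriv L g) U := by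
  induction L generalizing f g with
  | nil => exact h
  | cons v vs ih =>
    apply ih
    intro x hx
    exact Filter.EventuallyEq.lineDeriv_eq (h.eventuallyEq_of_mem (hU.mem_nhds hx))

lemma iter_append (L : List E) (v : E) (f : E → ℝ) :
    iterLineDeriv (L ++ [v]) f = fun x => lineDeriv ℝ (iterLineDeriv L f) x v := by
  induction L generalizing f with
  | nil => rfl
  | cons w vs ih => exact ih _

lemma contDiffOn_lineDeriv {U : Set E} (hU : IsOpen U) {n : ℕ} {f : E → ℝ}
    (hf : ContDiffOn ℝ (n + 1 : ℕ) f U) (v : E) :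
    ContDiffOn ℝ n (fun x => lineDeriv ℝ f x v) U := by
  have h1 : ContDiffOn ℝ n (fderiv ℝ f) U := hf.fderiv_of_isOpen hU (by norm_cast)
  have h2 : ContDiffOn ℝ n (fun x => fderiv ℝ f x v) U := h1.clm_apply contDiffOn_const
  refine h2.congr fun x hx => ?_
  have : DifferentiableAt ℝ f x :=
    (hf.contDiffAt (hU.mem_nhds hx)).differentiableAt (by norm_cast)
  exact this.lineDeriv_eq_fderiv

lemma contDiffOn_iter {U : Set E} (hU : IsOpen U) (L : List E) {n : ℕ} {f : E → ℝ}
    (hf : ContDiffOn ℝ (n + L.length : ℕ) f U) : ContDiffOn ℝ n (iterLineDeriv L f) U := by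
  induction L generalizing f with
  | nil => exact hf
  | cons v vs ih => exact ih (contDiffOn_lineDeriv hU hf v)

lemma iter_perm {U : Set E} (hU : IsOpen U) {L L' : List E} (h : L.Perm L') {f : E → ℝ}
    (hf : ContDiffOn ℝ (L.length : ℕ) f U) :
    Set.EqOn (iterLineDeriv L f) (iterLineDeriv L' f) U := by
  induction h generalizing f with
  | nil => exact fun _ _ => rfl
  | cons v _ ih => exact ih (contDiffOn_lineDeriv hU hf v)
  | swap v w l =>
    apply iter_congr hU l
    intro x hx
    have hf2 : ContDiffOn ℝ 2 f U := hf.of_le (by simp; norm_cast; omega)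
    have hd : ∀ z ∈ U, DifferentiableAt ℝ f z := fun z hz =>
      (hf2.contDiffAt (hU.mem_nhds hz)).differentiableAt (by norm_num)
    have h1 : DifferentiableAt ℝ (fderiv ℝ f) x :=
      ((hf2.fderiv_of_isOpen (m := 1) hU (by norm_num)).contDiffAt
        (hU.mem_nhds hx)).differentiableAt (by norm_num)
    have key : ∀ a b : E, lineDeriv ℝ (fun z => lineDeriv ℝ f z a) x b
        = fderiv ℝ (fderiv ℝ f) x b a := by
      intro a b
      have e : (fun z => lineDeriv ℝ f z a) =ᶠ[𝓝 x] fun z => fderiv ℝ f z a := by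
        filter_upwards [hU.mem_nhds hx] with z hz
        exact (hd z hz).lineDeriv_eq_fderiv
      rw [e.lineDeriv_eq]
      have h2 : HasFDerivAt (fun z => fderiv ℝ f z a) ((fderiv ℝ (fderiv ℝ f) x).flip a) x := by
        have := h1.hasFDerivAt.clm_apply (hasFDerivAt_const a x)
        simpa using this
      rw [(h2.hasLineDerivAt b).lineDeriv]
      rfl
    show lineDeriv ℝ (fun z => lineDeriv ℝ f z w) x v = lineDeriv ℝ (fun z => lineDeriv ℝ f z v) x w
    rw [key, key]
    have := (hf2.contDiffAt (hU.mem_nhds hx)).isSymmSndFDerivAt (by simp)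
    exact this _ _
  | trans h1 _ ih1 ih2 =>
    exact (ih1 hf).trans (ih2 (by rwa [← h1.length_eq]))

lemma multiIndexList_length {m : ℕ} (α : Fin m → ℕ) :
    (multiIndexList α).length = ∑ l, α l := by
  simp [multiIndexList, List.length_flatMap]
  rw [← List.ofFn_eq_map, List.sum_ofFn]

lemma multiIndexList_perm {m : ℕ} (α : Fin m → ℕ) (l : Fin m) :
    (multiIndexList α ++ [EuclideanSpace.single l (1:ℝ)]).Perm
      (multiIndexList (α + Pi.single l 1)) := by
  have key : ∀ γ : Fin m → ℕ, ((multiIndexList γ : List _) : Multiset (EuclideanSpace ℝ (Fin m)))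
      = ∑ i, γ i • ({EuclideanSpace.single i (1:ℝ)} : Multiset (EuclideanSpace ℝ (Fin m))) := by
    intro γ
    have h : ∀ s : List (Fin m), (((s.flatMap fun i => List.replicate (γ i)
        (EuclideanSpace.single i (1 : ℝ))) : List _) : Multiset (EuclideanSpace ℝ (Fin m)))
      = (s.map fun i => γ i • ({EuclideanSpace.single i (1:ℝ)} : Multiset (EuclideanSpace ℝ (Fin m)))).sum := by
      intro s
      induction s with
      | nil => rfl
      | cons a s ih =>
        rw [List.flatMap_cons, ← Multiset.coe_add, ih, List.map_cons, List.sum_cons,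
          Multiset.nsmul_singleton, Multiset.coe_replicate]
    rw [multiIndexList, h, ← List.ofFn_eq_map, List.sum_ofFn]
  rw [← Multiset.coe_eq_coe, ← Multiset.coe_add, key, key]
  simp only [Pi.add_apply, add_smul, Finset.sum_add_distrib]
  congr 1
  rw [Finset.sum_eq_single l]
  · simp
  · intro b _ hb; simp [hb]
  · simp

end Iter

section Reps
variable {Ω : Type} [MeasurableSpace Ω] {P : Measure Ω} [IsProbabilityMeasure P]
variable {E : Type} [NormedAddCommGroup E] [NormedSpace ℝ E]

/-- the L²-valued map `y` represents the process `f` on `U` -/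
def GRep (V : Submodule ℝ (Lp ℝ 2 P)) (U : Set E) (y : E → Lp ℝ 2 P) (f : Ω → E → ℝ) : Prop :=
  ∀ x ∈ U, y x ∈ V ∧ y x =ᵐ[P] fun ω => f ω x

lemma GRep.deriv {V : Submodule ℝ (Lp ℝ 2 P)} (hV : IsClosed (V : Set (Lp ℝ 2 P)))
    (hQ : ∀ F ∈ V, GaussQ P F) {U : Set E} (hU : IsOpen U) {y : E → Lp ℝ 2 P} {f : Ω → E → ℝ}
    (hy : GRep V U y f) (v : E) (hd : ∀ᵐ ω ∂P, ∀ x ∈ U, LineDifferentiableAt ℝ (f ω) x v) :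
    ∃ y' : E → Lp ℝ 2 P, GRep V U y' (fun ω x => lineDeriv ℝ (f ω) x v) ∧
      ∀ x ∈ U, HasLineDerivAt ℝ y (y' x) x v := by
  have main : ∀ x ∈ U, ∃ G ∈ V, G =ᵐ[P] (fun ω => lineDeriv ℝ (f ω) x v) ∧
      HasLineDerivAt ℝ y G x v := by
    intro x hx
    have claim : ∀ t : ℕ → ℝ, Tendsto t atTop (𝓝[≠] 0) →
        ∃ G ∈ V, G =ᵐ[P] (fun ω => lineDeriv ℝ (f ω) x v) ∧
          Tendsto (fun n => (t n)⁻¹ • (y (x + t n • v) - y x)) atTop (𝓝 G) := by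
      intro t ht
      classical
      have hev : ∀ᶠ n in atTop, x + t n • v ∈ U := by
        have hc : Tendsto (fun s : ℝ => x + s • v) (𝓝 0) (𝓝 x) := by
          have : Continuous fun s : ℝ => x + s • v := by fun_prop
          simpa using this.tendsto 0
        exact (hc.comp (ht.mono_right nhdsWithin_le_nhds)) (hU.mem_nhds hx)
      let F : ℕ → Lp ℝ 2 P := fun n =>
        if x + t n • v ∈ U then (t n)⁻¹ • (y (x + t n • v) - y x) else 0
      have hF : ∀ n, F n ∈ V := by
        intro n
        simp only [F]
        split_ifs with h
        · exact V.smul_mem _ (V.sub_mem (hy _ h).1 (hy _ hx).1)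
        · exact V.zero_mem
      have hFe : ∀ n, x + t n • v ∈ U → ∀ᵐ ω ∂P, F n ω = (t n)⁻¹ • (f ω (x + t n • v) - f ω x) := by
        intro n h
        simp only [F, if_pos h]
        filter_upwards [Lp.coeFn_smul (t n)⁻¹ (y (x + t n • v) - y x),
          Lp.coeFn_sub (y (x + t n • v)) (y x), (hy _ h).2, (hy _ hx).2] with ω h1 h2 h3 h4
        rw [h1, Pi.smul_apply, h2, Pi.sub_apply, h3, h4]
      have hall : ∀ᵐ ω ∂P, ∀ n, x + t n • v ∈ U →
          F n ω = (t n)⁻¹ • (f ω (x + t n • v) - f ω x) := by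
        rw [ae_all_iff]; intro n
        by_cases h : x + t n • v ∈ U
        · filter_upwards [hFe n h] with ω hω _ using hω
        · exact Eventually.of_forall fun ω h' => absurd h' h
      obtain ⟨G, hGV, hG, hlim⟩ := gauss_sub_limit V hV hQ F hF
        (fun ω => lineDeriv ℝ (f ω) x v) (by
          filter_upwards [hall, hd] with ω h1 h2
          have h3 := (hasLineDerivAt_iff_tendsto_slope_zero.1 (h2 x hx).hasLineDerivAt).comp ht
          refine h3.congr' ?_
          filter_upwards [hev] with n hn
          rw [h1 n hn]; rfl)
      refine ⟨G, hGV, hG, hlim.congr' ?_⟩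
      filter_upwards [hev] with n hn
      simp only [F, if_pos hn]
    obtain ⟨t0, ht0⟩ := exists_seq_tendsto (𝓝[≠] (0:ℝ))
    obtain ⟨G, hGV, hG, -⟩ := claim t0 ht0
    refine ⟨G, hGV, hG, ?_⟩
    rw [hasLineDerivAt_iff_tendsto_slope_zero, tendsto_iff_seq_tendsto]
    intro t ht
    obtain ⟨G', -, hG', hl⟩ := claim t ht
    have : G = G' := Lp.ext (hG.trans hG'.symm)
    rw [this]
    exact hl
  classical
  choose! y' h using main
  exact ⟨y', fun x hx => ⟨(h x hx).1, (h x hx).2.1⟩, fun x hx => (h x hx).2.2⟩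

lemma GRep.iter {V : Submodule ℝ (Lp ℝ 2 P)} (hV : IsClosed (V : Set (Lp ℝ 2 P)))
    (hQ : ∀ F ∈ V, GaussQ P F) {U : Set E} (hU : IsOpen U) (L : List E)
    {y : E → Lp ℝ 2 P} {f : Ω → E → ℝ}
    (hy : GRep V U y f) (hd : ∀ᵐ ω ∂P, ContDiffOn ℝ (L.length : ℕ) (f ω) U) :
    ∃ y' : E → Lp ℝ 2 P, GRep V U y' (fun ω => iterLineDeriv L (f ω)) ∧
      ∀ z : Lp ℝ 2 P, ∀ x ∈ U, iterLineDeriv L (fun x => inner ℝ z (y x)) x = inner ℝ z (y' x) := by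
  induction L generalizing y f with
  | nil => exact ⟨y, hy, fun z x _ => rfl⟩
  | cons v vs ih =>
    obtain ⟨y1, h1, h2⟩ := hy.deriv hV hQ hU v (by
      filter_upwards [hd] with ω hω x hx
      exact ((hω.contDiffAt (hU.mem_nhds hx)).differentiableAt (by simp)).lineDifferentiableAt)
    obtain ⟨y', h3, h4⟩ := ih h1 (by
      filter_upwards [hd] with ω hω
      exact contDiffOn_lineDeriv hU hω v)
    refine ⟨y', h3, fun z x hx => ?_⟩
    rw [← h4 z x hx]
    apply iter_congr hU vs _ hx
    intro w hw
    have h5 : HasLineDerivAt ℝ (fun x => inner ℝ z (y x)) (inner ℝ z (y1 w)) w v := by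
      have := h2 w hw
      unfold HasLineDerivAt at this ⊢
      exact ((innerSL ℝ z).hasFDerivAt.comp_hasDerivAt (0:ℝ) this)
    exact h5.lineDeriv

lemma lip_of_lineDeriv {H : Type} [NormedAddCommGroup H] [NormedSpace ℝ H] {D : Set E}
    (hD : Convex ℝ D) {y : E → H} {c : ℝ}
    (h : ∀ v : E, ∀ x ∈ D, ∃ y', HasLineDerivAt ℝ y y' x v ∧ ‖y'‖ ≤ c * ‖v‖)
    {a b : E} (ha : a ∈ D) (hb : b ∈ D) : ‖y b - y a‖ ≤ c * ‖b - a‖ := by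
  choose! y' h1 h2 using h
  have hm : ∀ t ∈ Set.Icc (0:ℝ) 1, a + t • (b - a) ∈ D := by
    intro t ht
    exact hD.add_smul_sub_mem ha hb ht
  have := norm_image_sub_le_of_norm_deriv_le_segment_01' (f := fun t : ℝ => y (a + t • (b - a)))
    (f' := fun t => y' (b - a) (a + t • (b - a))) (C := c * ‖b - a‖)
    (fun t ht => by
      have h3 := h1 (b - a) _ (hm t ht)
      unfold HasLineDerivAt at h3
      have h4 : HasDerivAt (fun s : ℝ => y (a + t • (b - a) + s • (b - a)))
        (y' (b - a) (a + t • (b - a))) (t - t) := by simpa using h3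
      have h5 := h4.comp_sub_const t t
      refine (h5.congr_of_eventuallyEq (Eventually.of_forall fun s => ?_)).hasDerivWithinAt
      show y _ = y _
      congr 1
      module)
    (fun t ht => h2 (b - a) _ (hm t ⟨ht.1, ht.2.le⟩))
  simpa using this

end Reps

section Chain

lemma exists_net {m : ℕ} (x₀ : EuclideanSpace ℝ (Fin m)) (R : ℝ) (hR : 0 ≤ R) :
    ∃ A : ℕ, ∀ n : ℕ, ∃ T : Finset (EuclideanSpace ℝ (Fin m)),
      (∀ z ∈ T, z ∈ Metric.closedBall x₀ R) ∧ T.card ≤ A * 4 ^ (n * m) ∧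
      ∀ x ∈ Metric.closedBall x₀ R, ∃ z ∈ T, dist x z ≤ m * (1 / 4 : ℝ) ^ n := by
  classical
  obtain ⟨K, hK⟩ := exists_nat_ge R
  refine ⟨(2 * K + 1) ^ m, fun n => ?_⟩
  let D := Metric.closedBall x₀ R
  let c : EuclideanSpace ℝ (Fin m) → Fin m → ℤ := fun x l => ⌊(4:ℝ) ^ n * (x l - x₀ l)⌋
  let box : Finset (Fin m → ℤ) :=
    Fintype.piFinset fun _ => Finset.Icc (-((K : ℤ) * 4 ^ n)) (K * 4 ^ n)
  let z : (Fin m → ℤ) → EuclideanSpace ℝ (Fin m) := fun a =>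
    if h : ∃ x ∈ D, c x = a then h.choose else x₀
  have hz : ∀ x ∈ D, z (c x) ∈ D ∧ c (z (c x)) = c x := by
    intro x hx
    have h : ∃ x' ∈ D, c x' = c x := ⟨x, hx, rfl⟩
    simp only [z, dif_pos h]
    exact h.choose_spec
  have hzD : ∀ a, z a ∈ D := by
    intro a
    by_cases h : ∃ x ∈ D, c x = a
    · simp only [z, dif_pos h]; exact h.choose_spec.1
    · simp only [z, dif_neg h]; exact Metric.mem_closedBall_self hR
  have hbox : ∀ x ∈ D, c x ∈ box := by
    intro x hx
    simp only [box, Fintype.mem_piFinset, Finset.mem_Icc]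
    intro l
    have h1 : |x l - x₀ l| ≤ K := by
      have := PiLp.norm_apply_le (x - x₀) l
      have h2 : ‖x - x₀‖ ≤ R := by simpa [D, dist_eq_norm] using hx
      simp only [PiLp.sub_apply, Real.norm_eq_abs] at this
      linarith
    have h4 : (0:ℝ) < 4 ^ n := by positivity
    have h3 := abs_le.1 h1
    constructor
    · rw [Int.le_floor]; push_cast; nlinarith
    · have : (⌊(4:ℝ) ^ n * (x l - x₀ l)⌋ : ℝ) ≤ K * 4 ^ n :=
        (Int.floor_le _).trans (by nlinarith)
      show (⌊(4:ℝ) ^ n * (x l - x₀ l)⌋ : ℤ) ≤ K * 4 ^ n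
      exact_mod_cast this
  refine ⟨box.image z, ?_, ?_, ?_⟩
  · intro y hy
    obtain ⟨a, -, rfl⟩ := Finset.mem_image.1 hy
    exact hzD a
  · refine Finset.card_image_le.trans ?_
    simp only [box, Fintype.card_piFinset, Int.card_Icc, Finset.prod_const, Finset.card_univ,
      Fintype.card_fin]
    rw [pow_mul, ← mul_pow]
    apply Nat.pow_le_pow_left
    have : (K * 4 ^ n + 1 - -((K:ℤ) * 4 ^ n)).toNat = 2 * K * 4 ^ n + 1 := by
      rw [show (K * 4 ^ n + 1 - -((K:ℤ) * 4 ^ n)) = ((2 * K * 4 ^ n + 1 : ℕ) : ℤ) by push_cast; ring]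
      rfl
    rw [this]
    have : 1 ≤ 4 ^ n := Nat.one_le_pow _ _ (by norm_num)
    nlinarith
  · intro x hx
    refine ⟨z (c x), Finset.mem_image_of_mem _ (hbox x hx), ?_⟩
    have h4 : (0:ℝ) < 4 ^ n := by positivity
    have hl : ∀ l, dist (x l) (z (c x) l) ≤ (1/4:ℝ)^n := by
      intro l
      have h1 : c (z (c x)) l = c x l := congrFun (hz x hx).2 l
      have h2 := Int.abs_sub_lt_one_of_floor_eq_floor h1
      rw [Real.dist_eq, abs_sub_comm]
      rw [show (4:ℝ) ^ n * (z (c x) l - x₀ l) - 4 ^ n * (x l - x₀ l)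
        = 4 ^ n * (z (c x) l - x l) by ring, abs_mul, abs_of_pos h4] at h2
      rw [one_div_pow, le_div_iff₀ h4, mul_comm]
      exact h2.le
    rw [EuclideanSpace.dist_eq]
    apply Real.sqrt_le_iff.2 ⟨by positivity, ?_⟩
    calc ∑ l, dist (x l) (z (c x) l) ^ 2 ≤ ∑ l : Fin m, ((1/4:ℝ)^n) ^ 2 :=
          Finset.sum_le_sum fun l _ => pow_le_pow_left₀ dist_nonneg (hl l) 2
      _ = m * ((1/4:ℝ)^n) ^ 2 := by simp
      _ ≤ (m * (1/4:ℝ)^n) ^ 2 := by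
        rw [mul_pow]
        apply mul_le_mul_of_nonneg_right _ (by positivity)
        exact_mod_cast Nat.le_self_pow two_ne_zero m

lemma abs_le_trick {d δ : ℝ} (hδ : 0 < δ) (q : ℕ) : |d| ≤ δ + |d| ^ (q + 1) * (δ ^ q)⁻¹ := by
  by_cases h : |d| ≤ δ
  · have : 0 ≤ |d| ^ (q + 1) * (δ ^ q)⁻¹ := by positivity
    linarith
  · push Not at h
    have h1 : δ ^ q ≤ |d| ^ q := pow_le_pow_left₀ hδ.le h.le q
    have h2 : 1 ≤ |d| ^ q * (δ ^ q)⁻¹ := by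
      rw [← div_eq_mul_inv, one_le_div (by positivity)]; exact h1
    have h3 : |d| ^ (q + 1) * (δ ^ q)⁻¹ = |d| * (|d| ^ q * (δ ^ q)⁻¹) := by ring
    rw [h3]
    nlinarith [abs_nonneg d]

lemma chain_alg (A M s c u : ℝ) (m : ℕ) (hs : 0 < s) (hu : 0 < u) :
    A * (4 ^ m * u ^ (2 * m)) * (A * u ^ (2 * m)) *
      (M * (s * (2 * c * (1 / u ^ 2))) ^ (4 * m + 2) * ((s / u) ^ (4 * m + 1))⁻¹)
    = (A ^ 2 * 4 ^ m * M * (2 * c) ^ (4 * m + 2)) * s * (1 / u ^ 3) := by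
  have h1 : s * (2 * c * (1 / u ^ 2)) = (s / u) * (2 * c / u) := by field_simp
  have h2 : (s / u) ^ (4 * m + 2) * ((s / u) ^ (4 * m + 1))⁻¹ = s / u := by
    have : (s / u) ^ (4 * m + 1) ≠ 0 := by positivity
    rw [pow_succ (s / u) (4 * m + 1)]
    field_simp
  have h3 : (2 * c / u) ^ (4 * m + 2) = (2 * c) ^ (4 * m + 2) / (u ^ (2 * m) * u ^ (2 * m) * u ^ 2) := by
    rw [div_pow]; congr 1; ring
  rw [h1, mul_pow, h3]
  calc _ = A * 4 ^ m * A * M * (u ^ (2 * m) * u ^ (2 * m)) * ((2 * c) ^ (4 * m + 2) /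
        (u ^ (2 * m) * u ^ (2 * m) * u ^ 2)) *
        ((s / u) ^ (4 * m + 2) * ((s / u) ^ (4 * m + 1))⁻¹) := by ring
    _ = _ := by
      rw [h2]
      generalize (2 * c) ^ (4 * m + 2) = w
      have : u ^ (2 * m) ≠ 0 := by positivity
      generalize u ^ (2 * m) = z at this
      generalize (4:ℝ) ^ m = y
      field_simp

set_option maxHeartbeats 1000000 in
lemma chain_bound {m : ℕ} (x₀ : EuclideanSpace ℝ (Fin m)) (R : ℝ) (hR : 0 ≤ R) (M : ℝ)
    (hM : 0 ≤ M) :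
    ∃ C : ℝ, 0 < C ∧ ∀ (Ω : Type) (_ : MeasurableSpace Ω) (P : Measure Ω)
      (_ : IsProbabilityMeasure P) (Z : Ω → EuclideanSpace ℝ (Fin m) → ℝ) (s : ℝ), 0 < s →
      (∀ x ∈ Metric.closedBall x₀ R, AEMeasurable (fun ω => Z ω x) P) →
      (∀ᵐ ω ∂P, ContinuousOn (Z ω) (Metric.closedBall x₀ R)) →
      (∀ x ∈ Metric.closedBall x₀ R, ∫⁻ ω, ENNReal.ofReal |Z ω x| ∂P ≤ ENNReal.ofReal s) →
      (∀ x ∈ Metric.closedBall x₀ R, ∀ y ∈ Metric.closedBall x₀ R,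
        ∫⁻ ω, ENNReal.ofReal (|Z ω x - Z ω y| ^ (4 * m + 2)) ∂P
          ≤ ENNReal.ofReal (M * (s * dist x y) ^ (4 * m + 2))) →
      ∃ B : Ω → ENNReal, AEMeasurable B P ∧ ∫⁻ ω, B ω ∂P ≤ ENNReal.ofReal (C * s) ∧
        ∀ᵐ ω ∂P, ∀ x ∈ Metric.closedBall x₀ R, ENNReal.ofReal |Z ω x| ≤ B ω := by
  classical
  obtain ⟨A, hA⟩ := exists_net x₀ R hR
  choose T hTD hTc hTn using hA
  set C1 : ℝ := 1 + A ^ 2 * 4 ^ m * M * (2 * m) ^ (4 * m + 2) with hC1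
  have hC1pos : 0 < C1 := by positivity
  refine ⟨A + 2 * C1, by positivity, ?_⟩
  intro Ω _ P _ Z s hs hmeas hcont h1 h2
  set D := Metric.closedBall x₀ R with hD
  let Q : ℕ → Finset (EuclideanSpace ℝ (Fin m) × EuclideanSpace ℝ (Fin m)) := fun n =>
    ((T (n+1)) ×ˢ (T n)).filter fun q => dist q.1 q.2 ≤ 2 * m * (1/4:ℝ)^n
  have hQ : ∀ n, ∀ q ∈ Q n, q.1 ∈ D ∧ q.2 ∈ D ∧ dist q.1 q.2 ≤ 2 * m * (1/4:ℝ)^n := by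
    intro n q hq
    simp only [Q, Finset.mem_filter, Finset.mem_product] at hq
    exact ⟨hTD _ _ hq.1.1, hTD _ _ hq.1.2, hq.2⟩
  let δ : ℕ → ℝ := fun n => s / 2 ^ n
  have hδ : ∀ n, 0 < δ n := fun n => by positivity
  let G : ℕ → Ω → ENNReal := fun n ω => ENNReal.ofReal (δ n) +
    ∑ q ∈ Q n, ENNReal.ofReal (|Z ω q.1 - Z ω q.2| ^ (4 * m + 2)) *
      ENNReal.ofReal ((δ n ^ (4 * m + 1))⁻¹)
  have hpm : ∀ n, ∀ q ∈ Q n,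
      AEMeasurable (fun ω => ENNReal.ofReal (|Z ω q.1 - Z ω q.2| ^ (4 * m + 2))) P := by
    intro n q hq
    have := (hmeas _ (hQ n q hq).1).sub (hmeas _ (hQ n q hq).2.1)
    have hc : Measurable fun x : ℝ => ENNReal.ofReal (|x| ^ (4 * m + 2)) := by fun_prop
    exact hc.comp_aemeasurable this
  have hGm : ∀ n, AEMeasurable (G n) P := by
    intro n
    refine AEMeasurable.add (aemeasurable_const (b := ENNReal.ofReal (δ n))) ?_
    exact Finset.aemeasurable_fun_sum _ fun q hq => (hpm n q hq).mul_const _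
  have hGi : ∀ n, ∫⁻ ω, G n ω ∂P ≤ ENNReal.ofReal (C1 * s * (1/2)^n) := by
    intro n
    have e1 : ∫⁻ ω, G n ω ∂P = ENNReal.ofReal (δ n) + ∑ q ∈ Q n,
        (∫⁻ ω, ENNReal.ofReal (|Z ω q.1 - Z ω q.2| ^ (4 * m + 2)) ∂P) *
          ENNReal.ofReal ((δ n ^ (4 * m + 1))⁻¹) := by
      simp only [G]
      rw [lintegral_add_left' (aemeasurable_const (b := ENNReal.ofReal (δ n))), lintegral_finsetSum' _
        fun q hq => (hpm n q hq).mul_const _]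
      simp only [lintegral_const, measure_univ, mul_one]
      congr 1
      refine Finset.sum_congr rfl fun q hq => ?_
      rw [lintegral_mul_const'' _ (hpm n q hq)]
    rw [e1]
    set t : ℝ := M * (s * (2 * m * (1/4:ℝ)^n)) ^ (4 * m + 2) * (δ n ^ (4 * m + 1))⁻¹ with ht
    have ht0 : 0 ≤ t := by have := hδ n; positivity
    have e2 : ∑ q ∈ Q n,
        (∫⁻ ω, ENNReal.ofReal (|Z ω q.1 - Z ω q.2| ^ (4 * m + 2)) ∂P) *
          ENNReal.ofReal ((δ n ^ (4 * m + 1))⁻¹) ≤ ∑ q ∈ Q n, ENNReal.ofReal t := by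
      refine Finset.sum_le_sum fun q hq => ?_
      rw [ht, ENNReal.ofReal_mul (by positivity)]
      refine mul_le_mul_left ((h2 _ (hQ n q hq).1 _ (hQ n q hq).2.1).trans ?_) _
      apply ENNReal.ofReal_le_ofReal
      have := (hQ n q hq).2.2
      gcongr
    refine (add_le_add_right e2 _).trans ?_
    rw [Finset.sum_const, nsmul_eq_mul, ← ENNReal.ofReal_natCast, ← ENNReal.ofReal_mul (by positivity),
      ← ENNReal.ofReal_add (hδ n).le (by positivity)]
    apply ENNReal.ofReal_le_ofReal
    have hcard : ((Q n).card : ℝ) ≤ (A * 4 ^ ((n+1) * m)) * (A * 4 ^ (n * m)) := by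
      have : (Q n).card ≤ (A * 4 ^ ((n+1) * m)) * (A * 4 ^ (n * m)) := by
        refine (Finset.card_filter_le _ _).trans ?_
        rw [Finset.card_product]
        exact Nat.mul_le_mul (hTc _) (hTc _)
      exact_mod_cast this
    set u : ℝ := 2 ^ n with hu
    have hu1 : 1 ≤ u := one_le_pow₀ (by norm_num)
    have hu0 : 0 < u := by positivity
    have f1 : (4:ℝ) ^ (n * m) = u ^ (2 * m) := by
      rw [hu, show (4:ℝ) = 2 ^ 2 by norm_num, ← pow_mul, ← pow_mul]; congr 1; ring
    have f2 : (1/4:ℝ)^n = 1 / u ^ 2 := by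
      rw [hu, ← pow_mul, mul_comm n 2, pow_mul, one_div_pow]; norm_num
    have f3 : (1/2:ℝ)^n = 1 / u := by rw [hu, one_div_pow]
    have f4 : (4:ℝ) ^ ((n+1) * m) = 4 ^ m * u ^ (2 * m) := by
      rw [add_mul, one_mul, pow_add, f1, mul_comm]
    have step : (Q n).card * t ≤ (A ^ 2 * 4 ^ m * M * (2 * m) ^ (4 * m + 2)) * s * (1 / u ^ 3) := by
      refine (mul_le_mul_of_nonneg_right hcard ht0).trans (le_of_eq ?_)
      rw [ht, f1, f2, f4]
      simp only [δ]
      rw [← hu]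
      exact chain_alg A M s m u m hs hu0
    have hle : 1 / u ^ 3 ≤ 1 / u := by
      apply one_div_le_one_div_of_le hu0
      calc u = u ^ 1 := (pow_one u).symm
        _ ≤ u ^ 3 := pow_le_pow_right₀ hu1 (by norm_num)
    have step2 := mul_le_mul_of_nonneg_left hle
      (show 0 ≤ (A ^ 2 * 4 ^ m * M * (2 * m) ^ (4 * m + 2)) * s by positivity)
    rw [f3, hC1]
    simp only [δ]
    rw [← hu]
    have e3 : s / u = s * (1 / u) := by ring
    rw [e3, add_mul, add_mul, one_mul]
    exact add_le_add le_rfl (step.trans step2)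
  let B : Ω → ENNReal := fun ω => ∑ z ∈ T 0, ENNReal.ofReal |Z ω z| + ∑' n, G n ω
  have hbm : ∀ z ∈ T 0, AEMeasurable (fun ω => ENNReal.ofReal |Z ω z|) P := by
    intro z hz
    have hc : Measurable fun x : ℝ => ENNReal.ofReal |x| := by fun_prop
    exact hc.comp_aemeasurable (hmeas _ (hTD 0 z hz))
  refine ⟨B, ?_, ?_, ?_⟩
  · exact (Finset.aemeasurable_fun_sum _ hbm).add (AEMeasurable.tsum hGm)
  · simp only [B]
    rw [lintegral_add_left' (Finset.aemeasurable_fun_sum _ hbm), lintegral_tsum hGm,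
      lintegral_finsetSum' _ hbm, add_mul, ENNReal.ofReal_add (by positivity) (by positivity)]
    apply add_le_add
    · refine (Finset.sum_le_sum fun z hz => h1 z (hTD 0 z hz)).trans ?_
      rw [Finset.sum_const, nsmul_eq_mul, ← ENNReal.ofReal_natCast,
        ← ENNReal.ofReal_mul (by positivity)]
      apply ENNReal.ofReal_le_ofReal
      apply mul_le_mul_of_nonneg_right _ hs.le
      have := hTc 0
      simp only [zero_mul, pow_zero, mul_one] at this
      exact_mod_cast this
    · refine (ENNReal.tsum_le_tsum hGi).trans ?_
      rw [← ENNReal.ofReal_tsum_of_nonneg (fun n => by positivity)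
        (summable_geometric_two.mul_left _), tsum_mul_left, tsum_geometric_two]
      apply ENNReal.ofReal_le_ofReal
      linarith
  · filter_upwards [hcont] with ω hω x hx
    choose π hπT hπd using fun n => hTn n x hx
    have hstep : ∀ n, ENNReal.ofReal |Z ω (π n)| ≤
        ∑ z ∈ T 0, ENNReal.ofReal |Z ω z| + ∑ j ∈ Finset.range n, G j ω := by
      intro n
      induction n with
      | zero =>
        simp only [Finset.range_zero, Finset.sum_empty, add_zero]
        exact Finset.single_le_sum (f := fun z => ENNReal.ofReal |Z ω z|)
          (fun _ _ => zero_le) (hπT 0)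
      | succ n ih =>
        rw [Finset.sum_range_succ, ← add_assoc]
        have hq : (π (n+1), π n) ∈ Q n := by
          simp only [Q, Finset.mem_filter, Finset.mem_product]
          refine ⟨⟨hπT _, hπT _⟩, ?_⟩
          have a := hπd (n+1)
          have b := hπd n
          have c := dist_triangle_left (π (n+1)) (π n) x
          have d : (m:ℝ) * (1/4)^(n+1) ≤ m * (1/4)^n := by
            apply mul_le_mul_of_nonneg_left _ (by positivity)
            exact pow_le_pow_of_le_one (by norm_num) (by norm_num) (Nat.le_succ n)
          linarith
        have hinc : ENNReal.ofReal |Z ω (π (n+1)) - Z ω (π n)| ≤ G n ω := by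
          have tr := abs_le_trick (d := Z ω (π (n+1)) - Z ω (π n)) (hδ n) (4 * m + 1)
          have hp : 0 ≤ (δ n ^ (4 * m + 1))⁻¹ := (inv_pos.2 (pow_pos (hδ n) _)).le
          have hp2 : 0 ≤ |Z ω (π (n+1)) - Z ω (π n)| ^ (4 * m + 1 + 1) :=
            pow_nonneg (abs_nonneg _) _
          refine (ENNReal.ofReal_le_ofReal tr).trans ?_
          rw [ENNReal.ofReal_add (hδ n).le (mul_nonneg hp2 hp), ENNReal.ofReal_mul hp2]
          refine add_le_add le_rfl ?_
          exact Finset.single_le_sum (f := fun q : EuclideanSpace ℝ (Fin m) × EuclideanSpace ℝ (Fin m) =>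
            ENNReal.ofReal (|Z ω q.1 - Z ω q.2| ^ (4 * m + 2)) *
              ENNReal.ofReal ((δ n ^ (4 * m + 1))⁻¹)) (fun _ _ => zero_le) hq
        calc ENNReal.ofReal |Z ω (π (n+1))|
            ≤ ENNReal.ofReal (|Z ω (π n)| + |Z ω (π (n+1)) - Z ω (π n)|) := by
              apply ENNReal.ofReal_le_ofReal
              have := abs_add_le (Z ω (π n)) (Z ω (π (n+1)) - Z ω (π n))
              simpa using this
          _ = ENNReal.ofReal |Z ω (π n)| + ENNReal.ofReal |Z ω (π (n+1)) - Z ω (π n)| :=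
              ENNReal.ofReal_add (abs_nonneg _) (abs_nonneg _)
          _ ≤ _ := add_le_add ih hinc
    have hπx : Tendsto π atTop (𝓝[D] x) := by
      apply tendsto_nhdsWithin_of_tendsto_nhds_of_eventually_within
      · rw [tendsto_iff_dist_tendsto_zero]
        refine squeeze_zero (g := fun n => (m:ℝ) * (1/4)^n) (fun _ => dist_nonneg)
          (fun n => by rw [dist_comm]; exact hπd n) ?_
        have := (tendsto_pow_atTop_nhds_zero_of_lt_one (r := (1/4:ℝ)) (by norm_num)
          (by norm_num)).const_mul (m:ℝ)
        simpa using this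
      · exact Eventually.of_forall fun n => hTD n _ (hπT n)
    have hlim : Tendsto (fun n => ENNReal.ofReal |Z ω (π n)|) atTop
        (𝓝 (ENNReal.ofReal |Z ω x|)) := by
      have := ((hω x hx).tendsto.comp hπx).abs
      exact ENNReal.tendsto_ofReal this
    refine le_of_tendsto' hlim fun n => (hstep n).trans ?_
    exact add_le_add_right (ENNReal.sum_le_tsum _) _

end Chain

section Final

lemma GaussQ_of_map {Ω : Type} [MeasurableSpace Ω] {P : Measure Ω} [IsProbabilityMeasure P]
    (F : Lp ℝ 2 P) (v : NNReal) (h : P.map F = gaussianReal 0 v) : GaussQ P F := by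
  have hm : AEMeasurable F P := (Lp.aestronglyMeasurable F).aemeasurable
  have h1 : ‖F‖ ^ 2 = v := by
    rw [← real_inner_self_eq_norm_sq, L2.inner_def]
    have e : ∀ ω, inner ℝ (F ω) (F ω) = (F ω) ^ 2 := by
      intro ω; simp [sq]
    simp_rw [e]
    rw [← integral_map (f := fun x : ℝ => x ^ 2) hm
      (by fun_prop : Measurable fun x : ℝ => x ^ 2).aestronglyMeasurable, h]
    have := variance_fun_id_gaussianReal (μ := 0) (v := v)
    rw [variance_eq_integral (by fun_prop)] at this
    simpa using this
  have h2 : v = ‖F‖₊ ^ 2 := by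
    ext; simp [h1]
  unfold GaussQ
  rw [h, h2]

lemma gauss_setup {m k : ℕ} {Ω : Type} [MeasurableSpace Ω] {P : Measure Ω} [IsProbabilityMeasure P]
    {U : Set (EuclideanSpace ℝ (Fin m))}
    {X : Ω → EuclideanSpace ℝ (Fin m) → Fin k → ℝ}
    (hG : ∀ (j : ℕ) (p : Fin j → EuclideanSpace ℝ (Fin m)), (∀ i, p i ∈ U) →
          ∀ c : Fin j → Fin k → ℝ, ∃ v : NNReal,
            P.map (fun ω => ∑ i, ∑ l, c i l * X ω (p i) l) = gaussianReal 0 v) :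
    ∃ V : Submodule ℝ (Lp ℝ 2 P), IsClosed (V : Set (Lp ℝ 2 P)) ∧ (∀ F ∈ V, GaussQ P F) ∧
      ∃ y : Fin k → EuclideanSpace ℝ (Fin m) → Lp ℝ 2 P,
        ∀ i, GRep V U (y i) (fun ω t => X ω t i) := by
  classical
  have hmem : ∀ i, ∀ x ∈ U, MemLp (fun ω => X ω x i) 2 P := by
    intro i x hx
    obtain ⟨v, hv⟩ := hG 1 (fun _ => x) (fun _ => hx) (fun _ l => if l = i then 1 else 0)
    simp at hv
    have hm : AEMeasurable (fun ω => X ω x i) P := by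
      by_contra hcon
      rw [Measure.map_of_not_aemeasurable hcon] at hv
      exact (IsProbabilityMeasure.ne_zero (gaussianReal 0 v)) hv.symm
    have := memLp_id_gaussianReal (μ := 0) (v := v) 2
    rw [← hv] at this
    exact (memLp_map_measure_iff (by fun_prop) hm).1 this
  let y : Fin k → EuclideanSpace ℝ (Fin m) → Lp ℝ 2 P := fun i x =>
    if h : x ∈ U then (hmem i x h).toLp else 0
  have hy : ∀ i, ∀ x ∈ U, y i x =ᵐ[P] fun ω => X ω x i := by
    intro i x hx
    simp only [y, dif_pos hx]
    exact MemLp.coeFn_toLp _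
  let S : Set (Lp ℝ 2 P) := {F | ∃ i, ∃ x ∈ U, F = y i x}
  have hspan : ∀ F ∈ Submodule.span ℝ S, GaussQ P F := by
    intro F hF
    obtain ⟨n, f, g, rfl⟩ := Submodule.mem_span_set'.1 hF
    choose l p hp hg using fun a => (g a).2
    obtain ⟨v, hv⟩ := hG n p hp (fun a j => if j = l a then f a else 0)
    apply GaussQ_of_map _ v
    rw [← hv]
    apply Measure.map_congr
    have h1 : ∀ᵐ ω ∂P, ∀ a, (f a • (g a : Lp ℝ 2 P) : Lp ℝ 2 P) ω = f a * X ω (p a) (l a) := by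
      rw [ae_all_iff]
      intro a
      rw [hg a]
      filter_upwards [Lp.coeFn_smul (f a) (y (l a) (p a)), hy (l a) (p a) (hp a)] with ω h1 h2
      rw [h1, Pi.smul_apply, h2, smul_eq_mul]
    filter_upwards [h1, Lp.coeFn_finsetSum Finset.univ (fun a => f a • (g a : Lp ℝ 2 P))] with ω h1 h2
    rw [h2]
    simp [h1]
  refine ⟨(Submodule.span ℝ S).topologicalClosure, Submodule.isClosed_topologicalClosure _, ?_,
    y, ?_⟩
  · intro F hF
    exact closure_minimal hspan GaussQ_closed hF
  · intro i x hx
    exact ⟨Submodule.le_topologicalClosure _ (Submodule.subset_span ⟨i, x, hx, rfl⟩), hy i x hx⟩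

/-- L² bounds for the derivatives of the process. -/
lemma deriv_bounds {m r k : ℕ} {Ω : Type} [MeasurableSpace Ω] {P : Measure Ω}
    [IsProbabilityMeasure P]
    {U D : Set (EuclideanSpace ℝ (Fin m))} (hU : IsOpen U) (hDU : D ⊆ U) (hD : Convex ℝ D)
    {X : Ω → EuclideanSpace ℝ (Fin m) → Fin k → ℝ}
    (hC : ∀ᵐ ω ∂P, ContDiffOn ℝ r (X ω) U)
    {V : Submodule ℝ (Lp ℝ 2 P)} (hV : IsClosed (V : Set (Lp ℝ 2 P))) (hQ : ∀ F ∈ V, GaussQ P F)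
    {i : Fin k} {y : EuclideanSpace ℝ (Fin m) → Lp ℝ 2 P} (hy : GRep V U y (fun ω t => X ω t i))
    {N : ℝ} (hN : ∀ (α β : Fin m → ℕ), (∑ l, α l) ≤ r → (∑ l, β l) ≤ r →
            ∀ x ∈ D, ∀ y ∈ D,
              |mixedLineDeriv α β (fun a b => ∫ ω, X ω a i * X ω b i ∂P) x y| ≤ N)
    (α : Fin m → ℕ) (hα : (∑ l, α l) + 1 ≤ r) :
    ∃ z : EuclideanSpace ℝ (Fin m) → Lp ℝ 2 P,
      GRep V U z (fun ω => iterLineDeriv (multiIndexList α) (fun t => X ω t i)) ∧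
      (∀ x ∈ D, ‖z x‖ ≤ √N) ∧ ∀ a ∈ D, ∀ b ∈ D, ‖z b - z a‖ ≤ m * √N * ‖b - a‖ := by
  have hCi : ∀ᵐ ω ∂P, ContDiffOn ℝ r (fun t => X ω t i) U := by
    filter_upwards [hC] with ω hω
    exact contDiffOn_pi.1 hω i
  have hiter : ∀ γ : Fin m → ℕ, (∑ l, γ l) ≤ r → ∃ z : EuclideanSpace ℝ (Fin m) → Lp ℝ 2 P,
      GRep V U z (fun ω => iterLineDeriv (multiIndexList γ) (fun t => X ω t i)) ∧
      ∀ x ∈ D, ‖z x‖ ≤ √N := by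
    intro γ hγ
    obtain ⟨z, hz, hz2⟩ := hy.iter hV hQ hU (multiIndexList γ) (by
      filter_upwards [hCi] with ω hω
      refine hω.of_le ?_
      rw [multiIndexList_length]
      exact_mod_cast hγ)
    refine ⟨z, hz, fun x hx => ?_⟩
    have hK : ∀ a ∈ U, ∀ b ∈ U, ∫ ω, X ω a i * X ω b i ∂P = inner ℝ (y a) (y b) := by
      intro a ha b hb
      rw [L2.inner_def]
      apply integral_congr_ae
      filter_upwards [(hy a ha).2, (hy b hb).2] with ω h1 h2
      rw [h1, h2]
      simp [mul_comm]
    have e : mixedLineDeriv γ γ (fun a b => ∫ ω, X ω a i * X ω b i ∂P) x x = ‖z x‖ ^ 2 := by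
      unfold mixedLineDeriv
      have e1 : Set.EqOn (fun x' => iterLineDeriv (multiIndexList γ)
          (fun b => ∫ ω, X ω x' i * X ω b i ∂P) x) (fun x' => inner ℝ (z x) (y x')) U := by
        intro x' hx'
        have e2 : Set.EqOn (fun b => ∫ ω, X ω x' i * X ω b i ∂P)
          (fun b => inner ℝ (y x') (y b)) U := fun b hb => hK x' hx' b hb
        show iterLineDeriv _ _ x = _
        rw [iter_congr hU _ e2 (hDU hx), hz2 _ _ (hDU hx), real_inner_comm]
      rw [iter_congr hU _ e1 (hDU hx), hz2 _ _ (hDU hx), real_inner_self_eq_norm_sq]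
    have h3 := hN γ γ hγ hγ x hx x hx
    rw [e] at h3
    exact Real.le_sqrt_of_sq_le ((le_abs_self _).trans h3)
  obtain ⟨z, hz, hzN⟩ := hiter α (by omega)
  refine ⟨z, hz, hzN, ?_⟩
  have hsum : ∀ l : Fin m, ∑ j, (α + Pi.single l 1 : Fin m → ℕ) j ≤ r := by
    intro l
    simp only [Pi.add_apply, Finset.sum_add_distrib]
    simpa using hα
  choose w hw hwN using fun l => hiter (α + Pi.single l 1) (hsum l)
  have hY : ∀ᵐ ω ∂P, ContDiffOn ℝ (1:ℕ)
      (iterLineDeriv (multiIndexList α) (fun t => X ω t i)) U := by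
    filter_upwards [hCi] with ω hω
    apply contDiffOn_iter hU
    refine hω.of_le ?_
    rw [multiIndexList_length]
    exact_mod_cast (by omega : 1 + ∑ l, α l ≤ r)
  intro a ha b hb
  refine lip_of_lineDeriv hD (c := m * √N) ?_ ha hb
  intro v x hx
  obtain ⟨z', hz', hz'd⟩ := hz.deriv hV hQ hU v (by
    filter_upwards [hY] with ω hω x hx
    exact ((hω.contDiffAt (hU.mem_nhds hx)).differentiableAt (by simp)).lineDifferentiableAt)
  refine ⟨z' x, hz'd x (hDU hx), ?_⟩
  have hxU := hDU hx
  have heq : z' x = ∑ l, v l • w l x := by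
    apply Lp.ext
    have h1 : ∀ᵐ ω ∂P, ∀ l, (v l • w l x : Lp ℝ 2 P) ω = v l *
        iterLineDeriv (multiIndexList (α + Pi.single l 1)) (fun t => X ω t i) x := by
      rw [ae_all_iff]
      intro l
      filter_upwards [Lp.coeFn_smul (v l) (w l x), (hw l x hxU).2] with ω h1 h2
      rw [h1, Pi.smul_apply, h2, smul_eq_mul]
    filter_upwards [h1, Lp.coeFn_finsetSum Finset.univ (fun l => v l • w l x), (hz' x hxU).2,
      hY, hCi] with ω h1 h2 h3 h4 h5
    rw [h2, h3]
    have hdiff : DifferentiableAt ℝ (iterLineDeriv (multiIndexList α) (fun t => X ω t i)) x :=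
      (h4.contDiffAt (hU.mem_nhds hxU)).differentiableAt (by simp)
    rw [Finset.sum_apply]
    simp only [h1]
    rw [hdiff.lineDeriv_eq_fderiv]
    have hv : v = ∑ l, v l • EuclideanSpace.single l (1:ℝ) := by
      ext j
      simp [Finset.sum_apply, Pi.single_apply]
    conv_lhs => rw [hv]
    rw [map_sum]
    refine Finset.sum_congr rfl fun l _ => ?_
    rw [map_smul, smul_eq_mul]
    congr 1
    rw [← hdiff.lineDeriv_eq_fderiv]
    have hp := iter_perm hU (multiIndexList_perm α l) (f := fun t => X ω t i) (by
      refine h5.of_le ?_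
      rw [List.length_append, multiIndexList_length]
      exact_mod_cast hα) hxU
    rw [← hp, iter_append]
  rw [heq]
  calc ‖∑ l, v l • w l x‖ ≤ ∑ l, ‖v l • w l x‖ := norm_sum_le _ _
    _ ≤ ∑ l : Fin m, ‖v‖ * √N := by
      refine Finset.sum_le_sum fun l _ => ?_
      rw [norm_smul]
      exact mul_le_mul (PiLp.norm_apply_le v l) (hwN l x hx) (norm_nonneg _) (norm_nonneg _)
    _ = m * √N * ‖v‖ := by simp; ring

end Final

/-- Let `D ⊆ ℝ^m` be a closed Euclidean ball, `r ≥ 1`, `k ≥ 1`.  There is a constant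
`C = C(D,r,k) > 0` such that for every centered Gaussian process `X` with values in `ℝ^k`,
defined on an open neighborhood `U` of `D`, with almost surely `C^r` sample paths, whose
covariance function `K_X` has (continuous) partial derivatives of order `≤ r` in each of the
two variables, and every bound `N` on all the entries `∂_x^α ∂_y^β K_X^{i,j}` on `D × D` for
`|α|, |β| ≤ r`, one has
`E[ max_{|α| ≤ r−1, i ≤ k} sup_{x ∈ D} |∂^α X^i(x)| ] ≤ C · √N`. -/
theorem exists_const_expectation_Cr_norm_le_sqrt_covariance
    {m : ℕ} (x₀ : EuclideanSpace ℝ (Fin m)) (R : ℝ) (hR : 0 ≤ R)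
    (r k : ℕ) (hr : 1 ≤ r) (hk : 1 ≤ k) :
    ∃ C : ℝ, 0 < C ∧
      ∀ (Ω : Type) (_ : MeasurableSpace Ω) (P : Measure Ω) (_ : IsProbabilityMeasure P)
        (U : Set (EuclideanSpace ℝ (Fin m))) (_ : IsOpen U)
        (_ : Metric.closedBall x₀ R ⊆ U)
        (X : Ω → EuclideanSpace ℝ (Fin m) → Fin k → ℝ),
        -- almost surely `C^r` sample paths on `U`
        (∀ᵐ ω ∂P, ContDiffOn ℝ r (X ω) U) →
        -- `X` is a centered Gaussian process on `U` with values in `ℝ^k`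
        (∀ (j : ℕ) (p : Fin j → EuclideanSpace ℝ (Fin m)), (∀ i, p i ∈ U) →
          ∀ c : Fin j → Fin k → ℝ, ∃ v : NNReal,
            P.map (fun ω => ∑ i, ∑ l, c i l * X ω (p i) l) = gaussianReal 0 v) →
        -- each entry of the covariance function has continuous partial derivatives of order
        -- `≤ r` in each of the two variables, on `U`
        (∀ (i j : Fin k) (α β : Fin m → ℕ), (∑ l, α l) ≤ r → (∑ l, β l) ≤ r →
          (∀ x' ∈ U, HasLinePartialsOn U (multiIndexList β)
              (fun y' => ∫ ω, X ω x' i * X ω y' j ∂P)) ∧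
          (∀ y ∈ U, HasLinePartialsOn U (multiIndexList α)
              (fun x' => iterLineDeriv (multiIndexList β)
                (fun y' => ∫ ω, X ω x' i * X ω y' j ∂P) y)) ∧
          ContinuousOn (fun q : EuclideanSpace ℝ (Fin m) × EuclideanSpace ℝ (Fin m) =>
              mixedLineDeriv α β (fun a b => ∫ ω, X ω a i * X ω b j ∂P) q.1 q.2)
            (U ×ˢ U)) →
        -- conclusion: for any `N` bounding on `D × D` all the mixed derivatives of orders
        -- `≤ r` of all the entries of `K_X`, one has
        -- `E[max_{|α| ≤ r−1, i} sup_D |∂^α X^i|] ≤ C √N`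
        ∀ N : ℝ,
          (∀ (i j : Fin k) (α β : Fin m → ℕ), (∑ l, α l) ≤ r → (∑ l, β l) ≤ r →
            ∀ x ∈ Metric.closedBall x₀ R, ∀ y ∈ Metric.closedBall x₀ R,
              |mixedLineDeriv α β (fun a b => ∫ ω, X ω a i * X ω b j ∂P) x y| ≤ N) →
          ∫⁻ ω, ⨆ (α : Fin m → ℕ) (_ : (∑ l, α l) ≤ r - 1) (i : Fin k)
              (x : EuclideanSpace ℝ (Fin m)) (_ : x ∈ Metric.closedBall x₀ R),
              ENNReal.ofReal |iterLineDeriv (multiIndexList α) (fun t => X ω t i) x| ∂P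
            ≤ ENNReal.ofReal (C * Real.sqrt N) := by
  classical
  obtain ⟨M1, hM1, hmom1⟩ := gaussQ_moment 1
  obtain ⟨Mp, hMp, hmomp⟩ := gaussQ_moment (4 * m + 2)
  obtain ⟨C0, hC0, hchain⟩ := chain_bound x₀ R hR (Mp * m ^ (4 * m + 2)) (by positivity)
  let S : Finset (Fin m → ℕ) := Fintype.piFinset fun _ => Finset.range r
  refine ⟨S.card * k * (C0 * (1 + M1)) + 1, by positivity, ?_⟩
  intro Ω _ P _ U hU hDU X hC hG _ N hN
  set D := Metric.closedBall x₀ R with hDdef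
  obtain ⟨V, hV, hQ, y, hy⟩ := gauss_setup hG
  have hmain : ∀ ε : ℝ, 0 < ε → ∫⁻ ω, ⨆ (α : Fin m → ℕ) (_ : (∑ l, α l) ≤ r - 1) (i : Fin k)
              (x : EuclideanSpace ℝ (Fin m)) (_ : x ∈ D),
              ENNReal.ofReal |iterLineDeriv (multiIndexList α) (fun t => X ω t i) x| ∂P
            ≤ ENNReal.ofReal ((S.card * k * (C0 * (1 + M1)) + 1) * (√N + ε)) := by
    intro ε hε
    have hsN : 0 ≤ √N := Real.sqrt_nonneg N
    set s : ℝ := (1 + M1) * (√N + ε) with hs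
    have hs0 : 0 < s := by positivity
    have hNs : √N ≤ s := by rw [hs]; nlinarith
    have hMNs : M1 * √N ≤ s := by rw [hs]; nlinarith [mul_nonneg hM1 hε.le]
    have hB : ∀ (α : Fin m → ℕ) (i : Fin k), ∃ B : Ω → ENNReal, (∑ l, α l) ≤ r - 1 →
        AEMeasurable B P ∧ ∫⁻ ω, B ω ∂P ≤ ENNReal.ofReal (C0 * s) ∧
        ∀ᵐ ω ∂P, ∀ x ∈ D,
          ENNReal.ofReal |iterLineDeriv (multiIndexList α) (fun t => X ω t i) x| ≤ B ω := by
      intro α i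
      by_cases hα : (∑ l, α l) ≤ r - 1
      swap
      · exact ⟨0, fun h => absurd h hα⟩
      have hα' : (∑ l, α l) + 1 ≤ r := by omega
      obtain ⟨z, hz, hz1, hz2⟩ := deriv_bounds hU hDU (convex_closedBall x₀ R) hC hV hQ (hy i)
        (fun α β => hN i i α β) α hα'
      refine Exists.imp (fun B hB _ => hB) (hchain Ω _ P inferInstance
        (fun ω => iterLineDeriv (multiIndexList α) (fun t => X ω t i)) s hs0 ?_ ?_ ?_ ?_)
      · intro x hx
        exact (Lp.aestronglyMeasurable (z x)).aemeasurable.congr (hz x (hDU hx)).2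
      · filter_upwards [hC] with ω hω
        have h1 : ContDiffOn ℝ (0:ℕ) (iterLineDeriv (multiIndexList α) (fun t => X ω t i)) U := by
          apply contDiffOn_iter hU
          refine (contDiffOn_pi.1 hω i).of_le ?_
          rw [multiIndexList_length]
          exact_mod_cast (by omega : 0 + ∑ l, α l ≤ r)
        exact h1.continuousOn.mono hDU
      · intro x hx
        have h1 := hmom1 Ω _ P _ (z x) (hQ _ (hz x (hDU hx)).1)
        have h2 : ∫⁻ ω, ENNReal.ofReal |iterLineDeriv (multiIndexList α) (fun t => X ω t i) x| ∂P
            = ∫⁻ ω, ENNReal.ofReal (|z x ω| ^ 1) ∂P := by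
          apply lintegral_congr_ae
          filter_upwards [(hz x (hDU hx)).2] with ω hω
          rw [hω, pow_one]
        rw [h2, h1]
        apply ENNReal.ofReal_le_ofReal
        rw [pow_one]
        exact (mul_le_mul_of_nonneg_left (hz1 x hx) hM1).trans hMNs
      · intro a ha b hb
        have h1 := hmomp Ω _ P _ (z a - z b)
          (hQ _ (V.sub_mem (hz a (hDU ha)).1 (hz b (hDU hb)).1))
        have h2 : ∫⁻ ω, ENNReal.ofReal (|iterLineDeriv (multiIndexList α) (fun t => X ω t i) a
            - iterLineDeriv (multiIndexList α) (fun t => X ω t i) b| ^ (4 * m + 2)) ∂P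
            = ∫⁻ ω, ENNReal.ofReal (|(z a - z b : Lp ℝ 2 P) ω| ^ (4 * m + 2)) ∂P := by
          apply lintegral_congr_ae
          filter_upwards [(hz a (hDU ha)).2, (hz b (hDU hb)).2, Lp.coeFn_sub (z a) (z b)]
            with ω h3 h4 h5
          rw [h5, Pi.sub_apply, h3, h4]
        rw [h2, h1]
        apply ENNReal.ofReal_le_ofReal
        rw [mul_assoc, ← mul_pow]
        apply mul_le_mul_of_nonneg_left _ hMp
        apply pow_le_pow_left₀ (norm_nonneg _)
        refine (hz2 b hb a ha).trans ?_
        rw [dist_eq_norm, mul_assoc]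
        gcongr
    choose B hB using hB
    let S' : Finset (Fin m → ℕ) := S.filter fun α => (∑ l, α l) ≤ r - 1
    have hS' : ∀ α : Fin m → ℕ, (∑ l, α l) ≤ r - 1 → α ∈ S' := by
      intro α hα
      simp only [S', S, Finset.mem_filter, Fintype.mem_piFinset, Finset.mem_range]
      refine ⟨fun l => ?_, hα⟩
      have := Finset.single_le_sum (f := α) (fun _ _ => Nat.zero_le _) (Finset.mem_univ l)
      omega
    have hS'' : ∀ α ∈ S', (∑ l, α l) ≤ r - 1 := fun α hα => (Finset.mem_filter.1 hα).2
    have hpt : ∀ᵐ ω ∂P, (⨆ (α : Fin m → ℕ) (_ : (∑ l, α l) ≤ r - 1) (i : Fin k)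
              (x : EuclideanSpace ℝ (Fin m)) (_ : x ∈ D),
              ENNReal.ofReal |iterLineDeriv (multiIndexList α) (fun t => X ω t i) x|)
              ≤ ∑ α ∈ S', ∑ i, B α i ω := by
      have hall : ∀ᵐ ω ∂P, ∀ α ∈ S', ∀ i, ∀ x ∈ D,
          ENNReal.ofReal |iterLineDeriv (multiIndexList α) (fun t => X ω t i) x| ≤ B α i ω := by
        rw [Finset.eventually_all]
        intro α hα
        rw [ae_all_iff]
        intro i
        exact (hB α i (hS'' α hα)).2.2
      filter_upwards [hall] with ω hω
      refine iSup_le fun α => iSup_le fun hα => iSup_le fun i => iSup_le fun x => iSup_le fun hx => ?_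
      refine (hω α (hS' α hα) i x hx).trans ?_
      refine (Finset.single_le_sum (f := fun i => B α i ω) (fun _ _ => zero_le)
        (Finset.mem_univ i)).trans ?_
      exact Finset.single_le_sum (f := fun α => ∑ i, B α i ω) (fun _ _ => zero_le) (hS' α hα)
    refine (lintegral_mono_ae hpt).trans ?_
    have hm : ∀ α ∈ S', ∀ i, AEMeasurable (B α i) P := fun α hα i => (hB α i (hS'' α hα)).1
    rw [lintegral_finsetSum' _ fun α hα => Finset.aemeasurable_fun_sum _ fun i _ => hm α hα i]
    have hle : ∀ α ∈ S', ∫⁻ ω, ∑ i, B α i ω ∂P ≤ ENNReal.ofReal (k * (C0 * s)) := by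
      intro α hα
      rw [lintegral_finsetSum' _ fun i _ => hm α hα i]
      refine (Finset.sum_le_sum fun i _ => (hB α i (hS'' α hα)).2.1).trans ?_
      rw [Finset.sum_const, nsmul_eq_mul, ← ENNReal.ofReal_natCast,
        ← ENNReal.ofReal_mul (by positivity)]
      simp
    refine (Finset.sum_le_sum hle).trans ?_
    rw [Finset.sum_const, nsmul_eq_mul, ← ENNReal.ofReal_natCast,
        ← ENNReal.ofReal_mul (by positivity)]
    apply ENNReal.ofReal_le_ofReal
    have hc : (S'.card : ℝ) ≤ S.card := by exact_mod_cast Finset.card_filter_le _ _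
    calc (S'.card : ℝ) * (k * (C0 * s)) ≤ S.card * (k * (C0 * s)) := by gcongr
      _ = S.card * k * (C0 * (1 + M1)) * (√N + ε) := by rw [hs]; ring
      _ ≤ _ := by nlinarith
  have hlim : Tendsto (fun ε : ℝ => ENNReal.ofReal ((S.card * k * (C0 * (1 + M1)) + 1) * (√N + ε)))
      (𝓝[>] 0) (𝓝 (ENNReal.ofReal ((S.card * k * (C0 * (1 + M1)) + 1) * √N))) := by
    have hc : Continuous fun ε : ℝ =>
        ENNReal.ofReal ((S.card * k * (C0 * (1 + M1)) + 1) * (√N + ε)) :=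
      ENNReal.continuous_ofReal.comp (by fun_prop)
    have := hc.tendsto 0
    rw [add_zero] at this
    exact this.mono_left nhdsWithin_le_nhds
  refine ge_of_tendsto hlim ?_
  filter_upwards [self_mem_nhdsWithin] with ε hε
  exact hmain ε hε
end

section
/- There exists a sequence (X_n) of centered Gaussian processes on [0,1] with values in ℝ, defined on some probability space, with almost surely smooth (C^∞) sample paths, such that sup_{s,t∈[0,1]} |K_{X_n}(s,t)| → 0 as n → ∞ while P( sup_{t∈[0,1]} |X_n(t)| < 1 ) → 0; in particular liminf_{n→∞} E[ sup_{t∈[0,1]} |X_n(t)| ] ≥ 1, so the laws of X_n on C([0,1],ℝ) do not converge narrowly to the Dirac measure at the zero function even though the covariance functions converge uniformly to 0. -/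
open MeasureTheory ProbabilityTheory Filter Topology ENNReal

/-- A smooth bump function supported in `(-1/2, 1/2)`. -/
lemma exists_bump : ∃ f : ℝ → ℝ, ContDiff ℝ (⊤ : ℕ∞) f ∧ f 0 = 1 ∧ (∀ x, |f x| ≤ 1) ∧
    ∀ x, 1 / 2 ≤ |x| → f x = 0 := by
  let b : ContDiffBump (0 : ℝ) := ⟨1 / 4, 1 / 2, by norm_num, by norm_num⟩
  refine ⟨b, b.contDiff, ?_, ?_, ?_⟩
  · exact b.one_of_mem_closedBall (by simp [b])
  · intro x
    rw [abs_of_nonneg b.nonneg]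
    exact b.le_one
  · intro x hx
    exact b.zero_of_le_dist (by simpa [b] using hx)

/-- The product of countably many standard Gaussian measures. -/
noncomputable def gaussProd : Measure (ℕ → ℝ) :=
  Measure.infinitePi (fun _ => gaussianReal 0 1)

instance : IsProbabilityMeasure gaussProd := by unfold gaussProd; infer_instance

lemma gaussProd_eval (k : ℕ) : gaussProd.map (fun ω => ω k) = gaussianReal 0 1 :=
  Measure.infinitePi_map_eval _ k

lemma gaussProd_linear (b : ℕ → ℝ) (N : ℕ) : ∃ v : NNReal,
    gaussProd.map (fun ω => ∑ k ∈ Finset.range N, b k * ω k) = gaussianReal 0 v := by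
  have hind : iIndepFun (fun (k : ℕ) (ω : ℕ → ℝ) => b k * ω k) gaussProd :=
    iIndepFun_infinitePi (X := fun k x => b k * x) (fun k => by fun_prop)
  induction N with
  | zero => exact ⟨0, by simp⟩
  | succ N ih =>
    obtain ⟨v, hv⟩ := ih
    have h1 : gaussProd.map (fun ω => b N * ω N) = gaussianReal 0 (.mk (b N ^ 2) (sq_nonneg _) * 1) := by
      have := (gaussianReal_const_mul (P := gaussProd) (X := fun ω => ω N) (μ := 0) (v := 1)
        ⟨(measurable_pi_apply N).aemeasurable, gaussProd_eval N⟩ (b N)).map_eq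
      simpa using this
    have h2 := hind.indepFun_finsetSum_of_notMem (s := Finset.range N) (i := N)
      (fun k => by fun_prop) (by simp)
    have e : (∑ k ∈ Finset.range N, fun ω : ℕ → ℝ => b k * ω k)
        = fun ω => ∑ k ∈ Finset.range N, b k * ω k := by
      ext ω; simp
    rw [e] at h2
    refine ⟨v + .mk (b N ^ 2) (sq_nonneg _) * 1, ?_⟩
    · have := gaussianReal_add_gaussianReal_of_indepFun h2 hv h1
      rw [add_zero] at this
      rw [← this]
      congr 1
      ext ω
      simp [Finset.sum_range_succ]

lemma gaussProd_sq (k : ℕ) : Integrable (fun ω : ℕ → ℝ => ω k ^ 2) gaussProd ∧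
    ∫ ω, ω k ^ 2 ∂gaussProd = 1 := by
  have hm : MemLp (fun x : ℝ => x) 2 (gaussianReal 0 1) := memLp_id_gaussianReal 2
  have hi : Integrable (fun x : ℝ => x ^ 2) (gaussianReal 0 1) := hm.integrable_sq
  have hv : ∫ x, x ^ 2 ∂(gaussianReal 0 1) = 1 := by
    have := variance_fun_id_gaussianReal (μ := 0) (v := 1)
    rw [variance_eq_integral measurable_id'.aemeasurable] at this
    simpa using this
  have hae : AEMeasurable (fun ω : ℕ → ℝ => ω k) gaussProd :=
    (measurable_pi_apply k).aemeasurable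
  rw [← gaussProd_eval k] at hi hv
  refine ⟨hi.comp_aemeasurable hae, ?_⟩
  rw [← hv, integral_map hae hi.1]

lemma gaussProd_mul (k l : ℕ) : |∫ ω, ω k * ω l ∂gaussProd| ≤ 1 := by
  have h1 := gaussProd_sq k
  have h2 := gaussProd_sq l
  have : ‖∫ ω, ω k * ω l ∂gaussProd‖ ≤ ∫ ω, (ω k ^ 2 + ω l ^ 2) / 2 ∂gaussProd := by
    refine norm_integral_le_of_norm_le ((h1.1.add h2.1).div_const 2) (Eventually.of_forall ?_)
    intro ω
    simp only [Real.norm_eq_abs, Pi.add_apply]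
    rw [abs_le]
    constructor <;> nlinarith [sq_nonneg (ω k + ω l), sq_nonneg (ω k - ω l)]
  rw [integral_div, integral_add h1.1 h2.1, h1.2, h2.2] at this
  simpa using this

/-- With enough independent coordinates, one of them exceeds the level `n + 1`. -/
lemma exists_many (n : ℕ) : ∃ N : ℕ,
    gaussProd {ω | ∃ k < N, (n : ℝ) + 1 ≤ |ω k|}ᶜ ≤ ((n : ℝ≥0∞) + 1)⁻¹ := by
  have hS : MeasurableSet {x : ℝ | |x| < (n : ℝ) + 1} :=
    measurableSet_lt (by fun_prop) (by fun_prop)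
  have hq : gaussianReal 0 1 {x : ℝ | |x| < (n : ℝ) + 1} < 1 := by
    refine lt_of_le_of_ne prob_le_one fun h => ?_
    rw [← prob_compl_eq_zero_iff hS] at h
    have h0 := gaussianReal_absolutelyContinuous' 0 one_ne_zero h
    have h3 : volume (Set.Ici ((n : ℝ) + 1)) ≤ 0 := by
      rw [← h0]
      refine measure_mono fun x hx => ?_
      simp only [Set.mem_Ici] at hx
      simp only [Set.mem_compl_iff, Set.mem_setOf_eq, not_lt]
      exact hx.trans (le_abs_self x)
    simp at h3
  have ht := ENNReal.tendsto_pow_atTop_nhds_zero_of_lt_one hq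
  have hpos : (0 : ℝ≥0∞) < ((n : ℝ≥0∞) + 1)⁻¹ := by
    rw [ENNReal.inv_pos]; exact_mod_cast ENNReal.natCast_ne_top (n + 1)
  obtain ⟨N, hN⟩ := (ht.eventually (gt_mem_nhds hpos)).exists
  refine ⟨N, le_trans (le_of_eq ?_) hN.le⟩
  have : {ω : ℕ → ℝ | ∃ k < N, (n : ℝ) + 1 ≤ |ω k|}ᶜ
      = Set.pi (Finset.range N : Finset ℕ) (fun _ => {x : ℝ | |x| < (n : ℝ) + 1}) := by
    ext ω
    simp [Set.mem_pi]
  rw [this, gaussProd, Measure.infinitePi_pi _ (fun _ _ => hS)]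
  simp

/-- There is a sequence `(X_n)` of centered real-valued Gaussian processes on `[0,1]`, with
almost surely smooth sample paths, whose covariance functions converge uniformly to `0` while
`P(sup_{[0,1]} |X_n| < 1) → 0`; in particular `liminf E[sup_{[0,1]} |X_n|] ≥ 1` and the laws of
`X_n` on `C([0,1],ℝ)` do not converge narrowly to the Dirac measure at the zero function. -/
theorem exists_gaussian_counterexample_narrow_convergence :
    ∃ (Ω : Type) (_ : MeasurableSpace Ω) (P : Measure Ω) (_ : IsProbabilityMeasure P)
      (_ : MeasurableSpace C(Set.Icc (0:ℝ) 1, ℝ)) (_ : BorelSpace C(Set.Icc (0:ℝ) 1, ℝ))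
      (X : ℕ → Ω → ℝ → ℝ) (Y : ℕ → Ω → C(Set.Icc (0:ℝ) 1, ℝ)),
      -- almost surely smooth sample paths
      (∀ n, ∀ᵐ ω ∂P, ContDiff ℝ (⊤ : ℕ∞) (X n ω)) ∧
      -- each `X n` is a centered Gaussian process on `[0,1]`
      (∀ n (j : ℕ) (p : Fin j → ℝ), (∀ i, p i ∈ Set.Icc (0:ℝ) 1) →
        ∀ c : Fin j → ℝ, ∃ v : NNReal,
          P.map (fun ω => ∑ i, c i * X n ω (p i)) = gaussianReal 0 v) ∧
      -- `Y n` is the random element of `C([0,1],ℝ)` defined by `X n`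
      (∀ n, Measurable (Y n)) ∧
      (∀ n, ∀ᵐ ω ∂P, ∀ t : Set.Icc (0:ℝ) 1, Y n ω t = X n ω t) ∧
      -- the covariance functions converge to `0` uniformly on `[0,1]²`
      (∀ ε : ℝ, 0 < ε → ∃ N : ℕ, ∀ n ≥ N, ∀ s ∈ Set.Icc (0:ℝ) 1, ∀ t ∈ Set.Icc (0:ℝ) 1,
        |∫ ω, X n ω s * X n ω t ∂P| ≤ ε) ∧
      -- `P(sup_{[0,1]} |X_n| < 1) → 0`
      Tendsto (fun n => P {ω | ∀ t ∈ Set.Icc (0:ℝ) 1, |X n ω t| < 1}) atTop (𝓝 0) ∧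
      -- `liminf E[sup_{[0,1]} |X_n|] ≥ 1`
      (1 : ℝ≥0∞) ≤ Filter.atTop.liminf
        (fun n => ∫⁻ ω, ⨆ t : Set.Icc (0:ℝ) 1, ENNReal.ofReal |X n ω t| ∂P) ∧
      -- the laws of `X_n` do not converge narrowly to `δ₀` on `C([0,1],ℝ)`
      ¬ (∀ φ : BoundedContinuousFunction C(Set.Icc (0:ℝ) 1, ℝ) ℝ,
          Tendsto (fun n => ∫ ω, φ (Y n ω) ∂P) atTop (𝓝 (φ 0))) := by
  classical
  obtain ⟨f, hf, hf0, hf1, hfs⟩ := exists_bump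
  choose N hN using exists_many
  let B : ℕ → Set (ℕ → ℝ) := fun n => {ω | ∃ k < N n, (n : ℝ) + 1 ≤ |ω k|}
  have hBm : ∀ n, MeasurableSet (B n) := by
    intro n
    have : B n = ⋃ k ∈ Finset.range (N n), {ω : ℕ → ℝ | (n : ℝ) + 1 ≤ |ω k|} := by
      ext ω; simp [B]
    rw [this]
    exact Finset.measurableSet_biUnion _ fun k _ => measurableSet_le (by fun_prop) (by fun_prop)
  let X : ℕ → (ℕ → ℝ) → ℝ → ℝ := fun n ω t =>
    ∑ k ∈ Finset.range (N n), ((n : ℝ) + 1)⁻¹ * f (N n * t - k) * ω k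
  have hsm : ∀ n ω, ContDiff ℝ (⊤ : ℕ∞) (X n ω) := by
    intro n ω
    refine ContDiff.sum fun k _ => ?_
    exact (contDiff_const.mul (hf.comp (by fun_prop))).mul contDiff_const
  let Y : ℕ → (ℕ → ℝ) → C(Set.Icc (0:ℝ) 1, ℝ) := fun n ω =>
    ⟨fun t => X n ω t, (hsm n ω).continuous.comp continuous_subtype_val⟩
  have hXB : ∀ n, ∀ ω ∈ B n, ∃ t ∈ Set.Icc (0:ℝ) 1, 1 ≤ |X n ω t| := by
    rintro n ω ⟨k, hk, hω⟩
    have hNpos : (0 : ℝ) < N n := by exact_mod_cast (Nat.zero_le k).trans_lt hk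
    have hkN : (k : ℝ) ≤ N n := by exact_mod_cast hk.le
    have hn : (0 : ℝ) < (n : ℝ) + 1 := by positivity
    refine ⟨k / N n, ⟨by positivity, by rw [div_le_one hNpos]; exact hkN⟩, ?_⟩
    have : X n ω (k / N n) = ((n : ℝ) + 1)⁻¹ * ω k := by
      simp only [X]
      rw [Finset.sum_eq_single k]
      · rw [mul_div_cancel₀ _ hNpos.ne', sub_self, hf0, mul_one]
      · intro l _ hl
        rw [mul_div_cancel₀ _ hNpos.ne', hfs]
        · simp
        · have h1 : (1 : ℤ) ≤ |(k : ℤ) - l| := Int.one_le_abs (by omega)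
          have h2 : (1 : ℝ) ≤ |(k : ℝ) - l| := by exact_mod_cast h1
          linarith
      · intro h; exact absurd (Finset.mem_range.2 hk) h
    rw [this, abs_mul, abs_of_pos (inv_pos.2 hn), inv_mul_eq_div, le_div_iff₀ hn, one_mul]
    exact hω
  have hX1 : ∀ n s, ∃ k : ℕ, ∃ c : ℝ, |c| ≤ 1 ∧ ∀ ω, X n ω s = ((n : ℝ) + 1)⁻¹ * c * ω k := by
    intro n s
    by_cases h : ∃ k ∈ Finset.range (N n), |N n * s - k| < 1 / 2
    · obtain ⟨k, hk, hks⟩ := h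
      refine ⟨k, f (N n * s - k), hf1 _, fun ω => ?_⟩
      simp only [X]
      refine Finset.sum_eq_single_of_mem k hk fun l _ hl => ?_
      rw [hfs]
      · simp
      · have h1 : (1 : ℤ) ≤ |(k : ℤ) - l| := Int.one_le_abs (by omega)
        have h2 : (1 : ℝ) ≤ |(k : ℝ) - l| := by exact_mod_cast h1
        have h3 := abs_sub_le (k : ℝ) (N n * s) l
        rw [abs_sub_comm] at hks
        linarith
    · push Not at h
      refine ⟨0, 0, by simp, fun ω => ?_⟩
      simp only [X]
      rw [Finset.sum_eq_zero]
      · simp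
      · intro k hk
        rw [hfs _ (h k hk)]; simp
  have hinv : Tendsto (fun n : ℕ => ((n : ℝ≥0∞) + 1)⁻¹) atTop (𝓝 0) := by
    have := (tendsto_add_atTop_iff_nat 1).2 ENNReal.tendsto_inv_nat_nhds_zero
    simpa using this
  have hBc : Tendsto (fun n => gaussProd (B n)ᶜ) atTop (𝓝 0) :=
    tendsto_of_tendsto_of_tendsto_of_le_of_le tendsto_const_nhds hinv (fun _ => zero_le)
      (fun n => hN n)
  have hB : Tendsto (fun n => gaussProd (B n)) atTop (𝓝 1) := by
    have h1 : (fun n => gaussProd (B n)) = fun n => 1 - gaussProd (B n)ᶜ := by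
      ext n
      rw [← prob_compl_eq_one_sub (hBm n).compl, compl_compl]
    rw [h1]
    simpa using ENNReal.Tendsto.sub (tendsto_const_nhds (x := (1 : ℝ≥0∞))) hBc (Or.inl one_ne_top)
  have hYc : ∀ n, Continuous (Y n) := by
    intro n
    have : Y n = fun ω => ∑ k ∈ Finset.range (N n), ω k •
        (⟨fun t => ((n : ℝ) + 1)⁻¹ * f (N n * (t : ℝ) - k),
          by have := hf.continuous; fun_prop⟩ : C(Set.Icc (0:ℝ) 1, ℝ)) := by
      ext ω t
      simp only [Y, X, ContinuousMap.coe_mk, ContinuousMap.sum_apply, ContinuousMap.smul_apply,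
        smul_eq_mul]
      exact Finset.sum_congr rfl fun k _ => by ring
    rw [this]
    fun_prop
  letI mC : MeasurableSpace C(Set.Icc (0:ℝ) 1, ℝ) := borel _
  haveI bC : BorelSpace C(Set.Icc (0:ℝ) 1, ℝ) := ⟨rfl⟩
  refine ⟨ℕ → ℝ, inferInstance, gaussProd, inferInstance, mC, bC, X, Y,
    fun n => Eventually.of_forall (hsm n), ?_, fun n => (hYc n).measurable,
    fun n => Eventually.of_forall fun ω t => rfl, ?_, ?_, ?_, ?_⟩
  · intro n j p _ c
    obtain ⟨v, hv⟩ := gaussProd_linear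
      (fun k => ∑ i, c i * (((n : ℝ) + 1)⁻¹ * f (N n * p i - k))) (N n)
    refine ⟨v, ?_⟩
    rw [← hv]
    congr 1
    ext ω
    simp only [X, Finset.mul_sum, Finset.sum_mul]
    rw [Finset.sum_comm]
    exact Finset.sum_congr rfl fun k _ => Finset.sum_congr rfl fun i _ => by ring
  · intro ε hε
    obtain ⟨M, hM⟩ := exists_nat_one_div_lt hε
    refine ⟨M, fun n hn s _ t _ => ?_⟩
    obtain ⟨k, c, hc, h1⟩ := hX1 n s
    obtain ⟨l, d, hd, h2⟩ := hX1 n t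
    have e : (fun ω => X n ω s * X n ω t)
        = fun ω => (((n : ℝ) + 1)⁻¹ * ((n : ℝ) + 1)⁻¹ * (c * d)) * (ω k * ω l) := by
      ext ω; rw [h1, h2]; ring
    rw [e, integral_const_mul, abs_mul, abs_mul, abs_mul c d]
    have hn0 : (0 : ℝ) < (n : ℝ) + 1 := by positivity
    have ha : ((n : ℝ) + 1)⁻¹ ≤ 1 := inv_le_one_of_one_le₀ (by linarith [(n.cast_nonneg : (0:ℝ) ≤ n)])
    have ha0 : 0 < ((n : ℝ) + 1)⁻¹ := inv_pos.2 hn0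
    have ha2 : ((n : ℝ) + 1)⁻¹ ≤ 1 / ((M : ℝ) + 1) := by
      rw [← one_div]; exact Nat.one_div_le_one_div hn
    have hcd : |c| * |d| ≤ 1 := mul_le_one₀ hc (abs_nonneg _) hd
    rw [abs_of_pos (mul_pos ha0 ha0)]
    calc _ ≤ (((n : ℝ) + 1)⁻¹ * 1 * 1) * 1 := by
            gcongr
            exact gaussProd_mul k l
      _ ≤ ε := by linarith
  · refine tendsto_of_tendsto_of_tendsto_of_le_of_le tendsto_const_nhds hBc (fun _ => zero_le)
      (fun n => measure_mono fun ω hω hB' => ?_)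
    obtain ⟨t, ht, h1⟩ := hXB n ω hB'
    exact absurd (hω t ht) (not_lt.2 h1)
  · rw [← hB.liminf_eq]
    refine liminf_le_liminf (Eventually.of_forall fun n => ?_)
    rw [← lintegral_indicator_one (hBm n)]
    refine lintegral_mono fun ω => ?_
    by_cases hω : ω ∈ B n
    · obtain ⟨t, ht, h1⟩ := hXB n ω hω
      simp only [Set.indicator_of_mem hω, Pi.one_apply]
      refine le_trans ?_ (le_iSup _ (⟨t, ht⟩ : Set.Icc (0:ℝ) 1))
      simpa using h1
    · simp [Set.indicator_of_notMem hω]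
  · intro h
    let φ : BoundedContinuousFunction C(Set.Icc (0:ℝ) 1, ℝ) ℝ :=
      BoundedContinuousFunction.ofNormedAddCommGroup (fun g => min ‖g‖ 1) (by fun_prop) 1
        (fun g => by
          rw [Real.norm_eq_abs, abs_of_nonneg (le_min (norm_nonneg _) zero_le_one)]
          exact min_le_right _ _)
    have hφ : ∀ g, φ g = min ‖g‖ 1 := fun g => rfl
    have h0 := h φ
    have hB' : Tendsto (fun n => (gaussProd (B n)).toReal) atTop (𝓝 1) := by
      simpa [Function.comp_def] using (ENNReal.tendsto_toReal one_ne_top).comp hB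
    have hle : ∀ n, (gaussProd (B n)).toReal ≤ ∫ ω, φ (Y n ω) ∂gaussProd := by
      intro n
      have e : (gaussProd (B n)).toReal = ∫ ω, (B n).indicator 1 ω ∂gaussProd := by
        rw [integral_indicator_one (hBm n)]; rfl
      rw [e]
      refine integral_mono ((integrable_const (1 : ℝ)).indicator (hBm n)) ?_ fun ω => ?_
      · refine Integrable.of_bound (φ.continuous.comp (hYc n)).measurable.aestronglyMeasurable
          ‖φ‖ (Eventually.of_forall fun ω => φ.norm_coe_le_norm _)
      · by_cases hω : ω ∈ B n
        · obtain ⟨t, ht, h1⟩ := hXB n ω hω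
          simp only [Set.indicator_of_mem hω, Pi.one_apply, hφ]
          refine le_min (h1.trans ?_) le_rfl
          exact (Y n ω).norm_coe_le_norm ⟨t, ht⟩
        · simp only [Set.indicator_of_notMem hω, hφ]
          exact le_min (norm_nonneg _) zero_le_one
    have := le_of_tendsto_of_tendsto' hB' h0 hle
    rw [hφ] at this
    norm_num at this
end

section
/- Let 𝔻 ⊂ ℝ^m be the closed unit ball, let μ be a finite Borel measure on 𝔻, and let α ∈ ℕ^m be a multi-index. Set e = (1,…,1) ∈ ℕ^m. Then there exists an essentially bounded measurable function ρ : ℝ^m → ℝ with ‖ρ‖_{L^∞} ≤ μ(𝔻) such that for every smooth compactly supported function φ : ℝ^m → ℝ, ∫_𝔻 ∂^α φ dμ = ∫_{ℝ^m} ∂^{α+e} φ(u) ρ(u) du (the right-hand integral with respect to Lebesgue measure). -/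
open MeasureTheory Filter Topology

lemma ild_affine {E F : Type} [NormedAddCommGroup E] [NormedSpace ℝ E]
    [NormedAddCommGroup F] [NormedSpace ℝ F] (A : E → F) (L : E → F)
    (h : ∀ x v (t : ℝ), A (x + t • v) = A x + t • L v) (vs : List E) :
    ∀ (f : F → ℝ) (x : E),
      iterLineDeriv vs (fun y => f (A y)) x = iterLineDeriv (vs.map L) f (A x) := by
  induction vs with
  | nil => intro f x; rfl
  | cons v vs ih =>
    intro f x
    simp only [iterLineDeriv, List.map_cons]
    rw [← ih]
    congr 1
    funext y
    simp only [lineDeriv, h]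

lemma ld_eq {E : Type} [NormedAddCommGroup E] [NormedSpace ℝ E] {f : E → ℝ}
    (hf : ContDiff ℝ (⊤ : ℕ∞) f) (v : E) :
    (fun x => lineDeriv ℝ f x v) = fun x => fderiv ℝ f x v := by
  funext x
  exact ((hf.differentiable (by simp)) x).lineDeriv_eq_fderiv

lemma ld_smooth {E : Type} [NormedAddCommGroup E] [NormedSpace ℝ E] {f : E → ℝ}
    (hf : ContDiff ℝ (⊤ : ℕ∞) f) (v : E) :
    ContDiff ℝ (⊤ : ℕ∞) (fun x => lineDeriv ℝ f x v) := by
  rw [ld_eq hf]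
  exact (hf.fderiv_right (m := ((⊤ : ℕ∞) : WithTop ℕ∞)) (by simp)).clm_apply contDiff_const

lemma ld_cs {E : Type} [NormedAddCommGroup E] [NormedSpace ℝ E] {f : E → ℝ}
    (hf : ContDiff ℝ (⊤ : ℕ∞) f) (hc : HasCompactSupport f) (v : E) :
    HasCompactSupport (fun x => lineDeriv ℝ f x v) := by
  rw [ld_eq hf]
  exact hc.fderiv_apply ℝ v

lemma ild_smooth {E : Type} [NormedAddCommGroup E] [NormedSpace ℝ E] (vs : List E) :
    ∀ {f : E → ℝ}, ContDiff ℝ (⊤ : ℕ∞) f → HasCompactSupport f →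
      ContDiff ℝ (⊤ : ℕ∞) (iterLineDeriv vs f) ∧ HasCompactSupport (iterLineDeriv vs f) := by
  induction vs with
  | nil => intro f h1 h2; exact ⟨h1, h2⟩
  | cons v vs ih => intro f h1 h2; exact ih (ld_smooth h1 v) (ld_cs h1 h2 v)

lemma ld_comm {E : Type} [NormedAddCommGroup E] [NormedSpace ℝ E] {f : E → ℝ}
    (hf : ContDiff ℝ (⊤ : ℕ∞) f) (v w : E) :
    (fun x => lineDeriv ℝ (fun y => lineDeriv ℝ f y v) x w) =
      fun x => lineDeriv ℝ (fun y => lineDeriv ℝ f y w) x v := by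
  have hd : Differentiable ℝ (fderiv ℝ f) :=
    (hf.fderiv_right (m := ((⊤ : ℕ∞) : WithTop ℕ∞)) (by simp)).differentiable (by simp)
  have key : ∀ a b x, lineDeriv ℝ (fun y => lineDeriv ℝ f y a) x b
      = fderiv ℝ (fderiv ℝ f) x b a := by
    intro a b x
    have := congrFun (ld_eq (ld_smooth hf a) b) x
    rw [this, ld_eq hf]
    rw [fderiv_clm_apply (hd x) (differentiableAt_const a)]
    simp
  funext x
  rw [key, key]
  exact (hf.contDiffAt.isSymmSndFDerivAt (by
    rw [minSmoothness_of_isRCLikeNormedField]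
    exact WithTop.coe_le_coe.2 (le_top : (2 : ℕ∞) ≤ ⊤))).eq w v

lemma ild_perm {E : Type} [NormedAddCommGroup E] [NormedSpace ℝ E] {l l' : List E}
    (h : l.Perm l') : ∀ {f : E → ℝ}, ContDiff ℝ (⊤ : ℕ∞) f →
      iterLineDeriv l f = iterLineDeriv l' f := by
  induction h with
  | nil => intro f _; rfl
  | cons v _ ih => intro f hf; exact ih (ld_smooth hf v)
  | swap v w l =>
    intro f hf
    simp only [iterLineDeriv]
    rw [ld_comm hf]
  | trans _ _ h1 h2 => intro f hf; rw [h1 hf, h2 hf]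

lemma ild_append {E : Type} [NormedAddCommGroup E] [NormedSpace ℝ E] (l l' : List E) :
    ∀ f : E → ℝ, iterLineDeriv (l ++ l') f = iterLineDeriv l' (iterLineDeriv l f) := by
  induction l with
  | nil => intro f; rfl
  | cons v l ih => intro f; exact ih _

lemma flatMap_perm {ι E : Type} (a : ι → ℕ) (b : ι → E) (l : List ι) :
    (l.flatMap fun i => List.replicate (a i + 1) (b i)).Perm
      ((l.flatMap fun i => List.replicate (a i) (b i)) ++ l.map b) := by
  induction l with
  | nil => simp
  | cons i l ih =>
    simp only [List.flatMap_cons, List.map_cons, List.append_assoc]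
    rw [List.replicate_succ', List.append_assoc]
    refine List.Perm.append_left _ ?_
    refine List.Perm.trans ?_ List.perm_middle.symm
    exact List.Perm.cons _ ih

lemma key_pi (n : ℕ) : ∀ (g : (Fin n → ℝ) → ℝ), ContDiff ℝ (⊤ : ℕ∞) g → HasCompactSupport g →
    ∀ x, ∫ u in Set.Iic x,
      iterLineDeriv ((List.finRange n).map fun i => (Pi.single i 1 : Fin n → ℝ)) g u = g x := by
  induction n with
  | zero =>
    intro g _ _ x
    have : Set.Iic x = Set.univ := by
      ext y; simp [Subsingleton.elim y x]
    rw [this]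
    simp [iterLineDeriv, integral_unique, measureReal_def, volume_pi]
    exact congrArg g (Subsingleton.elim _ _)
  | succ n ih =>
    intro g hg hc x
    set F := iterLineDeriv ((List.finRange (n+1)).map
      fun i => (Pi.single i 1 : Fin (n+1) → ℝ)) g with hF
    set h := fun y => lineDeriv ℝ g y (Pi.single 0 1) with hh
    have hhs : ContDiff ℝ (⊤ : ℕ∞) h := ld_smooth hg _
    have hhc : HasCompactSupport h := ld_cs hg hc _
    have hFc := ild_smooth ((List.finRange (n+1)).map
      fun i => (Pi.single i 1 : Fin (n+1) → ℝ)) hg hc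
    rw [← hF] at hFc
    have hFi : Integrable F := hFc.1.continuous.integrable_of_hasCompactSupport hFc.2
    have mp := (volume_preserving_piFinSuccAbove (fun _ : Fin (n+1) => ℝ) 0).symm
    have hsymm : ∀ p : ℝ × (Fin n → ℝ),
        (MeasurableEquiv.piFinSuccAbove (fun _ : Fin (n+1) => ℝ) 0).symm p
          = Fin.cons p.1 p.2 := by
      intro p
      simp [MeasurableEquiv.piFinSuccAbove_symm_apply, Fin.insertNthEquiv]
    have hemb := (MeasurableEquiv.piFinSuccAbove (fun _ : Fin (n+1) => ℝ) 0).symm.measurableEmbedding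
    have hinner : ∀ (t : ℝ) (v : Fin n → ℝ), F (Fin.cons t v) =
        iterLineDeriv ((List.finRange n).map fun i => (Pi.single i 1 : Fin n → ℝ))
          (fun w => h (Fin.cons t w)) v := by
      intro t v
      rw [ild_affine (fun w => (Fin.cons t w : Fin (n+1) → ℝ))
        (fun w => (Fin.cons 0 w : Fin (n+1) → ℝ))]
      · rw [hF, List.finRange_succ, List.map_cons]
        simp only [iterLineDeriv, List.map_map]
        congr 2
        funext i
        simp only [Function.comp]
        funext j
        refine Fin.cases ?_ (fun j => ?_) j
        · simp [Pi.single_apply]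
        · simp [Pi.single_apply]
      · intro a b s
        funext j
        refine Fin.cases ?_ (fun j => ?_) j <;> simp
    have hcd : ContDiff ℝ (⊤ : ℕ∞) (fun p : ℝ × (Fin n → ℝ) => (Fin.cons p.1 p.2 : Fin (n+1) → ℝ)) := by
      rw [contDiff_pi]
      intro j
      refine Fin.cases ?_ (fun j => ?_) j
      · simpa using contDiff_fst
      · simp only [Fin.cons_succ]
        exact (contDiff_apply ℝ ℝ j).comp contDiff_snd
    have hcons : ∀ t, Topology.IsClosedEmbedding (fun w : Fin n → ℝ => (Fin.cons t w : Fin (n+1) → ℝ)) := by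
      intro t
      refine Function.LeftInverse.isClosedEmbedding (f := fun y : Fin (n+1) → ℝ => Fin.tail y)
        (fun w => by simp) ?_ (hcd.comp (contDiff_const.prodMk contDiff_id)).continuous
      exact continuous_pi fun i => continuous_apply _
    have hcons' : ∀ v : Fin n → ℝ, Topology.IsClosedEmbedding (fun t : ℝ => (Fin.cons t v : Fin (n+1) → ℝ)) := by
      intro v
      exact Function.LeftInverse.isClosedEmbedding (f := fun y : Fin (n+1) → ℝ => y 0)
        (fun w => by simp) (continuous_apply _)
        (hcd.comp (contDiff_id.prodMk contDiff_const)).continuous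
    have hpre : (MeasurableEquiv.piFinSuccAbove (fun _ : Fin (n+1) => ℝ) 0).symm ⁻¹' (Set.Iic x)
        = Set.Iic (x 0) ×ˢ Set.Iic (Fin.tail x) := by
      ext p
      simp only [Set.mem_preimage, hsymm, Set.mem_Iic, Set.mem_prod, Pi.le_def, Fin.forall_fin_succ,
        Fin.cons_zero, Fin.cons_succ, Fin.tail]
    have hprodint : Integrable (fun p : ℝ × (Fin n → ℝ) => F (Fin.cons p.1 p.2)) := by
      have := (mp.integrable_comp_emb hemb).2 hFi
      refine this.congr (ae_of_all _ fun p => ?_)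
      simp [Function.comp, hsymm]
    rw [← mp.setIntegral_preimage_emb hemb, hpre]
    simp only [hsymm]
    change ∫ p in _, _ ∂((volume : Measure ℝ).prod (volume : Measure (Fin n → ℝ))) = _
    rw [setIntegral_prod _ hprodint.integrableOn]
    have : ∀ t, ∫ v in Set.Iic (Fin.tail x), F (Fin.cons t v) = h (Fin.cons t (Fin.tail x)) := by
      intro t
      simp only [hinner]
      refine ih (fun w => h (Fin.cons t w)) ?_ ?_ _
      · exact hhs.comp (hcd.comp (contDiff_const.prodMk contDiff_id))
      · exact hhc.comp_isClosedEmbedding (hcons t)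
    simp only [this]
    have hder : ∀ t, h (Fin.cons t (Fin.tail x)) =
        deriv (fun t => g (Fin.cons t (Fin.tail x))) t := by
      intro t
      simp only [hh, lineDeriv]
      have : ∀ s : ℝ, (Fin.cons t (Fin.tail x) : Fin (n+1) → ℝ) + s • Pi.single 0 1
          = Fin.cons (t + s) (Fin.tail x) := by
        intro s
        funext j
        refine Fin.cases ?_ (fun j => ?_) j <;> simp
      simp only [this]
      have := deriv_comp_const_add (f := fun t => g (Fin.cons t (Fin.tail x))) t 0
      simpa using this
    simp only [hder]
    rw [HasCompactSupport.integral_Iic_deriv_eq]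
    · simp [Fin.cons_self_tail]
    · exact (hg.comp (hcd.comp (contDiff_id.prodMk contDiff_const))).of_le (by simp)
    · exact hc.comp_isClosedEmbedding (hcons' _)

lemma key_euc {m : ℕ} (g : EuclideanSpace ℝ (Fin m) → ℝ) (hg : ContDiff ℝ (⊤ : ℕ∞) g)
    (hc : HasCompactSupport g) (x : EuclideanSpace ℝ (Fin m)) :
    ∫ u in {u : EuclideanSpace ℝ (Fin m) | ∀ i, u i ≤ x i},
      iterLineDeriv ((List.finRange m).map fun i => EuclideanSpace.single i (1 : ℝ)) g u = g x := by
  have mp := PiLp.volume_preserving_toLp (Fin m)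
  have hemb : MeasurableEmbedding (@WithLp.toLp 2 (Fin m → ℝ)) :=
    (MeasurableEquiv.toLp 2 (Fin m → ℝ)).measurableEmbedding
  rw [← mp.setIntegral_preimage_emb hemb]
  have h := key_pi m (fun y => g (WithLp.toLp 2 y)) ?_ ?_ (WithLp.ofLp x)
  · rw [WithLp.toLp_ofLp] at h
    rw [← h]
    have hs : (WithLp.toLp 2 ⁻¹' {u : EuclideanSpace ℝ (Fin m) | ∀ i, u i ≤ x i})
        = Set.Iic (WithLp.ofLp x) := by
      ext y; simp [Pi.le_def]
    rw [hs]
    congr 1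
    funext u
    rw [ild_affine (WithLp.toLp 2) (WithLp.toLp 2) (by intros; simp)]
    simp [List.map_map, Function.comp_def, EuclideanSpace.single]
  · exact hg.comp (PiLp.contDiff_toLp)
  · exact hc.comp_isClosedEmbedding (PiLp.homeomorph 2 (fun _ : Fin m => ℝ)).symm.isClosedEmbedding

/-- Let `𝔻 ⊆ ℝ^m` be the closed unit ball, `μ` a finite Borel measure on `𝔻` and `α` a
multi-index.  Then there is an essentially bounded measurable `ρ : ℝ^m → ℝ` with
`‖ρ‖_{L^∞} ≤ μ(𝔻)` such that `∫_𝔻 ∂^α φ dμ = ∫_{ℝ^m} ∂^{α+e} φ · ρ du` for every smooth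
compactly supported `φ`, where `e = (1,…,1)`. -/
theorem exists_Linf_density_for_distribution
    {m : ℕ} (μ : Measure (EuclideanSpace ℝ (Fin m))) [IsFiniteMeasure μ]
    (α : Fin m → ℕ) :
    ∃ ρ : EuclideanSpace ℝ (Fin m) → ℝ, Measurable ρ ∧
      eLpNorm ρ ⊤ volume ≤ μ (Metric.closedBall 0 1) ∧
      ∀ φ : EuclideanSpace ℝ (Fin m) → ℝ, ContDiff ℝ (⊤ : ℕ∞) φ → HasCompactSupport φ →
        ∫ x in Metric.closedBall 0 1, iterLineDeriv (multiIndexList α) φ x ∂μ =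
          ∫ u, iterLineDeriv (multiIndexList (fun i => α i + 1)) φ u * ρ u := by
  classical
  set ν := μ.restrict (Metric.closedBall 0 1) with hν
  have hS : MeasurableSet {p : EuclideanSpace ℝ (Fin m) × EuclideanSpace ℝ (Fin m) |
      ∀ i, p.2 i ≤ p.1 i} := by
    have : IsClosed {p : EuclideanSpace ℝ (Fin m) × EuclideanSpace ℝ (Fin m) |
      ∀ i, p.2 i ≤ p.1 i} := by
      rw [Set.ofPred_forall]
      exact isClosed_iInter fun i => isClosed_le (by fun_prop) (by fun_prop)
    exact this.measurableSet
  refine ⟨fun u => ν.real {x | ∀ i, u i ≤ x i}, ?_, ?_, ?_⟩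
  · exact (measurable_measure_prodMk_right hS (μ := ν)).ennreal_toReal
  · rw [eLpNorm_exponent_top]
    refine essSup_le_of_ae_le _ (ae_of_all _ fun u => ?_)
    show ‖ν.real _‖ₑ ≤ _
    rw [Real.enorm_of_nonneg measureReal_nonneg, ofReal_measureReal]
    refine (measure_mono (Set.subset_univ _)).trans ?_
    simp [hν]
  · intro φ hφ hφc
    obtain ⟨h1, h2⟩ := ild_smooth (multiIndexList α) hφ hφc
    set ψ := iterLineDeriv (multiIndexList α) φ with hψ
    obtain ⟨h3, h4⟩ := ild_smooth
      ((List.finRange m).map fun i => EuclideanSpace.single i (1 : ℝ)) h1 h2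
    have hE : iterLineDeriv (multiIndexList (fun i => α i + 1)) φ =
        iterLineDeriv ((List.finRange m).map fun i => EuclideanSpace.single i (1 : ℝ)) ψ := by
      rw [hψ, ← ild_append]
      exact ild_perm (flatMap_perm α _ _) hφ
    rw [hE]
    set G := iterLineDeriv ((List.finRange m).map fun i => EuclideanSpace.single i (1 : ℝ)) ψ
      with hG
    have hGi : Integrable G := h3.continuous.integrable_of_hasCompactSupport h4
    have hk : ∀ x, ψ x = ∫ u, {p : EuclideanSpace ℝ (Fin m) × EuclideanSpace ℝ (Fin m) |
      ∀ i, p.2 i ≤ p.1 i}.indicator (fun p => G p.2) (x, u) := by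
      intro x
      rw [← key_euc ψ h1 h2 x, ← integral_indicator]
      · rfl
      · exact measurable_prodMk_left hS
    have hint : Integrable ({p : EuclideanSpace ℝ (Fin m) × EuclideanSpace ℝ (Fin m) |
      ∀ i, p.2 i ≤ p.1 i}.indicator (fun p => G p.2)) (ν.prod volume) :=
      (hGi.comp_snd ν).indicator hS
    simp only [hk]
    rw [integral_integral_swap (f := fun x u =>
      {p : EuclideanSpace ℝ (Fin m) × EuclideanSpace ℝ (Fin m) |
      ∀ i, p.2 i ≤ p.1 i}.indicator (fun p => G p.2) (x, u)) hint]
    congr 1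
    funext u
    have hm : MeasurableSet {x : EuclideanSpace ℝ (Fin m) | ∀ i, u i ≤ x i} :=
      measurable_prodMk_right hS
    have : (fun x => {p : EuclideanSpace ℝ (Fin m) × EuclideanSpace ℝ (Fin m) |
      ∀ i, p.2 i ≤ p.1 i}.indicator (fun p => G p.2) (x, u)) =
      {x : EuclideanSpace ℝ (Fin m) | ∀ i, u i ≤ x i}.indicator (fun _ => G u) := by
      rfl
    rw [this, integral_indicator_const _ hm, smul_eq_mul, mul_comm]
end
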